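/- arXiv:1402.1818 — 3 statements merged into one kernel-verified Lean document; each statement's English description precedes it below -/
import Mathlib

section
/- For every positive integer k, there exists a standard Borel space X with a nonatomic σ-finite Borel measure μ satisfying μ(X) = ∞, and an invertible measure-preserving transformation T : X → X, such that: (i) the k-fold Cartesian product of T is ergodic; (ii) the (k+1)-fold Cartesian product of T is not ergodic (so T has ergodic index k); and (iii) for every positive integer n, the n-fold Cartesian product of T is conservative (so T has infinite conservative index). -/
/-!
The transformation is a tower (Kakutani skyscraper) over an odometer; equivalently, it is obtained by
cutting and stacking. Points of the base are digit sequences `y` with `ρ j + 2` digits at stage `j`.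
The digit `i` at stage `j` is placed at position `pos W i`, where `W = wid ρ j` grows so fast that it
dominates everything from the lower stages, and the height function is the difference of the total
displacements `alpha` of `odo y` and `y`. Thus base points that differ in finitely many digits lie
on one orbit, at a time distance equal to the difference of their displacements
(`tow_zpow_alpha`), and nearly all returns to the base are of this form (`return_alpha`). The
invariant measure is infinite because the height has infinite mean (`lintegral_hgt`).

The positions at stage `j` are `0`, `W`, `2 W + 1`, `27 W`, `81 W`, … . Only the first three admit
approximate coincidences of differences: `W` and `W + 1`.

* Ergodicity of the `m`-fold product: at a stage with at least three digits, moving the digit of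
  one coordinate from `1` to `2` and those of the others from `0` to `1` displaces that coordinate
  by `W + 1` and the others by `W`. The digits are in this configuration with probability
  `(ρ j + 2) ^ (-m)`. If these numbers have a divergent sum, then an invariant set is insensitive to a
  shift of a single coordinate (`kill`, `sec_diff_null`), hence to all changes of finitely many
  digits, and a zero-one law (`zero_one`) concludes: `ergodic_of_div`.
* Failure of ergodicity: if `∑ (3 / (ρ j + 2)) ^ m` over the stages with at least three digits is
  small, then with positive probability at each such stage some coordinate has a digit that is at
  least `3`. For such tuples the arithmetic of the positions forces all coordinates to be displaced
  equally at every stage (`stage_disp`), so that the relative position of the digits at stage `0` is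
  an invariant: `not_ergodic_of_sml`.
* Conservativity of all products: at a two-digit stage, exchanging the digits `0` and `1` displaces
  all coordinates with digit `0` by `W`, and such stages recur with a probability bounded below:
  `conservative_of_freq`.

The alphabet sizes interlace infinitely many two-digit stages with stages having about `q ^ (1 / k)`
digits, so that `∑ (ρ j + 2) ^ (-m)` over the latter diverges for `m = k` and converges for
`m = k + 1`.
-/

open MeasureTheory

/-- `T` is *conservative* w.r.t. `μ`: for every measurable set `A` of positive measure
there is a positive integer `n` with `μ (T⁻ⁿ A ∩ A) > 0`. -/
def IsConservativeMap {X : Type*} [MeasurableSpace X] (μ : Measure X) (T : X → X) : Prop :=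
  ∀ A : Set X, MeasurableSet A → 0 < μ A →
    ∃ n : ℕ, 0 < n ∧ 0 < μ (T^[n] ⁻¹' A ∩ A)

/-- `T` is *ergodic* w.r.t. `μ`: every measurable set `A` with `T⁻¹ A = A` mod `μ`
is null or conull. -/
def IsErgodicMap {X : Type*} [MeasurableSpace X] (μ : Measure X) (T : X → X) : Prop :=
  ∀ A : Set X, MeasurableSet A → μ (symmDiff (T ⁻¹' A) A) = 0 →
    μ A = 0 ∨ μ Aᶜ = 0

namespace ErgIdx

open scoped ENNReal

/-! ### Cut positions -/

/-- The pattern of cut positions, before scaling: `0, 1, 2, 27, 81, …`. Its only non-trivial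
coincidences between differences come from the progression `0, 1, 2`. -/
def bas (i : ℕ) : ℕ := if i < 3 then i else 3 ^ i

/-- The position of the `i`-th copy inside a stage of scale `W`. The extra unit at `i = 2` makes
the two consecutive gaps between the copies `0, 1, 2` equal to `W` and `W + 1`. -/
def pos (W i : ℕ) : ℕ := W * bas i + if i = 2 then 1 else 0

/-- The largest possible value of the total displacement of the stages below `j`. -/
def tot (ρ : ℕ → ℕ) : ℕ → ℕ
  | 0 => 0
  | j + 1 => tot ρ j +
      pos (4 * tot ρ j + 10 + ∏ l ∈ Finset.range j, (ρ l + 2)) (ρ j + 1)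

/-- The scale of stage `j`: it dominates all displacements of the lower stages, and also the
number of cylinders of length `j`, which makes the total measure infinite. -/
def wid (ρ : ℕ → ℕ) (j : ℕ) : ℕ := 4 * tot ρ j + 10 + ∏ l ∈ Finset.range j, (ρ l + 2)

/-- Digit sequences, with `ρ j + 2` possible digits at stage `j`. -/
abbrev Seq (ρ : ℕ → ℕ) : Type := ∀ j, Fin (ρ j + 2)

/-- The displacement of `y` contributed by the stages below `N`. -/
def alpha {ρ : ℕ → ℕ} (N : ℕ) (y : Seq ρ) : ℤ :=
  ∑ j ∈ Finset.range N, (pos (wid ρ j) (y j) : ℤ)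

lemma two_bas_lt {l i : ℕ} (hi : 3 ≤ i) (h : l < i) : 2 * bas l < bas i := by
  have h1 : bas i = 3 ^ i := by simp [bas, not_lt.2 hi]
  have h2 : bas l ≤ 3 ^ l := by
    unfold bas
    split_ifs
    · exact (Nat.lt_pow_self (by norm_num)).le
    · exact le_rfl
  have h3 : 3 ^ (l + 1) ≤ 3 ^ i := Nat.pow_le_pow_right (by norm_num) h
  have h4 : 0 < 3 ^ l := by positivity
  rw [h1]
  rw [pow_succ] at h3
  omega

lemma bas_strictMono : StrictMono bas := by
  intro l i h
  by_cases hi : 3 ≤ i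
  · have := two_bas_lt hi h
    omega
  · have : l < 3 := by omega
    have h3 : i < 3 := by omega
    simp [bas, this, h3, h]

/-- Equal differences of `bas` are equal for trivial reasons, unless all four digits are below `3`;
this holds because each value `3 ^ i` exceeds twice all smaller ones. -/
lemma bas_classify {x y z w : ℕ} (h : bas x + bas w = bas z + bas y) :
    (x = y ∧ z = w) ∨ (x = z ∧ y = w) ∨ (x < 3 ∧ y < 3 ∧ z < 3 ∧ w < 3) := by
  have key : ∀ {p q : ℕ}, bas p = bas q → p = q := fun h => bas_strictMono.injective h
  -- a digit that is at least `3` and at least the two digits of the other side occurs there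
  have aux : ∀ {p q u v : ℕ}, bas p + bas q = bas u + bas v → 3 ≤ p → u ≤ p → v ≤ p →
      (p = u ∧ q = v) ∨ (p = v ∧ q = u) := by
    intro p q u v h hp hu hv
    rcases hu.eq_or_lt with rfl | hu'
    · exact Or.inl ⟨rfl, key (by omega)⟩
    rcases hv.eq_or_lt with rfl | hv'
    · exact Or.inr ⟨rfl, key (by omega)⟩
    have := two_bas_lt hp hu'
    have := two_bas_lt hp hv'
    omega
  by_cases hall : x < 3 ∧ y < 3 ∧ z < 3 ∧ w < 3
  · exact Or.inr (Or.inr hall)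
  rcases le_total x w with h1 | h1 <;> rcases le_total y z with h2 | h2
  · rcases le_total w z with h3 | h3
    · have := aux h.symm (by omega) (by omega) (by omega); omega
    · have := aux ((add_comm _ _).trans h) (by omega) (by omega) (by omega); omega
  · rcases le_total w y with h3 | h3
    · have := aux ((add_comm _ _).trans h.symm) (by omega) (by omega) (by omega); omega
    · have := aux ((add_comm _ _).trans h) (by omega) (by omega) (by omega); omega
  · rcases le_total x z with h3 | h3
    · have := aux h.symm (by omega) (by omega) (by omega); omega
    · have := aux h (by omega) (by omega) (by omega); omega
  · rcases le_total x y with h3 | h3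
    · have := aux ((add_comm _ _).trans h.symm) (by omega) (by omega) (by omega); omega
    · have := aux h (by omega) (by omega) (by omega); omega

lemma pos_gap {W : ℕ} (hW : 10 ≤ W) (i : ℕ) : pos W i + W ≤ pos W (i + 1) := by
  unfold pos
  by_cases h2 : i = 2
  · subst h2
    simp [bas]
    omega
  · have h1 : bas i + 1 ≤ bas (i + 1) := bas_strictMono (Nat.lt_succ_self i)
    have := Nat.mul_le_mul_left W h1
    rw [mul_add, mul_one] at this
    simp only [h2, if_false]
    omega

lemma pos_mono {W : ℕ} (hW : 10 ≤ W) : Monotone (pos W) :=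
  monotone_nat_of_le_succ fun i => (Nat.le_add_right _ _).trans (pos_gap hW i)

variable {ρ : ℕ → ℕ}

lemma ten_le_wid (j : ℕ) : 10 ≤ wid ρ j := by unfold wid; omega

lemma tot_succ (j : ℕ) : tot ρ (j + 1) = tot ρ j + pos (wid ρ j) (ρ j + 1) := rfl

lemma alpha_succ (N : ℕ) (y : Seq ρ) :
    alpha (N + 1) y = alpha N y + (pos (wid ρ N) (y N) : ℤ) := by
  simp [alpha, Finset.sum_range_succ]

lemma alpha_nonneg (N : ℕ) (y : Seq ρ) : 0 ≤ alpha N y := by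
  unfold alpha; positivity

lemma alpha_le (N : ℕ) (y : Seq ρ) : alpha N y ≤ tot ρ N := by
  induction N with
  | zero => simp [alpha, tot]
  | succ N ih =>
    rw [alpha_succ, tot_succ]
    have : pos (wid ρ N) (y N) ≤ pos (wid ρ N) (ρ N + 1) :=
      pos_mono (ten_le_wid N) (by have := (y N).2; omega)
    push_cast
    have : (pos (wid ρ N) (y N) : ℤ) ≤ pos (wid ρ N) (ρ N + 1) := by exact_mod_cast this
    linarith

lemma alpha_congr {N : ℕ} {y z : Seq ρ} (h : ∀ l < N, y l = z l) : alpha N y = alpha N z := by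
  refine Finset.sum_congr rfl fun j hj => ?_
  rw [h j (Finset.mem_range.1 hj)]

lemma alpha_sub_mono {N M : ℕ} (hNM : N ≤ M) {y z : Seq ρ} (h : ∀ j, N ≤ j → y j = z j) :
    alpha M z - alpha M y = alpha N z - alpha N y := by
  induction M, hNM using Nat.le_induction with
  | base => rfl
  | succ M hM ih => rw [alpha_succ, alpha_succ, h M hM]; linarith

/-! ### The odometer -/

/-- The sequence of maximal digits. -/
def top (ρ : ℕ → ℕ) : Seq ρ := fun j => Fin.last (ρ j + 1)

lemma top_add_one (j : ℕ) : top ρ j + 1 = 0 := by simp [top]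

lemma add_one_eq_zero {j : ℕ} {a : Fin (ρ j + 2)} : a + 1 = 0 ↔ a = top ρ j := by
  rw [← top_add_one (ρ := ρ) j, add_left_inj]

lemma alpha_top (N : ℕ) : alpha N (top ρ) = tot ρ N := by
  induction N with
  | zero => simp [alpha, tot]
  | succ N ih => rw [alpha_succ, tot_succ, ih]; simp [top]

/-- Addition of one with carry. -/
def odoFun (y : Seq ρ) : Seq ρ := fun j => if ∀ l < j, y l = top ρ l then y j + 1 else y j

/-- Subtraction of one with borrow. -/
def odoInv (y : Seq ρ) : Seq ρ := fun j => if ∀ l < j, y l = 0 then y j - 1 else y j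

lemma odo_carry (y : Seq ρ) (j : ℕ) :
    (∀ l < j, odoFun y l = 0) ↔ ∀ l < j, y l = top ρ l := by
  constructor
  · intro h l
    induction l using Nat.strong_induction_on with
    | _ l ih =>
      intro hl
      have h1 := h l hl
      rw [odoFun, if_pos fun q hq => ih q hq (hq.trans hl)] at h1
      exact add_one_eq_zero.1 h1
  · intro h l hl
    rw [odoFun, if_pos fun q hq => h q (hq.trans hl), h l hl, top_add_one]

lemma odo_borrow (y : Seq ρ) (j : ℕ) :
    (∀ l < j, odoInv y l = top ρ l) ↔ ∀ l < j, y l = 0 := by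
  constructor
  · intro h l
    induction l using Nat.strong_induction_on with
    | _ l ih =>
      intro hl
      have h1 := h l hl
      rw [odoInv, if_pos fun q hq => ih q hq (hq.trans hl)] at h1
      rw [← top_add_one (ρ := ρ) l, ← h1, sub_add_cancel]
  · intro h l hl
    rw [odoInv, if_pos fun q hq => h q (hq.trans hl), h l hl, ← top_add_one (ρ := ρ) l,
      add_sub_cancel_right]

/-- The odometer on digit sequences; the sequence of maximal digits is sent to zero. -/
def odo : Seq ρ ≃ Seq ρ where
  toFun := odoFun
  invFun := odoInv
  left_inv y := by
    funext j
    simp only [odoInv, odo_carry]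
    by_cases h : ∀ l < j, y l = top ρ l
    · rw [if_pos h, odoFun, if_pos h, add_sub_cancel_right]
    · rw [if_neg h, odoFun, if_neg h]
  right_inv y := by
    funext j
    simp only [odoFun, odo_borrow]
    by_cases h : ∀ l < j, y l = 0
    · rw [if_pos h, odoInv, if_pos h, sub_add_cancel]
    · rw [if_neg h, odoInv, if_neg h]

lemma odo_lt {y : Seq ρ} {J : ℕ} (h : ∀ l < J, y l = top ρ l) {l : ℕ} (hl : l < J) :
    odo y l = 0 := (odo_carry y J).2 h l hl

lemma odo_eq {y : Seq ρ} {J : ℕ} (h : ∀ l < J, y l = top ρ l) : odo y J = y J + 1 := by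
  change odoFun y J = _
  rw [odoFun, if_pos h]

lemma odo_gt {y : Seq ρ} {J : ℕ} (hJ : y J ≠ top ρ J) {l : ℕ} (hl : J < l) :
    odo y l = y l := by
  change odoFun y l = _
  rw [odoFun, if_neg fun h => hJ (h J hl)]

lemma val_add_one {j : ℕ} {a : Fin (ρ j + 2)} (h : a ≠ top ρ j) :
    ((a + 1 : Fin (ρ j + 2)) : ℕ) = a + 1 := by
  exact Fin.val_add_one_of_lt (lt_of_le_of_ne (Fin.le_last a) h)

/-- The displacement gained by one odometer step is positive because the scale of the stage
at which the carry stops exceeds the displacement lost below it. -/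
lemma alpha_odo_sub {y : Seq ρ} {J : ℕ} (h : ∀ l < J, y l = top ρ l) (hJ : y J ≠ top ρ J) :
    ((∏ l ∈ Finset.range J, (ρ l + 2) : ℕ) : ℤ) + 1 ≤
      alpha (J + 1) (odo y) - alpha (J + 1) y := by
  rw [alpha_succ, alpha_succ, odo_eq h, val_add_one hJ, alpha_congr h, alpha_top]
  have h1 := alpha_nonneg J (odo y)
  have h2 := pos_gap (ten_le_wid (ρ := ρ) J) (y J)
  have h3 : ((pos (wid ρ J) (y J) : ℕ) : ℤ) + wid ρ J ≤ pos (wid ρ J) (y J + 1) := by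
    exact_mod_cast h2
  have h4 : (wid ρ J : ℤ) = 4 * tot ρ J + 10 + ((∏ l ∈ Finset.range J, (ρ l + 2) : ℕ) : ℤ) := by
    simp [wid]
  have h5 : (0 : ℤ) ≤ tot ρ J := by positivity
  linarith

lemma exists_first {y : Seq ρ} (h : y ≠ top ρ) :
    ∃ J, (∀ l < J, y l = top ρ l) ∧ y J ≠ top ρ J := by
  have h' : ∃ J, y J ≠ top ρ J := Function.ne_iff.1 h
  exact ⟨Nat.find h', fun l hl => not_not.1 (Nat.find_min h' hl), Nat.find_spec h'⟩

open Classical in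
/-- The height of the tower over `y`: the displacement gained by one odometer step (and `1` at
the exceptional point where the carry never stops). -/
noncomputable def hgt (y : Seq ρ) : ℕ :=
  if h : ∃ J, (∀ l < J, y l = top ρ l) ∧ y J ≠ top ρ J then
    (alpha (h.choose + 1) (odo y) - alpha (h.choose + 1) y).toNat else 1

lemma first_unique {y : Seq ρ} {J J' : ℕ} (h : ∀ l < J, y l = top ρ l) (hJ : y J ≠ top ρ J)
    (h' : ∀ l < J', y l = top ρ l) (hJ' : y J' ≠ top ρ J') : J = J' := by
  rcases lt_trichotomy J J' with hlt | heq | hlt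
  · exact absurd (h' _ hlt) hJ
  · exact heq
  · exact absurd (h _ hlt) hJ'

lemma hgt_eq {y : Seq ρ} {J : ℕ} (h : ∀ l < J, y l = top ρ l) (hJ : y J ≠ top ρ J) :
    (hgt y : ℤ) = alpha (J + 1) (odo y) - alpha (J + 1) y := by
  have hex : ∃ J, (∀ l < J, y l = top ρ l) ∧ y J ≠ top ρ J := ⟨J, h, hJ⟩
  have hc : hex.choose = J := first_unique hex.choose_spec.1 hex.choose_spec.2 h hJ
  rw [hgt, dif_pos hex, hc, Int.toNat_of_nonneg]
  have := alpha_odo_sub h hJ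
  have h0 : (0 : ℤ) ≤ ((∏ l ∈ Finset.range J, (ρ l + 2) : ℕ) : ℤ) := Int.natCast_nonneg _
  linarith

lemma prod_le_hgt {y : Seq ρ} {J : ℕ} (h : ∀ l < J, y l = top ρ l) (hJ : y J ≠ top ρ J) :
    ∏ l ∈ Finset.range J, (ρ l + 2) + 1 ≤ hgt y := by
  have h1 := alpha_odo_sub h hJ
  rw [← hgt_eq h hJ] at h1
  exact_mod_cast h1

lemma hgt_top : hgt (top ρ) = 1 := by
  rw [hgt, dif_neg]
  rintro ⟨J, -, hJ⟩
  exact hJ rfl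

lemma hgt_pos (y : Seq ρ) : 1 ≤ hgt y := by
  by_cases h : y = top ρ
  · rw [h, hgt_top]
  · obtain ⟨J, h1, h2⟩ := exists_first h
    exact (Nat.le_add_left _ _).trans (prod_le_hgt h1 h2)

lemma hgt_eq_of_ge {y : Seq ρ} {J N : ℕ} (h : ∀ l < J, y l = top ρ l) (hJ : y J ≠ top ρ J)
    (hN : J + 1 ≤ N) : (hgt y : ℤ) = alpha N (odo y) - alpha N y := by
  rw [hgt_eq h hJ]
  exact (alpha_sub_mono hN fun j hj => (odo_gt hJ hj).symm).symm

/-! ### The tower transformation -/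

/-- The involution of `Seq ρ × ℤ` that exchanges each roof point `(y, hgt y)` with the base point
`(odo y, 0)` and fixes all other points. -/
noncomputable def swp (x : Seq ρ × ℤ) : Seq ρ × ℤ :=
  if x.2 = hgt x.1 then (odo x.1, 0)
  else if x.2 = 0 then (odo.symm x.1, hgt (odo.symm x.1)) else x

lemma swp_swp (x : Seq ρ × ℤ) : swp (swp x) = x := by
  obtain ⟨y, n⟩ := x
  have hp : ∀ z : Seq ρ, (0 : ℤ) ≠ hgt z := fun z => by have := hgt_pos z; omega
  by_cases h1 : n = hgt y
  · subst h1
    simp [swp, hp]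
  · by_cases h2 : n = 0
    · subst h2
      simp [swp, hp]
    · simp [swp, h1, h2]

/-- The tower transformation as a permutation of `Seq ρ × ℤ`: move one level up, then apply `swp`.
On the region `0 ≤ n < hgt y` this is the tower over the odometer with height function `hgt`. The
other points form a null set of the invariant measure, so its values there are irrelevant; they
serve to make it a bijection of a product space. -/
noncomputable def tow : Equiv.Perm (Seq ρ × ℤ) :=
  ((Equiv.refl _).prodCongr (Equiv.addRight (1 : ℤ))).trans
    ⟨swp, swp, swp_swp, swp_swp⟩

lemma tow_apply (y : Seq ρ) (n : ℤ) : tow (y, n) = swp (y, n + 1) := rfl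

lemma tow_of_lt {y : Seq ρ} {n : ℤ} (h0 : 0 ≤ n) (h : n + 1 < hgt y) :
    tow (y, n) = (y, n + 1) := by
  rw [tow_apply, swp, if_neg (by simpa using h.ne), if_neg (by simp; omega)]

lemma tow_of_eq {y : Seq ρ} {n : ℤ} (h : n + 1 = hgt y) : tow (y, n) = (odo y, 0) := by
  rw [tow_apply, swp, if_pos h]

lemma tow_pow_lt (y : Seq ρ) (n : ℕ) (h : n < hgt y) : (tow ^ n) (y, 0) = (y, (n : ℤ)) := by
  induction n with
  | zero => simp
  | succ n ih =>
    rw [pow_succ', Equiv.Perm.mul_apply, ih (by omega), tow_of_lt (by positivity) (by omega)]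
    simp

lemma tow_pow_hgt (y : Seq ρ) : (tow ^ (hgt y)) (y, 0) = (odo y, 0) := by
  have h := hgt_pos y
  obtain ⟨n, hn⟩ : ∃ n, hgt y = n + 1 := ⟨hgt y - 1, by omega⟩
  rw [hn, pow_succ', Equiv.Perm.mul_apply, tow_pow_lt y n (by omega), tow_of_eq (by rw [hn]; simp)]

/-- Points of the base that differ in finitely many digits lie on the same orbit, the time
between them being the difference of their displacements. -/
lemma tow_zpow_alpha (N : ℕ) : ∀ (y z : Seq ρ), (∀ j, N ≤ j → y j = z j) →
    (tow ^ (alpha N z - alpha N y)) (y, 0) = (z, 0) := by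
  induction N with
  | zero =>
    intro y z h
    have : y = z := funext fun j => h j (Nat.zero_le _)
    simp [this]
  | succ N ih =>
    -- first the case where the digit at stage `N` increases by `d`
    have up : ∀ (d : ℕ) (y z : Seq ρ), (∀ j, N + 1 ≤ j → y j = z j) → (z N : ℕ) = y N + d →
        (tow ^ (alpha (N + 1) z - alpha (N + 1) y)) (y, 0) = (z, 0) := by
      intro d
      induction d with
      | zero =>
        intro y z h hd
        have h' : ∀ j, N ≤ j → y j = z j := fun j hj => by
          rcases hj.eq_or_lt with rfl | hj
          · exact Fin.ext (by omega)
          · exact h j hj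
        rw [alpha_sub_mono (Nat.le_succ N) h']
        exact ih y z h'
      | succ d ihd =>
        intro y z h hd
        -- pass through the last point of the current block, where one odometer step carries to `N`
        let y1 : Seq ρ := fun j => if j < N then top ρ j else y j
        have hy1 : ∀ l < N, y1 l = top ρ l := fun l hl => by simp [y1, hl]
        have hy1' : ∀ j, N ≤ j → y1 j = y j := fun l hl => by simp [y1, not_lt.2 hl]
        have hN : y1 N ≠ top ρ N := by
          rw [hy1' N le_rfl]
          intro hc
          have := (z N).2
          have h2 : (y N : ℕ) = ρ N + 1 := by rw [hc]; rfl
          omega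
        have e1 : (tow ^ (alpha (N + 1) y1 - alpha (N + 1) y)) (y, 0) = (y1, 0) := by
          rw [alpha_sub_mono (Nat.le_succ N) fun j hj => (hy1' j hj).symm]
          exact ih y y1 fun j hj => (hy1' j hj).symm
        have e2 : (tow ^ (alpha (N + 1) (odo y1) - alpha (N + 1) y1)) (y1, 0) =
            (odo y1, 0) := by
          rw [← hgt_eq hy1 hN, zpow_natCast, tow_pow_hgt]
        have e3 : (tow ^ (alpha (N + 1) z - alpha (N + 1) (odo y1))) (odo y1, 0) = (z, 0) := by
          apply ihd
          · intro j hj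
            rw [odo_gt hN hj, hy1' j (by omega), h j hj]
          · rw [odo_eq hy1, val_add_one hN, hy1' N le_rfl]
            omega
        have : alpha (N + 1) z - alpha (N + 1) y =
            (alpha (N + 1) z - alpha (N + 1) (odo y1)) +
              ((alpha (N + 1) (odo y1) - alpha (N + 1) y1) +
                (alpha (N + 1) y1 - alpha (N + 1) y)) := by ring
        rw [this, zpow_add, zpow_add, Equiv.Perm.mul_apply, Equiv.Perm.mul_apply, e1, e2, e3]
    intro y z h
    rcases le_total (y N : ℕ) (z N) with hle | hle
    · exact up (z N - y N) y z h (by omega)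
    · have := up (y N - z N) z y (fun j hj => (h j hj).symm) (by omega)
      rw [← this, ← Equiv.Perm.mul_apply, ← zpow_add]
      simp

/-- Conversely, a return to the base takes the time given by the difference of the displacements,
provided the forward odometer orbit avoids the exceptional point. -/
lemma return_alpha (t : ℕ) : ∀ (y z : Seq ρ), (∀ p : ℕ, odo^[p] y ≠ top ρ) →
    (tow ^ t) (y, 0) = (z, 0) →
    ∃ N₀, ∀ N, N₀ ≤ N → (alpha N z - alpha N y = t) := by
  induction t using Nat.strong_induction_on with
  | _ t ih =>
    intro y z hy h
    rcases lt_or_ge t (hgt y) with hlt | hge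
    · rw [tow_pow_lt y t hlt] at h
      have h1 : y = z := congrArg Prod.fst h
      have h2 : (t : ℤ) = 0 := congrArg Prod.snd h
      exact ⟨0, fun N _ => by rw [h1, h2, sub_self]⟩
    · obtain ⟨s, rfl⟩ := Nat.exists_eq_add_of_le hge
      rw [add_comm, pow_add, Equiv.Perm.mul_apply, tow_pow_hgt] at h
      obtain ⟨N₀, hN₀⟩ := ih s (by have := hgt_pos y; omega) (odo y) z
        (fun p => hy (p + 1)) h
      obtain ⟨J, h1, h2⟩ := exists_first (hy 0)
      refine ⟨max N₀ (J + 1), fun N hN => ?_⟩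
      have e1 := hN₀ N (le_trans (le_max_left _ _) hN)
      have e2 := hgt_eq_of_ge h1 h2 (le_trans (le_max_right _ _) hN)
      simp only [Function.iterate_zero, id] at e2
      push_cast
      linarith


/-! ### The measure on digit sequences -/

/-- The uniform probability measure on `n + 2` digits. -/
noncomputable def unif (n : ℕ) : Measure (Fin (n + 2)) :=
  ((n + 2 : ℕ) : ℝ≥0∞)⁻¹ • Measure.count

lemma unif_apply (n : ℕ) (s : Finset (Fin (n + 2))) :
    unif n s = ((n + 2 : ℕ) : ℝ≥0∞)⁻¹ * s.card := by
  simp [unif]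

lemma unif_singleton (n : ℕ) (a : Fin (n + 2)) : unif n {a} = ((n + 2 : ℕ) : ℝ≥0∞)⁻¹ := by
  have := unif_apply n {a}
  simpa using this

instance (n : ℕ) : IsProbabilityMeasure (unif n) := by
  constructor
  have h := unif_apply n Finset.univ
  rw [Finset.coe_univ] at h
  rw [h, Finset.card_univ, Fintype.card_fin]
  exact ENNReal.inv_mul_cancel (by simp) (by simp)

lemma unif_map (n : ℕ) (e : Equiv.Perm (Fin (n + 2))) : (unif n).map e = unif n := by
  refine Measure.ext_of_singleton fun a => ?_
  rw [Measure.map_apply (measurable_of_finite _) (measurableSet_singleton a)]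
  have : e ⁻¹' {a} = {e.symm a} := by
    ext b
    simp [Equiv.eq_symm_apply]
  rw [this, unif_singleton, unif_singleton]

/-- The product of the uniform measures. -/
noncomputable def nu (ρ : ℕ → ℕ) : Measure (Seq ρ) := Measure.infinitePi fun j => unif (ρ j)

instance : IsProbabilityMeasure (nu ρ) := by unfold nu; infer_instance

/-- Permute the digits at each stage. -/
def act (e : ∀ j, Equiv.Perm (Fin (ρ j + 2))) (y : Seq ρ) : Seq ρ := fun j => e j (y j)

lemma measurable_act (e : ∀ j, Equiv.Perm (Fin (ρ j + 2))) : Measurable (act e) :=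
  measurable_pi_lambda _ fun j => (measurable_of_finite (e j)).comp (measurable_pi_apply j)

lemma act_preserving (e : ∀ j, Equiv.Perm (Fin (ρ j + 2))) :
    MeasurePreserving (act e) (nu ρ) (nu ρ) := by
  refine ⟨measurable_act e, ?_⟩
  unfold nu act
  rw [Measure.infinitePi_map_pi _ fun j => measurable_of_finite (e j)]
  simp [unif_map]

lemma nu_cyl (J : ℕ) (t : ∀ j, Set (Fin (ρ j + 2))) :
    nu ρ {y | ∀ j < J, y j ∈ t j} = ∏ j ∈ Finset.range J, unif (ρ j) (t j) := by
  have := Measure.infinitePi_pi (fun j => unif (ρ j)) (s := Finset.range J) (t := t)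
    fun j _ => Set.Finite.measurableSet (Set.toFinite _)
  rw [← this, nu]
  congr 1
  ext y
  simp

lemma nu_digit (j : ℕ) (t : Set (Fin (ρ j + 2))) : nu ρ {y | y j ∈ t} = unif (ρ j) t := by
  have := (measurePreserving_eval_infinitePi (fun j => unif (ρ j)) j).measure_preimage
    (s := t) (Set.Finite.measurableSet (Set.toFinite _)).nullMeasurableSet
  exact this

instance : NullSingletonClass (nu ρ) := by
  constructor
  intro y
  have h : ∀ J : ℕ, nu ρ {y} ≤ (2⁻¹ : ℝ≥0∞) ^ J := by
    intro J
    calc nu ρ {y} ≤ nu ρ {z | ∀ j < J, z j ∈ ({y j} : Set _)} :=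
          measure_mono (by rintro _ rfl j _; rfl)
      _ = ∏ j ∈ Finset.range J, ((ρ j + 2 : ℕ) : ℝ≥0∞)⁻¹ := by
          rw [nu_cyl]
          exact Finset.prod_congr rfl fun j _ => unif_singleton _ _
      _ ≤ ∏ j ∈ Finset.range J, (2⁻¹ : ℝ≥0∞) := by
          refine Finset.prod_le_prod' fun j _ => ENNReal.inv_le_inv.2 ?_
          push_cast
          exact le_add_self
      _ = _ := by simp
  have h2 : Filter.Tendsto (fun J : ℕ => (2⁻¹ : ℝ≥0∞) ^ J) Filter.atTop (nhds 0) :=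
    ENNReal.tendsto_pow_atTop_nhds_zero_of_lt_one (by simp)
  exact le_antisymm (ge_of_tendsto' h2 h) bot_le

lemma measurable_digit (j : ℕ) : Measurable fun y : Seq ρ => y j := measurable_pi_apply j

lemma measurableSet_digit (j : ℕ) (a : Fin (ρ j + 2)) : MeasurableSet {y : Seq ρ | y j = a} :=
  measurable_digit j (measurableSet_singleton a)

lemma measurableSet_agree (w : Seq ρ) (J : ℕ) :
    MeasurableSet {y : Seq ρ | ∀ l < J, y l = w l} := by
  have : {y : Seq ρ | ∀ l < J, y l = w l} = ⋂ l, ⋂ _ : l < J, {y | y l = w l} := by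
    ext; simp
  rw [this]
  exact MeasurableSet.iInter fun l => MeasurableSet.iInter fun _ => measurableSet_digit l _

lemma measurable_odo : Measurable (odo : Seq ρ → Seq ρ) := by
  refine measurable_pi_lambda _ fun j => ?_
  change Measurable fun y : Seq ρ => if ∀ l < j, y l = top ρ l then y j + 1 else y j
  refine Measurable.ite (measurableSet_agree _ _) ?_ (measurable_digit j)
  exact (measurable_of_finite fun a : Fin (ρ j + 2) => a + 1).comp (measurable_digit j)

lemma measurable_odo_symm : Measurable (odo.symm : Seq ρ → Seq ρ) := by
  refine measurable_pi_lambda _ fun j => ?_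
  change Measurable fun y : Seq ρ => if ∀ l < j, y l = 0 then y j - 1 else y j
  refine Measurable.ite (measurableSet_agree 0 _) ?_ (measurable_digit j)
  exact (measurable_of_finite fun a : Fin (ρ j + 2) => a - 1).comp (measurable_digit j)

/-- The sequences that agree with `w` below stage `J` and differ from it at stage `J`. -/
def firstOff (w : Seq ρ) (J : ℕ) : Set (Seq ρ) := {y | (∀ l < J, y l = w l) ∧ y J ≠ w J}

lemma measurableSet_firstOff (w : Seq ρ) (J : ℕ) : MeasurableSet (firstOff w J) :=
  (measurableSet_agree w J).inter (measurableSet_digit J (w J)).compl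

lemma firstOff_disjoint (w : Seq ρ) : Pairwise (Function.onFun Disjoint (firstOff w)) := by
  intro J J' hne
  rw [Function.onFun, Set.disjoint_left]
  rintro y ⟨h1, h2⟩ ⟨h3, h4⟩
  rcases lt_or_gt_of_ne hne with h | h
  · exact h2 (h3 _ h)
  · exact h4 (h1 _ h)

lemma iUnion_firstOff (w : Seq ρ) : ⋃ J, firstOff w J = {w}ᶜ := by
  ext y
  simp only [Set.mem_iUnion, Set.mem_compl_iff, Set.mem_singleton_iff]
  constructor
  · rintro ⟨J, -, h⟩ rfl
    exact h rfl
  · intro h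
    have h' : ∃ J, y J ≠ w J := Function.ne_iff.1 h
    exact ⟨Nat.find h', fun l hl => not_not.1 (Nat.find_min h' hl), Nat.find_spec h'⟩

lemma nu_eq_tsum_firstOff (w : Seq ρ) {A : Set (Seq ρ)} (hA : MeasurableSet A) :
    nu ρ A = ∑' J, nu ρ (firstOff w J ∩ A) := by
  rw [← measure_iUnion, ← Set.iUnion_inter, iUnion_firstOff, Set.inter_comm, ← Set.sdiff_eq,
    measure_sdiff_null (measure_singleton w)]
  · intro J J' h
    exact (firstOff_disjoint w h).mono Set.inter_subset_left Set.inter_subset_left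
  · exact fun J => (measurableSet_firstOff w J).inter hA

/-- The odometer preserves the product measure, since on each of countably many pieces it is a
permutation of the digits of finitely many stages. -/
lemma odo_preserving : MeasurePreserving (odo : Seq ρ → Seq ρ) (nu ρ) (nu ρ) := by
  refine ⟨measurable_odo, Measure.ext fun A hA => ?_⟩
  rw [Measure.map_apply measurable_odo hA, nu_eq_tsum_firstOff (top ρ) (measurable_odo hA),
    nu_eq_tsum_firstOff 0 hA]
  refine tsum_congr fun J => ?_
  let e : ∀ j, Equiv.Perm (Fin (ρ j + 2)) := fun j => if j ≤ J then Equiv.addRight 1 else 1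
  have he : ∀ j, j ≤ J → ∀ a, e j a = a + 1 := fun j hj a => by simp [e, hj]
  have h1 : firstOff (top ρ) J ∩ odo ⁻¹' A = act e ⁻¹' (firstOff 0 J ∩ A) := by
    have h2 : act e ⁻¹' (firstOff 0 J) = firstOff (top ρ) J := by
      ext y
      simp only [firstOff, Set.mem_preimage, Set.mem_ofPred_eq, act, Pi.zero_apply, he J le_rfl,
        ne_eq, add_one_eq_zero]
      refine and_congr_left fun _ => forall₂_congr fun l hl => ?_
      rw [he l hl.le, add_one_eq_zero]
    rw [Set.preimage_inter, h2]
    ext y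
    refine and_congr_right fun hy => ?_
    have : odo y = act e y := by
      funext j
      rcases lt_trichotomy j J with hj | rfl | hj
      · rw [odo_lt hy.1 hj, act, he j hj.le, hy.1 j hj, top_add_one]
      · rw [odo_eq hy.1, act, he j le_rfl]
      · rw [odo_gt hy.2 hj]
        simp [act, e, not_le.2 hj]
    simp only [Set.mem_preimage, this]
  rw [h1, (act_preserving e).measure_preimage
    ((measurableSet_firstOff 0 J).inter hA).nullMeasurableSet]

lemma measurable_alpha (N : ℕ) : Measurable (alpha N : Seq ρ → ℤ) := by
  unfold alpha
  exact Finset.measurable_fun_sum _ fun j _ =>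
    (measurable_of_finite fun a : Fin (ρ j + 2) => (pos (wid ρ j) a : ℤ)).comp (measurable_digit j)

/-- The height is a limit of measurable functions; the maximum with `1` takes care of the exceptional
point. -/
lemma measurable_hgt : Measurable (hgt : Seq ρ → ℕ) := by
  refine measurable_of_tendsto_metrizable
    (f := fun (N : ℕ) (y : Seq ρ) => max 1 (alpha N (odo y) - alpha N y).toNat) ?_ ?_
  · intro N
    have h := ((measurable_alpha (ρ := ρ) N).comp measurable_odo).sub (measurable_alpha N)
    exact (measurable_of_countable fun z : ℤ => max 1 z.toNat).comp h
  · rw [tendsto_pi_nhds]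
    intro y
    refine tendsto_const_nhds.congr' ?_
    by_cases hy : y = top ρ
    · subst hy
      refine Filter.Eventually.of_forall fun N => ?_
      have h0 : alpha N (odo (top ρ)) = alpha N (0 : Seq ρ) :=
        alpha_congr fun l hl => odo_lt (J := N) (fun _ _ => rfl) hl
      have h1 : alpha N (0 : Seq ρ) = 0 := by simp [alpha, pos, bas]
      beta_reduce
      rw [hgt_top, h0, h1, alpha_top]
      simp
    · obtain ⟨J, h1, h2⟩ := exists_first hy
      filter_upwards [Filter.eventually_ge_atTop (J + 1)] with N hN
      rw [← hgt_eq_of_ge h1 h2 hN, Int.toNat_natCast, max_eq_right (hgt_pos y)]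

lemma measurableSet_hgt (n : ℤ) : MeasurableSet {y : Seq ρ | 0 ≤ n ∧ n < hgt y} := by
  have : Measurable fun y : Seq ρ => (hgt y : ℤ) := measurable_from_nat.comp measurable_hgt
  exact this (t := {z | 0 ≤ n ∧ n < z}) (Set.Countable.measurableSet (Set.to_countable _))

/-- The expected height is infinite: the `J`-th piece contributes at least `1 / 2`. -/
lemma lintegral_hgt : ∫⁻ y, (hgt y : ℝ≥0∞) ∂(nu ρ) = ⊤ := by
  have h : ∀ J, (2⁻¹ : ℝ≥0∞) ≤ ∫⁻ y in firstOff (top ρ) J, (hgt y : ℝ≥0∞) ∂(nu ρ) := by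
    intro J
    let Q : ℕ := ∏ l ∈ Finset.range J, (ρ l + 2)
    have hQ : (Q : ℝ≥0∞) ≠ 0 := by
      simp only [Q, ne_eq, Nat.cast_eq_zero]
      exact Finset.prod_ne_zero_iff.2 fun l _ => by omega
    have hm : (Q : ℝ≥0∞)⁻¹ * 2⁻¹ ≤ nu ρ (firstOff (top ρ) J) := by
      have hsub : {y : Seq ρ | ∀ j < J + 1,
          y j ∈ (if j < J then {top ρ j} else {top ρ j}ᶜ : Set (Fin (ρ j + 2)))} ⊆
          firstOff (top ρ) J := by
        intro y hy
        refine ⟨fun l hl => ?_, ?_⟩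
        · simpa [hl] using hy l (by omega)
        · simpa using hy J (by omega)
      refine le_trans ?_ (measure_mono hsub)
      rw [nu_cyl, Finset.prod_range_succ]
      have e1 : ∏ j ∈ Finset.range J, unif (ρ j)
          (if j < J then {top ρ j} else {top ρ j}ᶜ) = (Q : ℝ≥0∞)⁻¹ := by
        rw [Finset.prod_congr rfl fun j hj => by
          rw [if_pos (Finset.mem_range.1 hj), unif_singleton]]
        simp only [Q, Nat.cast_prod]
        rw [ENNReal.prod_inv_distrib]
        intro i _ j _ _
        left
        simp
      have e2 : (2⁻¹ : ℝ≥0∞) ≤ unif (ρ J) (if J < J then {top ρ J} else {top ρ J}ᶜ) := by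
        rw [if_neg (lt_irrefl J), prob_compl_eq_one_sub (measurableSet_singleton _),
          unif_singleton]
        rw [← ENNReal.one_sub_inv_two]
        refine tsub_le_tsub_left (ENNReal.inv_le_inv.2 ?_) _
        push_cast
        exact le_add_self
      rw [e1]
      gcongr
    calc (2⁻¹ : ℝ≥0∞) = Q * ((Q : ℝ≥0∞)⁻¹ * 2⁻¹) := by
          rw [← mul_assoc, ENNReal.mul_inv_cancel hQ (ENNReal.natCast_ne_top Q), one_mul]
      _ ≤ Q * nu ρ (firstOff (top ρ) J) := by gcongr
      _ = ∫⁻ y in firstOff (top ρ) J, (Q : ℝ≥0∞) ∂(nu ρ) := by simp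
      _ ≤ _ := by
          refine setLIntegral_mono' (measurableSet_firstOff _ _) fun y hy => ?_
          exact_mod_cast (Nat.le_succ _).trans (prod_le_hgt hy.1 hy.2)
  rw [eq_top_iff]
  calc (⊤ : ℝ≥0∞) = ∑' _ : ℕ, (2⁻¹ : ℝ≥0∞) := by
        rw [ENNReal.tsum_const_eq_top_of_ne_zero (by simp)]
    _ ≤ ∑' J, ∫⁻ y in firstOff (top ρ) J, (hgt y : ℝ≥0∞) ∂(nu ρ) := ENNReal.tsum_le_tsum h
    _ = ∫⁻ y in ⋃ J, firstOff (top ρ) J, (hgt y : ℝ≥0∞) ∂(nu ρ) :=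
        (lintegral_iUnion (measurableSet_firstOff _) (firstOff_disjoint _) _).symm
    _ ≤ _ := setLIntegral_le_lintegral _ _


/-! ### The tower transformation and its measure -/

/-- The part of `Seq ρ × ℤ` lying in the tower of height function `hgt`. -/
def tower (ρ : ℕ → ℕ) : Set (Seq ρ × ℤ) := {x | 0 ≤ x.2 ∧ x.2 < hgt x.1}

lemma measurable_hgt_int : Measurable fun y : Seq ρ => (hgt y : ℤ) :=
  measurable_from_nat.comp measurable_hgt

lemma measurableSet_tower : MeasurableSet (tower ρ) :=
  (measurableSet_le measurable_const measurable_snd).inter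
    (measurableSet_lt measurable_snd (measurable_hgt_int.comp measurable_fst))

/-- The invariant measure: `nu` times counting measure, restricted to the tower. -/
noncomputable def mu (ρ : ℕ → ℕ) : Measure (Seq ρ × ℤ) :=
  ((nu ρ).prod Measure.count).restrict (tower ρ)

instance : SigmaFinite (mu ρ) := by unfold mu; infer_instance

instance : NullSingletonClass (mu ρ) := by unfold mu; infer_instance

lemma measurable_swp : Measurable (swp : Seq ρ × ℤ → Seq ρ × ℤ) := by
  unfold swp
  refine Measurable.ite (measurableSet_eq_fun measurable_snd
    (measurable_hgt_int.comp measurable_fst)) ?_ (Measurable.ite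
      (measurableSet_eq_fun measurable_snd measurable_const) ?_ measurable_id)
  · exact (measurable_odo.comp measurable_fst).prodMk measurable_const
  · exact (measurable_odo_symm.comp measurable_fst).prodMk
      (measurable_hgt_int.comp (measurable_odo_symm.comp measurable_fst))

lemma measurable_tow : Measurable (tow : Seq ρ × ℤ → Seq ρ × ℤ) :=
  measurable_swp.comp (measurable_fst.prodMk (measurable_snd.add measurable_const))

lemma measurable_tow_symm : Measurable (tow.symm : Seq ρ × ℤ → Seq ρ × ℤ) := by
  change Measurable fun x => ((swp x).1, (swp x).2 + -1)
  exact (measurable_fst.comp measurable_swp).prodMk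
    ((measurable_snd.comp measurable_swp).add measurable_const)

/-- `tow` as a measurable equivalence. -/
noncomputable def towM (ρ : ℕ → ℕ) : (Seq ρ × ℤ) ≃ᵐ (Seq ρ × ℤ) where
  toEquiv := tow
  measurable_toFun := measurable_tow
  measurable_invFun := measurable_tow_symm

lemma pi_count (m : ℕ) :
    (Measure.pi fun _ : Fin m => (Measure.count : Measure ℤ)) = Measure.count := by
  refine Measure.ext_of_singleton fun a => ?_
  rw [Measure.pi_singleton]
  simp

/-- Product measures of `mu` are computed level by level. -/
lemma pi_mu_apply {m : ℕ} {B : Set (Fin m → Seq ρ × ℤ)} (hB : MeasurableSet B) :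
    (Measure.pi fun _ : Fin m => mu ρ) B = ∑' n : Fin m → ℤ,
      (Measure.pi fun _ : Fin m => nu ρ)
        {y | (fun i => (y i, n i)) ∈ B ∧ ∀ i, 0 ≤ n i ∧ n i < hgt (y i)} := by
  unfold mu
  have hF : MeasurableSet (Set.univ.pi fun _ : Fin m => tower ρ) :=
    MeasurableSet.univ_pi fun _ => measurableSet_tower
  have : SigmaFinite ((nu ρ).prod (Measure.count : Measure ℤ)) := inferInstance
  rw [← Measure.restrict_pi_pi, Measure.restrict_apply hB]
  have h := (measurePreserving_arrowProdEquivProdArrow (Seq ρ) ℤ (Fin m) (fun _ => nu ρ)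
    fun _ => Measure.count).symm
  rw [← h.measure_preimage (hB.inter hF).nullMeasurableSet,
    Measure.prod_apply_symm (h.measurable (hB.inter hF)), pi_count, lintegral_count]
  refine tsum_congr fun n => congrArg _ ?_
  ext y
  simp only [Set.mem_preimage, Set.mem_inter_iff, Set.mem_pi, Set.mem_univ, true_imp_iff,
    Set.mem_ofPred_eq, tower]
  rfl

lemma mu_apply {B : Set (Seq ρ × ℤ)} (hB : MeasurableSet B) :
    mu ρ B = ∑' n : ℤ, nu ρ {y | (y, n) ∈ B ∧ 0 ≤ n ∧ n < hgt y} := by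
  rw [mu, Measure.restrict_apply hB, Measure.prod_apply_symm (hB.inter measurableSet_tower),
    lintegral_count]
  rfl

lemma mu_univ : mu ρ Set.univ = ⊤ := by
  rw [← lintegral_hgt (ρ := ρ), mu, Measure.restrict_apply MeasurableSet.univ, Set.univ_inter,
    Measure.prod_apply measurableSet_tower]
  refine lintegral_congr fun y => ?_
  have : Prod.mk y ⁻¹' tower ρ = ((Finset.Ico (0 : ℤ) (hgt y) : Finset ℤ) : Set ℤ) := by
    ext n; simp [tower]
  rw [this, Measure.count_apply_finset]
  simp

/-- The level `n + 1` of a set is the level `n` of its preimage, except that the base level is reached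
from all roof levels together, through the odometer. -/
lemma tow_preserving : MeasurePreserving (towM ρ) (mu ρ) (mu ρ) := by
  refine ⟨(towM ρ).measurable, Measure.ext fun A hA => ?_⟩
  rw [Measure.map_apply (towM ρ).measurable hA, mu_apply hA,
    mu_apply ((towM ρ).measurable hA)]
  have hsec : ∀ n : ℤ, MeasurableSet {y : Seq ρ | (y, n) ∈ A} := fun n =>
    (measurable_id.prodMk measurable_const) hA
  let f : ℤ → ℝ≥0∞ := fun n => nu ρ {y | (y, n) ∈ A ∧ 0 ≤ n ∧ n < hgt y}
  let g : ℤ → ℝ≥0∞ := fun n => if n = 0 then 0 else f n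
  let b : ℤ → Set (Seq ρ) := fun n => odo ⁻¹' {y | (y, (0 : ℤ)) ∈ A} ∩ {y | (hgt y : ℤ) = n + 1}
  have hb : ∀ n, MeasurableSet (b n) := fun n =>
    (measurable_odo (hsec 0)).inter (measurableSet_eq_fun measurable_hgt_int measurable_const)
  have h1 : ∀ n, nu ρ {y | (y, n) ∈ (towM ρ) ⁻¹' A ∧ 0 ≤ n ∧ n < hgt y} =
      g (n + 1) + nu ρ (b n) := by
    intro n
    have hs : {y | (y, n) ∈ (towM ρ) ⁻¹' A ∧ 0 ≤ n ∧ n < hgt y} =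
        {y | (y, n + 1) ∈ A ∧ 0 ≤ n ∧ n + 1 < hgt y} ∪ b n := by
      ext y
      change (tow (y, n) ∈ A ∧ 0 ≤ n ∧ n < hgt y) ↔
        ((y, n + 1) ∈ A ∧ 0 ≤ n ∧ n + 1 < hgt y) ∨ ((odo y, (0 : ℤ)) ∈ A ∧ (hgt y : ℤ) = n + 1)
      have hp := hgt_pos y
      by_cases h : n + 1 = hgt y
      · rw [tow_of_eq h]
        constructor
        · rintro ⟨h2, -⟩
          exact Or.inr ⟨h2, h.symm⟩
        · rintro (⟨-, -, h2⟩ | ⟨h2, -⟩)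
          · omega
          · exact ⟨h2, by omega, by omega⟩
      · by_cases h2 : 0 ≤ n ∧ n < hgt y
        · rw [tow_of_lt h2.1 (by omega)]
          constructor
          · rintro ⟨h3, -⟩
            exact Or.inl ⟨h3, by omega, by omega⟩
          · rintro (⟨h3, -⟩ | ⟨-, h3⟩)
            · exact ⟨h3, h2⟩
            · omega
        · constructor
          · rintro ⟨-, h3⟩
            exact absurd h3 h2
          · rintro (⟨-, h3, h4⟩ | ⟨-, h3⟩)
            · omega
            · omega
    rw [hs, measure_union _ (hb n)]
    · congr 1
      simp only [g, f]
      split_ifs with h0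
      · convert measure_empty (μ := nu ρ)
        ext y
        simp
        omega
      · congr 1
        ext y
        simp only [Set.mem_ofPred_eq]
        refine and_congr_right fun _ => ?_
        omega
    · rw [Set.disjoint_left]
      rintro y ⟨-, -, h2⟩ ⟨-, h3⟩
      simp only [Set.mem_ofPred_eq] at h3
      omega
  have hshift : ∑' n, g (n + 1) = ∑' n, g n := (Equiv.addRight (1 : ℤ)).tsum_eq g
  rw [tsum_congr h1, ENNReal.tsum_add, hshift, ← measure_iUnion _ hb]
  · have h2 : ⋃ n, b n = odo ⁻¹' {y | (y, (0 : ℤ)) ∈ A} := by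
      simp only [b, ← Set.inter_iUnion]
      refine Set.inter_eq_left.2 fun y _ => Set.mem_iUnion.2 ⟨hgt y - 1, ?_⟩
      simp
    have h3 : {y : Seq ρ | (y, (0 : ℤ)) ∈ A ∧ (0 : ℤ) ≤ 0 ∧ (0 : ℤ) < hgt y} =
        {y : Seq ρ | (y, (0 : ℤ)) ∈ A} := by
      ext y
      have := hgt_pos y
      simp only [Set.mem_ofPred_eq, and_iff_left_iff_imp]
      intro _
      omega
    have h4 : ∀ n, nu ρ {y | (y, n) ∈ A ∧ 0 ≤ n ∧ n < hgt y} = g n + if n = 0 then f 0 else 0 := by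
      intro n
      by_cases h : n = 0
      · subst h; simp [g, f]
      · simp [g, f, h]
    rw [h2, odo_preserving.measure_preimage (hsec 0).nullMeasurableSet, tsum_congr h4,
      ENNReal.tsum_add, tsum_ite_eq]
    simp only [f]
    rw [h3]
  · intro n n' hne
    rw [Function.onFun, Set.disjoint_left]
    rintro y ⟨-, h2⟩ ⟨-, h3⟩
    simp only [Set.mem_ofPred_eq] at h2 h3
    omega


/-! ### Tuples of digit sequences: moves at one stage, and a zero-one law -/

/-- The product measure on `m`-tuples of digit sequences. -/
noncomputable def nuP (ρ : ℕ → ℕ) (m : ℕ) : Measure (Fin m → Seq ρ) :=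
  Measure.pi fun _ => nu ρ

variable {m : ℕ}

instance : IsProbabilityMeasure (nuP ρ m) := by unfold nuP; infer_instance

/-- Apply the permutation `σ i` to the `j`-th digit of the `i`-th coordinate, for every `i`. -/
def mv (j : ℕ) (σ : Fin m → Equiv.Perm (Fin (ρ j + 2))) (y : Fin m → Seq ρ) : Fin m → Seq ρ :=
  fun i => Function.update (y i) j (σ i (y i j))

lemma mv_same (j : ℕ) (σ : Fin m → Equiv.Perm (Fin (ρ j + 2))) (y : Fin m → Seq ρ) (i : Fin m) :
    mv j σ y i j = σ i (y i j) := by simp [mv]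

lemma mv_ne {j l : ℕ} (h : l ≠ j) (σ : Fin m → Equiv.Perm (Fin (ρ j + 2))) (y : Fin m → Seq ρ)
    (i : Fin m) : mv j σ y i l = y i l := by simp [mv, h]

lemma mv_preserving (j : ℕ) (σ : Fin m → Equiv.Perm (Fin (ρ j + 2))) :
    MeasurePreserving (mv j σ) (nuP ρ m) (nuP ρ m) := by
  have h := measurePreserving_pi (fun _ : Fin m => nu ρ) (fun _ : Fin m => nu ρ)
    fun i => act_preserving (Pi.mulSingle j (σ i))
  have e : mv j σ = fun y i => act (Pi.mulSingle j (σ i)) (y i) := by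
    funext y i l
    by_cases hl : l = j
    · subst hl
      rw [mv_same, act, Pi.mulSingle_eq_same]
    · rw [mv_ne hl, act, Pi.mulSingle_eq_of_ne hl]
      rfl
  rw [e]
  exact h

/-- `K` is a measurable set that depends only on the digits below stage `J`. -/
def Dep (J : ℕ) (K : Set (Fin m → Seq ρ)) : Prop :=
  MeasurableSet K ∧ ∀ y z, (∀ i, ∀ l < J, y i l = z i l) → y ∈ K → z ∈ K

lemma Dep.mono {J J' : ℕ} (h : J ≤ J') {K : Set (Fin m → Seq ρ)} (hK : Dep J K) : Dep J' K :=
  ⟨hK.1, fun y z hyz => hK.2 y z fun i l hl => hyz i l (hl.trans_le h)⟩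

lemma Dep.inter {J : ℕ} {K L : Set (Fin m → Seq ρ)} (hK : Dep J K) (hL : Dep J L) :
    Dep J (K ∩ L) :=
  ⟨hK.1.inter hL.1, fun y z h hy => ⟨hK.2 y z h hy.1, hL.2 y z h hy.2⟩⟩

lemma Dep.union {J : ℕ} {K L : Set (Fin m → Seq ρ)} (hK : Dep J K) (hL : Dep J L) :
    Dep J (K ∪ L) :=
  ⟨hK.1.union hL.1, fun y z h hy => hy.imp (hK.2 y z h) (hL.2 y z h)⟩

lemma Dep.compl {J : ℕ} {K : Set (Fin m → Seq ρ)} (hK : Dep J K) : Dep J Kᶜ :=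
  ⟨hK.1.compl, fun y z h hy hz => hy (hK.2 z y (fun i l hl => (h i l hl).symm) hz)⟩

lemma measurable_digits (i : Fin m) (j : ℕ) : Measurable fun y : Fin m → Seq ρ => y i j :=
  (measurable_digit j).comp (measurable_pi_apply i)

/-- The tuples whose digits at stage `j` are given by `c`. -/
def dig (j : ℕ) (c : Fin m → Fin (ρ j + 2)) : Set (Fin m → Seq ρ) := {y | ∀ i, y i j = c i}

lemma dep_dig (j : ℕ) (c : Fin m → Fin (ρ j + 2)) : Dep (j + 1) (dig j c) := by
  constructor
  · have : dig (ρ := ρ) j c = ⋂ i, {y | y i j = c i} := by ext; simp [dig]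
    rw [this]
    exact MeasurableSet.iInter fun i => measurable_digits i j (measurableSet_singleton (c i))
  · intro y z h hy i
    rw [← h i j (Nat.lt_succ_self j)]
    exact hy i

lemma dep_algebra : IsSetAlgebra {K : Set (Fin m → Seq ρ) | ∃ J, Dep J K} where
  empty_mem := ⟨0, MeasurableSet.empty, fun _ _ _ h => h⟩
  compl_mem := fun _ ⟨J, h⟩ => ⟨J, h.compl⟩
  union_mem := fun _ _ ⟨J, h⟩ ⟨J', h'⟩ =>
    ⟨max J J', (h.mono (le_max_left _ _)).union (h'.mono (le_max_right _ _))⟩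

lemma dep_generate : (inferInstance : MeasurableSpace (Fin m → Seq ρ)) =
    MeasurableSpace.generateFrom {K : Set (Fin m → Seq ρ) | ∃ J, Dep J K} := by
  refine le_antisymm ?_ (MeasurableSpace.generateFrom_le fun K ⟨J, h⟩ => h.1)
  have h : @Measurable _ _ (MeasurableSpace.generateFrom {K : Set (Fin m → Seq ρ) | ∃ J, Dep J K})
      inferInstance (id : (Fin m → Seq ρ) → Fin m → Seq ρ) := by
    refine @measurable_pi_lambda _ _ _ (_) _ _ fun i => ?_
    refine @measurable_pi_lambda _ _ _ (_) _ _ fun j => ?_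
    intro s _
    refine MeasurableSpace.measurableSet_generateFrom ⟨j + 1, ?_, ?_⟩
    · exact measurable_digits i j (Set.Finite.measurableSet (Set.toFinite s))
    · intro y z h hy
      simpa [← h i j (Nat.lt_succ_self j)] using hy
  intro s hs
  exact h hs

lemma exists_dep_approx {D : Set (Fin m → Seq ρ)} (hD : MeasurableSet D) {ε : ℝ} (hε : 0 < ε) :
    ∃ J K, Dep J K ∧ nuP ρ m (symmDiff D K) < ENNReal.ofReal ε := by
  obtain ⟨K, ⟨J, hK⟩, h⟩ := (Measure.MeasureDense.of_generateFrom_isSetAlgebra_finite (nuP ρ m)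
    dep_algebra dep_generate).approx D hD (measure_ne_top _ _) ε hε
  exact ⟨J, K, hK, h⟩

lemma iUnion_dig (j : ℕ) : ⋃ c, dig (ρ := ρ) (m := m) j c = Set.univ := by
  refine Set.eq_univ_of_forall fun y => Set.mem_iUnion.2 ⟨fun i => y i j, fun i => rfl⟩

lemma measure_eq_sum_dig (Q : Measure (Fin m → Seq ρ)) (j : ℕ) {K : Set (Fin m → Seq ρ)}
    (hK : MeasurableSet K) : Q K = ∑ c, Q (K ∩ dig j c) := by
  rw [← measure_biUnion_finset]
  · simp only [Finset.mem_univ, Set.iUnion_true]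
    rw [← Set.inter_iUnion, iUnion_dig, Set.inter_univ]
  · intro c _ c' _ hne
    rw [Function.onFun, Set.disjoint_left]
    rintro y ⟨-, h1⟩ ⟨-, h2⟩
    exact hne (funext fun i => (h1 i).symm.trans (h2 i))
  · exact fun c _ => hK.inter (dep_dig j c).1

/-- A measure invariant under the moves at stage `j` makes the digits at stage `j` uniform, and
independent of the digits of lower stages. -/
lemma measure_inter_dig (Q : Measure (Fin m → Seq ρ)) (j : ℕ)
    (hQ : ∀ σ B, MeasurableSet B → Q (mv j σ ⁻¹' B) = Q B) {K : Set (Fin m → Seq ρ)}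
    (hK : Dep j K) (c : Fin m → Fin (ρ j + 2)) :
    ((ρ j + 2 : ℕ) : ℝ≥0∞) ^ m * Q (K ∩ dig j c) = Q K := by
  have h : ∀ c', Q (K ∩ dig j c') = Q (K ∩ dig j c) := by
    intro c'
    rw [← hQ (fun i => Equiv.swap (c i) (c' i)) _ (hK.1.inter (dep_dig j c').1)]
    congr 1
    ext y
    rw [Set.preimage_inter]
    refine and_congr ⟨?_, ?_⟩ ?_
    · exact hK.2 _ _ fun i l hl => mv_ne hl.ne _ _ _
    · exact hK.2 _ _ fun i l hl => (mv_ne hl.ne _ _ _).symm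
    · refine forall_congr' fun i => ?_
      rw [mv_same, ← Equiv.eq_symm_apply]
      simp
  rw [measure_eq_sum_dig Q j hK.1, Finset.sum_congr rfl fun c' _ => h c', Finset.sum_const,
    nsmul_eq_mul]
  simp

lemma nuP_inter_dig (j : ℕ) {K : Set (Fin m → Seq ρ)} (hK : Dep j K) (c : Fin m → Fin (ρ j + 2)) :
    ((ρ j + 2 : ℕ) : ℝ≥0∞) ^ m * nuP ρ m (K ∩ dig j c) = nuP ρ m K :=
  measure_inter_dig _ j
    (fun σ _ hB => (mv_preserving j σ).measure_preimage hB.nullMeasurableSet) hK c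

/-- Sets invariant under all moves are null or conull: the restriction of the product measure to such
a set is again invariant under the moves, hence proportional to the product measure. -/
lemma zero_one {D : Set (Fin m → Seq ρ)} (hD : MeasurableSet D)
    (hinv : ∀ j σ, mv j σ ⁻¹' D =ᵐ[nuP ρ m] D) : nuP ρ m D = 0 ∨ nuP ρ m Dᶜ = 0 := by
  set Q := (nuP ρ m).restrict D with hQdef
  have hQ : ∀ j σ B, MeasurableSet B → Q (mv j σ ⁻¹' B) = Q B := by
    intro j σ B hB
    rw [hQdef, Measure.restrict_apply hB,
      Measure.restrict_apply ((mv_preserving j σ).measurable hB),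
      ← (mv_preserving j σ).measure_preimage (hB.inter hD).nullMeasurableSet]
    exact measure_congr ((Filter.EventuallyEq.refl _ _).inter (hinv j σ).symm)
  -- peel off one stage at a time
  have hdep : ∀ J K, Dep J K → Q K = Q Set.univ * nuP ρ m K := by
    intro J
    induction J with
    | zero =>
      intro K hK
      rcases K.eq_empty_or_nonempty with rfl | ⟨y, hy⟩
      · simp
      · rw [Set.eq_univ_of_forall fun z => hK.2 y z (by simp) hy]
        simp
    | succ J ih =>
      intro K hK
      have hc : ∀ c, Q (K ∩ dig J c) = Q Set.univ * nuP ρ m (K ∩ dig J c) := by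
        intro c
        let φ : (Fin m → Seq ρ) → Fin m → Seq ρ := fun y i => Function.update (y i) J (c i)
        have hφ : Measurable φ := by
          refine measurable_pi_lambda _ fun i => measurable_pi_lambda _ fun l => ?_
          by_cases hl : l = J
          · subst hl
            simp [φ]
          · simpa [φ, hl] using measurable_digits i l
        have hL : Dep J (φ ⁻¹' K) := by
          refine ⟨hφ hK.1, fun y z h hy => hK.2 _ _ (fun i l hl => ?_) hy⟩
          by_cases hlJ : l = J
          · subst hlJ
            simp [φ]
          · simpa [φ, hlJ] using h i l (by omega)
        have e : K ∩ dig J c = φ ⁻¹' K ∩ dig J c := by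
          ext y
          refine and_congr_left fun hy => ?_
          have : φ y = y := by
            funext i
            simp only [φ]
            rw [← hy i, Function.update_eq_self]
          rw [Set.mem_preimage, this]
        have h1 := measure_inter_dig Q J (hQ J) hL c
        have h2 := nuP_inter_dig J hL c
        rw [ih _ hL, ← h2] at h1
        rw [e]
        rw [mul_left_comm] at h1
        refine (ENNReal.mul_right_inj ?_ ?_).1 h1
        · exact pow_ne_zero _ (by simp)
        · exact ENNReal.pow_ne_top (ENNReal.natCast_ne_top _)
      rw [measure_eq_sum_dig Q J hK.1, measure_eq_sum_dig (nuP ρ m) J hK.1, Finset.mul_sum]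
      exact Finset.sum_congr rfl fun c _ => hc c
  have hext : Q = Q Set.univ • nuP ρ m := by
    refine ext_of_generate_finite _ dep_generate
      (fun s hs t ht _ => dep_algebra.inter_mem hs ht) ?_ ?_
    · rintro K ⟨J, hK⟩
      simpa using hdep J K hK
    · simp
  have h1 : nuP ρ m D = nuP ρ m D * nuP ρ m D := by
    have h2 : Q D = Q Set.univ * nuP ρ m D := by
      conv_lhs => rw [hext]
      simp
    rwa [hQdef, Measure.restrict_apply_self, Measure.restrict_apply_univ] at h2
  by_cases h0 : nuP ρ m D = 0
  · exact Or.inl h0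
  · right
    rw [prob_compl_eq_zero_iff hD]
    refine ((ENNReal.mul_right_inj h0 (measure_ne_top _ _)).1 ?_).symm
    rw [mul_one]
    exact h1

/-- A set is null if, at the stages of a set `Λ` carrying a divergent sum of probabilities, one
fixed move throws out every element whose digits lie in one fixed `2`-cycle of the move. Indeed
almost every point meets such a cycle at some stage in `Λ` beyond any given `J`; conditioning on
the first such stage shows that the set fills at most half of any set depending only on the digits
below `J`, which contradicts density. -/
lemma kill (Λ : Set ℕ) (u : ∀ j, Fin m → Fin (ρ j + 2))
    (σ : ∀ j, Fin m → Equiv.Perm (Fin (ρ j + 2)))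
    (hσ : ∀ j i, σ j i (σ j i (u j i)) = u j i)
    (hsum : ∀ J, ∑' j : {j | J ≤ j ∧ j ∈ Λ}, (((ρ j + 2 : ℕ) : ℝ≥0∞) ^ m)⁻¹ = ⊤)
    {D : Set (Fin m → Seq ρ)} (hD : MeasurableSet D)
    (hout : ∀ j ∈ Λ, ∀ y ∈ D, y ∈ dig j (u j) ∪ dig j (fun i => σ j i (u j i)) →
      mv j (σ j) y ∉ D) : nuP ρ m D = 0 := by
  classical
  have hsum' : ∀ J, ∑' j, (if J ≤ j ∧ j ∈ Λ then (((ρ j + 2 : ℕ) : ℝ≥0∞) ^ m)⁻¹ else 0) = ⊤ := by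
    intro J
    rw [← hsum J, tsum_subtype {j | J ≤ j ∧ j ∈ Λ} fun j => (((ρ j + 2 : ℕ) : ℝ≥0∞) ^ m)⁻¹]
    refine tsum_congr fun j => ?_
    rw [Set.indicator_apply]
    rfl
  let R : ℕ → Set (Fin m → Seq ρ) := fun j => dig j (u j) ∪ dig j (fun i => σ j i (u j i))
  have hR : ∀ j, Dep (j + 1) (R j) := fun j => (dep_dig j _).union (dep_dig j _)
  have hRmv : ∀ j, mv j (σ j) ⁻¹' (R j) = R j := by
    intro j
    ext y
    have e1 : mv j (σ j) y ∈ dig j (u j) ↔ y ∈ dig j (fun i => σ j i (u j i)) := by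
      refine forall_congr' fun i => ?_
      rw [mv_same]
      conv_lhs => rw [← hσ j i]
      exact (σ j i).injective.eq_iff
    have e2 : mv j (σ j) y ∈ dig j (fun i => σ j i (u j i)) ↔ y ∈ dig j (u j) := by
      refine forall_congr' fun i => ?_
      rw [mv_same]
      exact (σ j i).injective.eq_iff
    change (_ ∨ _) ↔ (_ ∨ _)
    rw [e1, e2, or_comm]
  have half : ∀ J K, Dep J K → 2 * nuP ρ m (D ∩ K) ≤ nuP ρ m K := by
    intro J K hK
    -- `N j`: no cycle has been met before stage `j`; `E j`: the first cycle is met at stage `j`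
    let N : ℕ → Set (Fin m → Seq ρ) := fun j => {y | ∀ l, l < j → J ≤ l → l ∈ Λ → y ∉ R l}
    have hN : ∀ j, Dep j (N j) := by
      intro j
      constructor
      · have : N j = ⋂ l, ⋂ _ : l < j, ⋂ _ : J ≤ l, ⋂ _ : l ∈ Λ, (R l)ᶜ := by
          ext; simp [N]
        rw [this]
        exact MeasurableSet.iInter fun l => MeasurableSet.iInter fun _ =>
          MeasurableSet.iInter fun _ => MeasurableSet.iInter fun _ => (hR l).1.compl
      · intro y z h hy l hl h1 h2 hz
        exact hy l hl h1 h2 ((hR l).2 z y (fun i p hp => (h i p (by omega)).symm) hz)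
    let E : ℕ → Set (Fin m → Seq ρ) := fun j => if J ≤ j ∧ j ∈ Λ then N j ∩ R j else ∅
    have hEm : ∀ j, MeasurableSet (E j) := by
      intro j
      simp only [E]
      split_ifs
      · exact (hN j).1.inter (hR j).1
      · exact MeasurableSet.empty
    have hEd : Pairwise (Function.onFun Disjoint E) := by
      intro j j' hne
      rw [Function.onFun, Set.disjoint_left]
      intro y h1 h2
      simp only [E] at h1 h2
      split_ifs at h1 h2 with g1 g2
      · rcases lt_or_gt_of_ne hne with h | h
        · exact h2.1 j h g1.1 g1.2 h1.2
        · exact h1.1 j' h g2.1 g2.2 h2.2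
      all_goals first | exact h1 | exact h2
    -- almost every point lies in some `E j`
    have hU : nuP ρ m (⋃ j, E j)ᶜ = 0 := by
      by_contra h0
      have hsub : ∀ j, (⋃ j, E j)ᶜ ⊆ N j := by
        intro j y hy l
        induction l using Nat.strong_induction_on with
        | _ l ih =>
          intro hl h1 h2 h3
          refine hy (Set.mem_iUnion.2 ⟨l, ?_⟩)
          simp only [E, if_pos (And.intro h1 h2)]
          exact ⟨fun p hp => ih p hp (by omega), h3⟩
      have hle : ∀ j, nuP ρ m (⋃ j, E j)ᶜ *
          (if J ≤ j ∧ j ∈ Λ then (((ρ j + 2 : ℕ) : ℝ≥0∞) ^ m)⁻¹ else 0) ≤ nuP ρ m (E j) := by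
        intro j
        simp only [E]
        split_ifs with h
        · have h1 := nuP_inter_dig j (hN j) (u j)
          calc nuP ρ m (⋃ j, E j)ᶜ * (((ρ j + 2 : ℕ) : ℝ≥0∞) ^ m)⁻¹
              ≤ nuP ρ m (N j) * (((ρ j + 2 : ℕ) : ℝ≥0∞) ^ m)⁻¹ := by
                gcongr
                exact hsub j
            _ = nuP ρ m (N j ∩ dig j (u j)) := by
                rw [← h1, mul_comm, ← mul_assoc, ENNReal.inv_mul_cancel, one_mul]
                · exact pow_ne_zero _ (by simp)
                · exact ENNReal.pow_ne_top (ENNReal.natCast_ne_top _)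
            _ ≤ _ := measure_mono (Set.inter_subset_inter_right _ Set.subset_union_left)
        · simp
      have h2 := ENNReal.tsum_le_tsum hle
      rw [ENNReal.tsum_mul_left, hsum' J, ENNReal.mul_top h0, ← measure_iUnion hEd hEm] at h2
      exact absurd h2 (not_le.2 (measure_lt_top _ _))
    have hE2 : ∀ j, 2 * nuP ρ m (D ∩ K ∩ E j) ≤ nuP ρ m (K ∩ E j) := by
      intro j
      by_cases h : J ≤ j ∧ j ∈ Λ
      · have hE : E j = N j ∩ R j := if_pos h
        have hKN : Dep j (K ∩ N j) := (hK.mono h.1).inter (hN j)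
        have hpre : mv j (σ j) ⁻¹' (K ∩ E j) = K ∩ E j := by
          rw [hE, ← Set.inter_assoc, Set.preimage_inter, hRmv]
          congr 1
          ext y
          exact ⟨hKN.2 _ _ fun i l hl => mv_ne hl.ne _ _ _,
            hKN.2 _ _ fun i l hl => (mv_ne hl.ne _ _ _).symm⟩
        have hDm : MeasurableSet (D ∩ (K ∩ E j)) := hD.inter (hK.1.inter (hEm j))
        have hdisj : Disjoint (D ∩ (K ∩ E j)) (mv j (σ j) ⁻¹' (D ∩ (K ∩ E j))) := by
          rw [Set.disjoint_left]
          rintro y ⟨h1, -, h2⟩ ⟨h3, -⟩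
          rw [hE] at h2
          exact hout j h.2 y h1 h2.2 h3
        rw [Set.inter_assoc, two_mul]
        conv_lhs =>
          rw [← (mv_preserving j (σ j)).measure_preimage hDm.nullMeasurableSet]
        nth_rewrite 2 [(mv_preserving j (σ j)).measure_preimage hDm.nullMeasurableSet]
        rw [← measure_union hdisj.symm hDm]
        refine measure_mono (Set.union_subset ?_ Set.inter_subset_right)
        rw [← hpre]
        exact Set.preimage_mono (by rw [hpre]; exact Set.inter_subset_right)
      · have : E j = ∅ := if_neg h
        simp [this]
    calc 2 * nuP ρ m (D ∩ K) ≤ 2 * nuP ρ m (⋃ j, D ∩ K ∩ E j) := by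
          gcongr 2 * ?_
          rw [← Set.inter_iUnion]
          refine (measure_le_inter_add_sdiff _ _ (⋃ j, E j)).trans ?_
          have : nuP ρ m ((D ∩ K) \ ⋃ j, E j) = 0 :=
            measure_mono_null (fun y hy => hy.2) hU
          rw [this, add_zero]
      _ ≤ 2 * ∑' j, nuP ρ m (D ∩ K ∩ E j) := by gcongr; exact measure_iUnion_le _
      _ = ∑' j, 2 * nuP ρ m (D ∩ K ∩ E j) := ENNReal.tsum_mul_left.symm
      _ ≤ ∑' j, nuP ρ m (K ∩ E j) := ENNReal.tsum_le_tsum hE2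
      _ = nuP ρ m (⋃ j, K ∩ E j) := by
          rw [measure_iUnion]
          · intro j j' hne
            exact (hEd hne).mono Set.inter_subset_right Set.inter_subset_right
          · exact fun j => hK.1.inter (hEm j)
      _ ≤ nuP ρ m K := measure_mono (Set.iUnion_subset fun j => Set.inter_subset_left)
  have small : ∀ ε : ℝ, 0 < ε → (nuP ρ m).real D ≤ 3 * ε := by
    intro ε hε
    obtain ⟨J, K, hK, hDK⟩ := exists_dep_approx hD hε
    have h1 := half J K hK
    have h2 : nuP ρ m D ≤ nuP ρ m (D ∩ K) + nuP ρ m (symmDiff D K) :=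
      (measure_le_inter_add_sdiff _ _ K).trans
        (by gcongr; exact Set.subset_union_left)
    have h3 : nuP ρ m K ≤ nuP ρ m D + nuP ρ m (symmDiff D K) :=
      (measure_le_inter_add_sdiff _ _ D).trans
        (by gcongr; exacts [Set.inter_subset_right, Set.subset_union_right])
    have r1 : 2 * (nuP ρ m).real (D ∩ K) ≤ (nuP ρ m).real K := by
      have := ENNReal.toReal_mono (measure_ne_top _ _) h1
      simpa [Measure.real] using this
    have r2 : (nuP ρ m).real D ≤ (nuP ρ m).real (D ∩ K) + (nuP ρ m).real (symmDiff D K) := by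
      have := ENNReal.toReal_mono (by simp) h2
      rwa [ENNReal.toReal_add (by simp) (by simp)] at this
    have r3 : (nuP ρ m).real K ≤ (nuP ρ m).real D + (nuP ρ m).real (symmDiff D K) := by
      have := ENNReal.toReal_mono (by simp) h3
      rwa [ENNReal.toReal_add (by simp) (by simp)] at this
    have r4 : (nuP ρ m).real (symmDiff D K) ≤ ε := by
      have := ENNReal.toReal_mono (by simp) hDK.le
      rwa [ENNReal.toReal_ofReal hε.le] at this
    linarith
  have hnn : 0 ≤ (nuP ρ m).real D := measureReal_nonneg
  by_contra h0
  have hpos : 0 < (nuP ρ m).real D := ENNReal.toReal_pos h0 (measure_ne_top _ _)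
  have := small ((nuP ρ m).real D / 6) (by positivity)
  linarith


/-! ### Ergodicity -/

lemma iterate_prod (t : ℕ) (x : Fin m → Seq ρ × ℤ) :
    (fun (x : Fin m → Seq ρ × ℤ) i => towM ρ (x i))^[t] x = fun i => (tow ^ t) (x i) := by
  induction t with
  | zero => rfl
  | succ t ih =>
    rw [Function.iterate_succ_apply', ih]
    funext i
    rw [pow_succ', Equiv.Perm.mul_apply]
    rfl

lemma measurable_tow_zpow (n : ℤ) : Measurable ((tow ^ n : Equiv.Perm (Seq ρ × ℤ)) : _ → _) := by
  have hp : ∀ (e : Equiv.Perm (Seq ρ × ℤ)), Measurable e → ∀ t : ℕ, Measurable (e ^ t) := by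
    intro e he t
    induction t with
    | zero => exact measurable_id
    | succ t ih =>
      rw [pow_succ', Equiv.Perm.coe_mul]
      exact he.comp ih
  cases n with
  | ofNat t => simpa using hp tow measurable_tow t
  | negSucc t =>
    rw [zpow_negSucc, ← inv_pow]
    exact hp tow⁻¹ measurable_tow_symm _

lemma tow_zpow_of_mem {y : Seq ρ} {n : ℤ} (h : 0 ≤ n ∧ n < hgt y) : (tow ^ n) (y, 0) = (y, n) := by
  obtain ⟨t, rfl⟩ := Int.eq_ofNat_of_zero_le h.1
  rw [zpow_natCast]
  exact tow_pow_lt y t (by omega)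

/-- The tuples of base points that are carried into `A` by the powers `n i` of the tower map. -/
def sec (A : Set (Fin m → Seq ρ × ℤ)) (n : Fin m → ℤ) : Set (Fin m → Seq ρ) :=
  {y | (fun i => (tow ^ n i) (y i, (0 : ℤ))) ∈ A}

lemma measurableSet_sec {A : Set (Fin m → Seq ρ × ℤ)} (hA : MeasurableSet A) (n : Fin m → ℤ) :
    MeasurableSet (sec A n) := by
  have : Measurable fun (y : Fin m → Seq ρ) i => (tow ^ n i) (y i, (0 : ℤ)) :=
    measurable_pi_lambda _ fun i => (measurable_tow_zpow (n i)).comp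
      ((measurable_pi_apply i).prodMk measurable_const)
  exact this hA

lemma pi_mu_eq_zero {A : Set (Fin m → Seq ρ × ℤ)} (hA : MeasurableSet A)
    (h : ∀ n, nuP ρ m (sec A n) = 0) : (Measure.pi fun _ : Fin m => mu ρ) A = 0 := by
  rw [pi_mu_apply hA, ENNReal.tsum_eq_zero]
  intro n
  refine measure_mono_null ?_ (h n)
  rintro y ⟨h1, h2⟩
  change (fun i => (tow ^ n i) (y i, (0 : ℤ))) ∈ A
  rwa [funext fun i => tow_zpow_of_mem (h2 i)]

lemma tow_zpow_mv (j : ℕ) (σ : Fin m → Equiv.Perm (Fin (ρ j + 2))) (y : Fin m → Seq ρ)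
    (i : Fin m) : (mv j σ y i, (0 : ℤ)) =
      (tow ^ ((pos (wid ρ j) (σ i (y i j)) : ℤ) - pos (wid ρ j) (y i j))) (y i, 0) := by
  rw [← tow_zpow_alpha (j + 1) (y i) (mv j σ y i) fun l hl => (mv_ne (by omega) σ y i).symm]
  congr 2
  rw [alpha_succ, alpha_succ, mv_same, alpha_congr (z := y i) fun l hl => mv_ne hl.ne σ y i]
  ring

/-- A move at one stage amounts to a shift of the powers that define a section. -/
lemma mem_sec_mv (A : Set (Fin m → Seq ρ × ℤ)) (n : Fin m → ℤ) (j : ℕ)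
    (σ : Fin m → Equiv.Perm (Fin (ρ j + 2))) (y : Fin m → Seq ρ) :
    mv j σ y ∈ sec A n ↔
      y ∈ sec A fun i => n i + ((pos (wid ρ j) (σ i (y i j)) : ℤ) - pos (wid ρ j) (y i j)) := by
  simp only [sec, Set.mem_ofPred_eq, tow_zpow_mv, zpow_add, Equiv.Perm.mul_apply]

/-- `A` is exactly invariant under the product of the tower map. -/
def Inv (A : Set (Fin m → Seq ρ × ℤ)) : Prop := ∀ x, (fun i => tow (x i)) ∈ A ↔ x ∈ A

lemma Inv.compl {A : Set (Fin m → Seq ρ × ℤ)} (h : Inv A) : Inv Aᶜ := fun x => not_congr (h x)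

lemma Inv.zpow {A : Set (Fin m → Seq ρ × ℤ)} (h : Inv A) (t : ℤ) (x : Fin m → Seq ρ × ℤ) :
    (fun i => (tow ^ t) (x i)) ∈ A ↔ x ∈ A := by
  induction t using Int.induction_on with
  | zero => simp
  | succ t ih =>
    rw [← ih, ← h fun i => (tow ^ (t : ℤ)) (x i)]
    simp only [← Equiv.Perm.mul_apply, ← zpow_one_add, add_comm]
  | pred t ih =>
    rw [← ih, ← h]
    simp only [← Equiv.Perm.mul_apply, ← zpow_one_add]
    simp

/-- For an invariant set only the differences of the powers matter. -/
lemma Inv.sec_add {A : Set (Fin m → Seq ρ × ℤ)} (h : Inv A) (n : Fin m → ℤ) (t : ℤ) :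
    sec A (fun i => n i + t) = sec A n := by
  ext y
  simp only [sec, Set.mem_ofPred_eq, add_comm _ t, zpow_add, Equiv.Perm.mul_apply]
  exact h.zpow t _

/-- For `m`-tuples, the probabilities that the digits at stage `j` take prescribed values have a
divergent sum over the stages `j` with at least three digits. -/
def Div (ρ : ℕ → ℕ) (m : ℕ) : Prop := ∀ J,
  ∑' j : {j | J ≤ j ∧ j ∈ {j | ρ j ≠ 0}}, (((ρ j + 2 : ℕ) : ℝ≥0∞) ^ m)⁻¹ = ⊤

/-- Moving the digit from `1` to `2` in the coordinate `p` and from `0` to `1` in the others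
displaces the coordinate `p` by one unit more than the others. The common displacement is invisible
to an invariant set, and `kill` shows that the extra unit is invisible too. -/
lemma sec_diff_null (hdiv : Div ρ m) {A : Set (Fin m → Seq ρ × ℤ)} (hA : MeasurableSet A)
    (hinv : Inv A) (n : Fin m → ℤ) (p : Fin m) :
    nuP ρ m (sec A n \ sec A (n + Pi.single p 1)) = 0 := by
  let u : ∀ j, Fin m → Fin (ρ j + 2) := fun j i => if i = p then 1 else 0
  let σ : ∀ j, Fin m → Equiv.Perm (Fin (ρ j + 2)) := fun j i =>
    if i = p then Equiv.swap 1 2 else Equiv.swap 0 1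
  have hσ : ∀ j i, σ j i (σ j i (u j i)) = u j i := by
    intro j i
    by_cases h : i = p <;> simp [σ, u, h]
  have hdisp : ∀ j, ρ j ≠ 0 → ∀ i, (pos (wid ρ j) (σ j i (u j i)) : ℤ) - pos (wid ρ j) (u j i) =
      (Pi.single p 1 : Fin m → ℤ) i + wid ρ j := by
    intro j hj i
    by_cases h : i = p
    · subst h
      have h2 : ((2 : Fin (ρ j + 2)) : ℕ) = 2 := by
        change 2 % (ρ j + 2) = 2
        exact Nat.mod_eq_of_lt (by omega)
      simp only [σ, u, pos, bas, if_true, Equiv.swap_apply_left, h2]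
      simp
      ring
    · simp [σ, u, pos, bas, h]
  refine kill {j | ρ j ≠ 0} u σ hσ hdiv
    ((measurableSet_sec hA _).diff (measurableSet_sec hA _)) ?_
  rintro j hj y ⟨h1, h2⟩ (hy | hy) ⟨h3, h4⟩
  · refine h2 ?_
    rw [mem_sec_mv] at h3
    have e : (fun i => n i + ((pos (wid ρ j) (σ j i (y i j)) : ℤ) - pos (wid ρ j) (y i j))) =
        fun i => (n + Pi.single p 1 : Fin m → ℤ) i + (wid ρ j : ℤ) := by
      funext i
      rw [hy i, hdisp j hj i, Pi.add_apply]
      ring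
    rwa [e, hinv.sec_add] at h3
  · refine h4 ?_
    rw [mem_sec_mv]
    have e : (fun i => (n + Pi.single p 1 : Fin m → ℤ) i +
        ((pos (wid ρ j) (σ j i (y i j)) : ℤ) - pos (wid ρ j) (y i j))) =
        fun i => n i + (-wid ρ j : ℤ) := by
      funext i
      have := hdisp j hj i
      rw [hy i, hσ, Pi.add_apply]
      linarith
    rwa [e, hinv.sec_add]

lemma sec_add_single (hdiv : Div ρ m) {A : Set (Fin m → Seq ρ × ℤ)} (hA : MeasurableSet A)
    (hinv : Inv A) (n : Fin m → ℤ) (p : Fin m) :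
    sec A (n + Pi.single p 1) =ᵐ[nuP ρ m] sec A n := by
  rw [ae_eq_set]
  refine ⟨?_, sec_diff_null hdiv hA hinv n p⟩
  convert sec_diff_null hdiv hA.compl hinv.compl n p using 2
  ext y
  change (_ ∧ ¬ _) ↔ (¬ _ ∧ ¬ ¬ _)
  rw [not_not, and_comm]
  rfl

lemma sec_ae_eq (hdiv : Div ρ m) {A : Set (Fin m → Seq ρ × ℤ)} (hA : MeasurableSet A)
    (hinv : Inv A) (n : Fin m → ℤ) : sec A n =ᵐ[nuP ρ m] sec A 0 := by
  let H : AddSubgroup (Fin m → ℤ) :=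
    { carrier := {v | ∀ n, sec A (n + v) =ᵐ[nuP ρ m] sec A n}
      zero_mem' := fun n => by rw [add_zero]; rfl
      add_mem' := fun {a b} ha hb n => by
        rw [← add_assoc]
        exact (hb _).trans (ha n)
      neg_mem' := fun {a} ha n => by
        have := ha (n + -a)
        rw [neg_add_cancel_right] at this
        exact this.symm }
  have hmem : n ∈ H := by
    have e : n = ∑ i, Pi.single i (n i) := (Finset.univ_sum_single n).symm
    rw [e]
    refine sum_mem fun i _ => ?_
    have e2 : (Pi.single i (n i) : Fin m → ℤ) = n i • Pi.single i 1 := by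
      rw [← Pi.single_smul]
      simp
    rw [e2]
    exact zsmul_mem (show Pi.single i 1 ∈ H from fun n' => sec_add_single hdiv hA hinv n' i) _
  have := hmem 0
  rwa [zero_add] at this

lemma null_or_conull (hdiv : Div ρ m) {A : Set (Fin m → Seq ρ × ℤ)} (hA : MeasurableSet A)
    (hinv : Inv A) : (Measure.pi fun _ : Fin m => mu ρ) A = 0 ∨
      (Measure.pi fun _ : Fin m => mu ρ) Aᶜ = 0 := by
  have hall : ∀ᵐ y ∂(nuP ρ m), ∀ n, (y ∈ sec A n ↔ y ∈ sec A 0) := by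
    rw [ae_all_iff]
    intro n
    filter_upwards [sec_ae_eq hdiv hA hinv n] with y hy
    exact iff_of_eq hy
  have h01 := zero_one (measurableSet_sec hA 0) (fun j σ => by
    filter_upwards [hall] with y hy
    exact propext ((mem_sec_mv A 0 j σ y).trans (hy _)))
  rcases h01 with h | h
  · left
    refine pi_mu_eq_zero hA fun n => ?_
    rw [measure_congr (sec_ae_eq hdiv hA hinv n), h]
  · right
    refine pi_mu_eq_zero hA.compl fun n => ?_
    rw [measure_congr (sec_ae_eq hdiv hA.compl hinv.compl n)]
    exact h

lemma prod_preserving (m : ℕ) : MeasurePreserving (fun (x : Fin m → Seq ρ × ℤ) i => towM ρ (x i))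
    (Measure.pi fun _ : Fin m => mu ρ) (Measure.pi fun _ : Fin m => mu ρ) :=
  measurePreserving_pi _ _ fun _ => tow_preserving

lemma ergodic_of_div (hdiv : Div ρ m) (A : Set (Fin m → Seq ρ × ℤ)) (hA : MeasurableSet A)
    (h : (Measure.pi fun _ : Fin m => mu ρ)
      (symmDiff ((fun (x : Fin m → Seq ρ × ℤ) i => towM ρ (x i)) ⁻¹' A) A) = 0) :
    (Measure.pi fun _ : Fin m => mu ρ) A = 0 ∨ (Measure.pi fun _ : Fin m => mu ρ) Aᶜ = 0 := by
  obtain ⟨A', hA', hAA', hinv⟩ :=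
    (prod_preserving (ρ := ρ) m).quasiMeasurePreserving.exists_preimage_eq_of_preimage_ae
      hA.nullMeasurableSet (measure_symmDiff_eq_zero_iff.1 h)
  rw [← measure_congr hAA', ← measure_congr hAA'.compl]
  exact null_or_conull hdiv hA' fun x => iff_of_eq (congrFun hinv x)

/-! ### Conservativity -/

/-- At a stage with two digits, the move that exchanges the digits `0` and `1` of all coordinates
displaces all coordinates by the same amount; infinitely many such stages force recurrence. -/
lemma conservative_of_freq (hfreq : ∀ J, ∃ j, J ≤ j ∧ ρ j = 0) (A : Set (Fin m → Seq ρ × ℤ))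
    (hA : MeasurableSet A) (hpos : 0 < (Measure.pi fun _ : Fin m => mu ρ) A) :
    ∃ t : ℕ, 0 < t ∧ 0 < (Measure.pi fun _ : Fin m => mu ρ)
      ((fun (x : Fin m → Seq ρ × ℤ) i => towM ρ (x i))^[t] ⁻¹' A ∩ A) := by
  let B : Set (Fin m → Seq ρ × ℤ) → (Fin m → ℤ) → Set (Fin m → Seq ρ) := fun A n =>
    {y | (fun i => (y i, n i)) ∈ A ∧ ∀ i, 0 ≤ n i ∧ n i < hgt (y i)}
  have hform : ∀ {A}, MeasurableSet A → (Measure.pi fun _ : Fin m => mu ρ) A =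
    ∑' n, nuP ρ m (B A n) := fun hA => pi_mu_apply hA
  obtain ⟨n, hn⟩ : ∃ n, nuP ρ m (B A n) ≠ 0 := by
    by_contra! hcon
    rw [hform hA, ENNReal.tsum_eq_zero.2 hcon] at hpos
    exact lt_irrefl _ hpos
  have hBm : MeasurableSet (B A n) := by
    refine MeasurableSet.inter ?_ ?_
    · have : Measurable fun (y : Fin m → Seq ρ) i => (y i, n i) :=
        measurable_pi_lambda _ fun i => (measurable_pi_apply i).prodMk measurable_const
      exact this hA
    · have : {y : Fin m → Seq ρ | ∀ i, 0 ≤ n i ∧ n i < hgt (y i)} =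
          ⋂ i, (fun y => y i) ⁻¹' {z | 0 ≤ n i ∧ n i < hgt z} := by
        ext; simp
      change MeasurableSet {y : Fin m → Seq ρ | ∀ i, 0 ≤ n i ∧ n i < hgt (y i)}
      rw [this]
      exact MeasurableSet.iInter fun i => measurable_pi_apply i (measurableSet_hgt (n i))
  set D := B A n
  let σ : ∀ j, Fin m → Equiv.Perm (Fin (ρ j + 2)) := fun j _ => Equiv.swap 0 1
  let R : ℕ → Set (Fin m → Seq ρ) := fun j => dig j (fun _ => 0) ∪ dig j (fun _ => 1)
  have hRm : ∀ j, MeasurableSet (R j) := fun j => (dep_dig j _).1.union (dep_dig j _).1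
  have hsum : ∀ J, ∑' j : {j | J ≤ j ∧ j ∈ {j | ρ j = 0}},
      (((ρ j + 2 : ℕ) : ℝ≥0∞) ^ m)⁻¹ = ⊤ := by
    intro J
    have hinf : Set.Infinite {j | J ≤ j ∧ ρ j = 0} := by
      rw [Set.infinite_iff_exists_gt]
      intro a
      obtain ⟨j, h1, h2⟩ := hfreq (max J (a + 1))
      exact ⟨j, ⟨le_trans (le_max_left _ _) h1, h2⟩, by
        have := le_trans (le_max_right _ _) h1; omega⟩
    have := hinf.to_subtype
    rw [← ENNReal.tsum_const_eq_top_of_ne_zero (α := {j | J ≤ j ∧ ρ j = 0})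
      (c := ((2 : ℝ≥0∞) ^ m)⁻¹) (by simp)]
    refine tsum_congr fun j => ?_
    rw [j.2.2]
    simp
  obtain ⟨j, hj, hret⟩ : ∃ j, ρ j = 0 ∧ nuP ρ m (D ∩ R j ∩ mv j (σ j) ⁻¹' D) ≠ 0 := by
    by_contra! hcon
    let M : Set (Fin m → Seq ρ) := ⋃ j, ⋃ _ : ρ j = 0, D ∩ R j ∩ mv j (σ j) ⁻¹' D
    have hM : nuP ρ m M = 0 :=
      measure_iUnion_null fun j => measure_iUnion_null fun hj => hcon j hj
    have hMm : MeasurableSet M := MeasurableSet.iUnion fun j => MeasurableSet.iUnion fun _ =>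
      (hBm.inter (hRm j)).inter ((mv_preserving j (σ j)).measurable hBm)
    have h0 : nuP ρ m (D \ M) = 0 := by
      refine kill {j | ρ j = 0} (fun _ _ => 0) σ (by simp [σ]) hsum (hBm.diff hMm) ?_
      rintro j hj y ⟨h1, h2⟩ h3 ⟨h4, -⟩
      refine h2 (Set.mem_iUnion.2 ⟨j, Set.mem_iUnion.2 ⟨hj, ⟨h1, ?_⟩, h4⟩⟩)
      simpa [σ, R] using h3
    rw [measure_sdiff_null hM] at h0
    exact hn h0
  -- by symmetry the returning points can be taken to have all digits equal to `0`
  let G : Set (Fin m → Seq ρ) := D ∩ dig j (fun _ => 0) ∩ mv j (σ j) ⁻¹' D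
  have hGm : MeasurableSet G :=
    (hBm.inter (dep_dig j _).1).inter ((mv_preserving j (σ j)).measurable hBm)
  have hG : nuP ρ m G ≠ 0 := by
    intro h0
    have hsub : D ∩ R j ∩ mv j (σ j) ⁻¹' D ⊆ G ∪ mv j (σ j) ⁻¹' G := by
      rintro y ⟨⟨h1, h2 | h2⟩, h3⟩
      · exact Or.inl ⟨⟨h1, h2⟩, h3⟩
      · refine Or.inr ⟨⟨h3, fun i => ?_⟩, ?_⟩
        · rw [mv_same, h2 i]
          simp [σ]
        · have : mv j (σ j) (mv j (σ j) y) = y := by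
            funext i l
            by_cases hl : l = j
            · subst hl
              simp [mv_same, σ]
            · rw [mv_ne hl, mv_ne hl]
          rw [Set.mem_preimage, this]
          exact h1
    refine hret (measure_mono_null hsub (measure_union_null h0 ?_))
    rw [(mv_preserving j (σ j)).measure_preimage hGm.nullMeasurableSet, h0]
  refine ⟨wid ρ j, by have := ten_le_wid (ρ := ρ) j; omega, ?_⟩
  have hTm := (prod_preserving (ρ := ρ) m).measurable.iterate (wid ρ j)
  rw [hform ((hTm hA).inter hA)]
  refine lt_of_lt_of_le (pos_iff_ne_zero.2 hG) (le_trans (measure_mono ?_) (ENNReal.le_tsum n))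
  rintro y ⟨⟨h1, h2⟩, h3⟩
  refine ⟨⟨?_, h1.1⟩, h1.2⟩
  rw [Set.mem_preimage, iterate_prod]
  convert h3.1 using 1
  funext i
  rw [← tow_zpow_of_mem (h1.2 i), ← tow_zpow_of_mem (h3.2 i), tow_zpow_mv, h2 i, ← zpow_natCast,
    ← Equiv.Perm.mul_apply, ← Equiv.Perm.mul_apply, ← zpow_add, ← zpow_add, add_comm]
  simp [σ, pos, bas]


/-! ### Failure of ergodicity -/

/-- The sequences whose forward odometer orbit avoids the exceptional point. -/
def Reg (ρ : ℕ → ℕ) : Set (Seq ρ) := {y | ∀ p : ℕ, odo^[p] y ≠ top ρ}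

lemma measurableSet_reg_preimage (p : ℕ) : MeasurableSet {y : Seq ρ | odo^[p] y = top ρ} :=
  (measurable_odo.iterate p) (measurableSet_singleton (top ρ))

lemma measurableSet_reg : MeasurableSet (Reg ρ) := by
  have : Reg ρ = ⋂ p : ℕ, {y : Seq ρ | odo^[p] y = top ρ}ᶜ := by
    ext; simp [Reg]
  rw [this]
  exact MeasurableSet.iInter fun p => (measurableSet_reg_preimage p).compl

lemma nu_reg_compl : nu ρ (Reg ρ)ᶜ = 0 := by
  have : (Reg ρ)ᶜ = ⋃ p : ℕ, odo^[p] ⁻¹' {top ρ} := by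
    ext; simp [Reg]
  rw [this, measure_iUnion_null_iff]
  intro p
  rw [(odo_preserving.iterate p).measure_preimage
    (measurableSet_singleton _).nullMeasurableSet]
  exact measure_singleton _

/-- The tuples all of whose coordinates are regular. -/
def RegP (ρ : ℕ → ℕ) (m : ℕ) : Set (Fin m → Seq ρ) := {y | ∀ i, y i ∈ Reg ρ}

lemma measurableSet_regP : MeasurableSet (RegP ρ m) := by
  have : RegP ρ m = ⋂ i, (fun y => y i) ⁻¹' Reg ρ := by ext; simp [RegP]
  rw [this]
  exact MeasurableSet.iInter fun i => measurable_pi_apply i measurableSet_reg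

lemma nuP_regP_compl : nuP ρ m (RegP ρ m)ᶜ = 0 := by
  have : (RegP ρ m)ᶜ = ⋃ i, (fun y => y i) ⁻¹' (Reg ρ)ᶜ := by
    ext; simp [RegP]
  rw [this, measure_iUnion_null_iff]
  intro i
  have h := (measurePreserving_eval (fun _ : Fin m => nu ρ) i).measure_preimage
    (measurableSet_reg (ρ := ρ)).compl.nullMeasurableSet
  rw [nu_reg_compl] at h
  exact h

/-- The tuples that have all their digits at stage `j` below `3`. -/
def low (j : ℕ) : Set (Fin m → Seq ρ) := {y | ∀ i, (y i j : ℕ) < 3}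

lemma low_eq (j : ℕ) :
    (low j : Set (Fin m → Seq ρ)) = Set.univ.pi fun _ => {z : Seq ρ | (z j : ℕ) < 3} := by
  ext; simp [low]

lemma measurableSet_low (j : ℕ) : MeasurableSet (low j : Set (Fin m → Seq ρ)) := by
  rw [low_eq]
  exact MeasurableSet.univ_pi fun _ => measurable_digit j
    (Set.Finite.measurableSet (Set.toFinite {a : Fin (ρ j + 2) | (a : ℕ) < 3}))

lemma nuP_low_le (j : ℕ) :
    nuP ρ m (low j) ≤ (3 * ((ρ j + 2 : ℕ) : ℝ≥0∞)⁻¹) ^ m := by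
  rw [low_eq, nuP, Measure.pi_pi, Finset.prod_const, Finset.card_univ, Fintype.card_fin]
  gcongr
  have h1 := nu_digit (ρ := ρ) j ((Finset.univ.filter fun a : Fin (ρ j + 2) => (a : ℕ) < 3 :
    Finset (Fin (ρ j + 2))) : Set (Fin (ρ j + 2)))
  rw [unif_apply] at h1
  have h2 : (Finset.univ.filter fun a : Fin (ρ j + 2) => (a : ℕ) < 3).card ≤ 3 := by
    refine (Finset.card_le_card_of_injOn (t := Finset.range 3)
      (fun a : Fin (ρ j + 2) => (a : ℕ)) ?_ ?_).trans
      (Finset.card_range 3).le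
    · intro a ha
      simpa using ha
    · intro a _ b _ h
      exact Fin.ext h
  calc nu ρ {z : Seq ρ | (z j : ℕ) < 3} = _ := by simpa using h1
    _ ≤ ((ρ j + 2 : ℕ) : ℝ≥0∞)⁻¹ * 3 :=
      mul_le_mul' le_rfl (by exact_mod_cast h2)
    _ = _ := mul_comm _ _

lemma nuP_dig (j : ℕ) (c : Fin m → Fin (ρ j + 2)) :
    nuP ρ m (dig j c) = (((ρ j + 2 : ℕ) : ℝ≥0∞) ^ m)⁻¹ := by
  have h := nuP_inter_dig j (K := Set.univ) ⟨MeasurableSet.univ, fun _ _ _ h => h⟩ c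
  rw [Set.univ_inter, measure_univ] at h
  exact ENNReal.eq_inv_of_mul_eq_one_left (by rwa [mul_comm] at h)

/-- If the displacements below `N` of all coordinates agree, then so do the displacements at each
single stage, provided that at every stage with more than two digits some digit of `y` is at
least `3`. -/
lemma stage_disp {y z : Fin m → Seq ρ} (hy : ∀ j, ρ j ≠ 0 → ∃ i, 3 ≤ (y i j : ℕ)) (N : ℕ) :
    (∀ i i', alpha N (z i) - alpha N (y i) = alpha N (z i') - alpha N (y i')) →
    ∀ j < N, ∀ i i', (pos (wid ρ j) (z i j) : ℤ) - pos (wid ρ j) (y i j) =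
      pos (wid ρ j) (z i' j) - pos (wid ρ j) (y i' j) := by
  induction N with
  | zero => intro _ j hj; omega
  | succ N ih =>
    intro h
    have hbas : ∀ i i', bas (z i N) + bas (y i' N) = bas (z i' N) + bas (y i N) := by
      intro i i'
      have h0 := h i i'
      simp only [alpha_succ] at h0
      have a1 := alpha_nonneg N (y i)
      have a2 := alpha_nonneg N (z i)
      have a3 := alpha_nonneg N (y i')
      have a4 := alpha_nonneg N (z i')
      have b1 := alpha_le N (y i)
      have b2 := alpha_le N (z i)
      have b3 := alpha_le N (y i')
      have b4 := alpha_le N (z i')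
      have hW : 4 * tot ρ N + 10 ≤ wid ρ N := by unfold wid; omega
      have hpos : ∀ a : ℕ, (wid ρ N : ℤ) * bas a ≤ pos (wid ρ N) a ∧
          (pos (wid ρ N) a : ℤ) ≤ wid ρ N * bas a + 1 := by
        intro a
        unfold pos
        push_cast
        split_ifs <;> simp
      have c1 := hpos (y i N)
      have c2 := hpos (z i N)
      have c3 := hpos (y i' N)
      have c4 := hpos (z i' N)
      have hW' : 4 * (tot ρ N : ℤ) + 10 ≤ wid ρ N := by exact_mod_cast hW
      have hT : (0 : ℤ) ≤ tot ρ N := by positivity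
      generalize (wid ρ N : ℤ) = W at *
      generalize (tot ρ N : ℤ) = S at *
      zify
      by_contra hne
      rcases lt_or_gt_of_ne hne with hlt | hlt
      · have := mul_le_mul_of_nonneg_left (Int.add_one_le_iff.2 hlt) (by linarith : (0 : ℤ) ≤ W)
        linarith
      · have := mul_le_mul_of_nonneg_left (Int.add_one_le_iff.2 hlt) (by linarith : (0 : ℤ) ≤ W)
        linarith
    have hN : ∀ i i', (pos (wid ρ N) (z i N) : ℤ) - pos (wid ρ N) (y i N) =
        pos (wid ρ N) (z i' N) - pos (wid ρ N) (y i' N) := by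
      by_cases hρ : ρ N = 0
      · intro i i'
        have hb := hbas i i'
        have hlt : ∀ a : Fin (ρ N + 2), (a : ℕ) ≠ 2 := fun a => by have := a.2; omega
        simp only [pos, if_neg (hlt _)]
        push_cast
        have : (bas (z i N) : ℤ) + bas (y i' N) = bas (z i' N) + bas (y i N) := by
          exact_mod_cast hb
        linear_combination (wid ρ N : ℤ) * this
      · obtain ⟨q, hq⟩ := hy N hρ
        have key : ∀ i, (pos (wid ρ N) (z i N) : ℤ) - pos (wid ρ N) (y i N) =
            pos (wid ρ N) (z q N) - pos (wid ρ N) (y q N) := by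
          intro i
          rcases bas_classify (hbas i q) with ⟨h1, h2⟩ | ⟨h1, h2⟩ | ⟨-, -, -, h2⟩
          · rw [h1, h2]; ring
          · rw [h1, h2]
          · omega
        intro i i'
        rw [key i, key i']
    intro j hj
    rcases Nat.lt_succ_iff_lt_or_eq.1 hj with hj | rfl
    · refine ih (fun i i' => ?_) j hj
      have h1 := h i i'
      have h2 := hN i i'
      simp only [alpha_succ] at h1
      linarith
    · exact hN

/-- For `m`-tuples, the expected number of stages with more than two digits at which all digits are
below `3` is less than `2 ^ (-m)`, the probability of a prescribed value of the digits at a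
two-digit stage. The summand bounds the probability of `low j`. -/
def Sml (ρ : ℕ → ℕ) (m : ℕ) : Prop :=
  ∑' j : {j | ρ j ≠ 0}, (3 * ((ρ j + 2 : ℕ) : ℝ≥0∞)⁻¹) ^ m < ((2 : ℝ≥0∞) ^ m)⁻¹

lemma nuP_iUnion_low_lt (hsml : Sml ρ m) :
    nuP ρ m (⋃ j : {j | ρ j ≠ 0}, low j.1) < ((2 : ℝ≥0∞) ^ m)⁻¹ := by
  have h1 : nuP ρ m (⋃ j : {j | ρ j ≠ 0}, low j.1) ≤ ∑' j : {j | ρ j ≠ 0}, nuP ρ m (low j.1) :=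
    measure_iUnion_le _
  have h2 : ∑' j : {j | ρ j ≠ 0}, nuP ρ m (low j.1) ≤
      ∑' j : {j | ρ j ≠ 0}, (3 * ((ρ j + 2 : ℕ) : ℝ≥0∞)⁻¹) ^ m :=
    ENNReal.tsum_le_tsum fun j => nuP_low_le j.1
  exact (h1.trans h2).trans_lt hsml

lemma le_pi_mu {B : Set (Fin m → Seq ρ × ℤ)} (hB : MeasurableSet B) :
    nuP ρ m {y | (fun i => (y i, (0 : ℤ))) ∈ B} ≤ (Measure.pi fun _ : Fin m => mu ρ) B := by
  rw [pi_mu_apply hB]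
  refine le_trans (measure_mono ?_) (ENNReal.le_tsum (fun _ => 0))
  intro y hy
  refine ⟨hy, fun i => ⟨le_rfl, ?_⟩⟩
  have := hgt_pos (y i)
  change (0 : ℤ) < hgt (y i)
  omega

/-- The witness is the union of the orbits of the base tuples in `A₀`: their digits at stage `0` all
vanish, and they are never low at a stage with more than two digits. By `stage_disp`, all
coordinates of such a tuple are displaced by the same amount at stage `0` when its orbit returns to
the base. Hence the orbits avoid the tuples in `A₁`, whose digits at stage `0` are
`(1, 0, …, 0)`. -/
lemma not_ergodic_of_sml (h0 : ρ 0 = 0) (hm : 2 ≤ m) (hsml : Sml ρ m) :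
    ∃ A : Set (Fin m → Seq ρ × ℤ), MeasurableSet A ∧
      (fun (x : Fin m → Seq ρ × ℤ) i => towM ρ (x i)) ⁻¹' A = A ∧
      (Measure.pi fun _ : Fin m => mu ρ) A ≠ 0 ∧ (Measure.pi fun _ : Fin m => mu ρ) Aᶜ ≠ 0 := by
  let i₀ : Fin m := ⟨0, by omega⟩
  let i₁ : Fin m := ⟨1, by omega⟩
  have hne : i₁ ≠ i₀ := by simp [i₀, i₁, Fin.ext_iff]
  let L : Set (Fin m → Seq ρ) := ⋃ j : {j | ρ j ≠ 0}, low j.1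
  have hLm : MeasurableSet L := MeasurableSet.iUnion fun j => measurableSet_low j.1
  let A₀ : Set (Fin m → Seq ρ) := (dig 0 (fun _ => 0) \ L) ∩ RegP ρ m
  let A₁ : Set (Fin m → Seq ρ) := dig 0 (fun i => if i = i₀ then 1 else 0) ∩ RegP ρ m
  have hA₀m : MeasurableSet A₀ := ((dep_dig 0 _).1.diff hLm).inter measurableSet_regP
  have hA₀ : nuP ρ m A₀ ≠ 0 := by
    intro hz
    have h1 : nuP ρ m (dig 0 (fun _ => 0)) ≤ nuP ρ m L := by
      calc nuP ρ m (dig 0 (fun _ => 0)) ≤ nuP ρ m (A₀ ∪ (RegP ρ m)ᶜ ∪ L) := by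
            refine measure_mono fun y hy => ?_
            by_cases hr : y ∈ RegP ρ m
            · by_cases hl : y ∈ L
              · exact Or.inr hl
              · exact Or.inl (Or.inl ⟨⟨hy, hl⟩, hr⟩)
            · exact Or.inl (Or.inr hr)
        _ ≤ nuP ρ m (A₀ ∪ (RegP ρ m)ᶜ) + nuP ρ m L := measure_union_le _ _
        _ = nuP ρ m L := by rw [measure_union_null hz nuP_regP_compl, zero_add]
    have h2 : nuP ρ m L < ((2 : ℝ≥0∞) ^ m)⁻¹ := nuP_iUnion_low_lt hsml
    have h3 : ((ρ 0 + 2 : ℕ) : ℝ≥0∞) = 2 := by rw [h0]; norm_num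
    rw [nuP_dig, h3] at h1
    exact absurd h2 (not_lt.2 h1)
  have hA₁ : nuP ρ m A₁ ≠ 0 := by
    intro hz
    have h1 : nuP ρ m (dig 0 (fun i => if i = i₀ then 1 else 0)) ≤ 0 := by
      rw [← measure_union_null hz (nuP_regP_compl (ρ := ρ))]
      refine measure_mono fun y hy => ?_
      by_cases hr : y ∈ RegP ρ m
      · exact Or.inl ⟨hy, hr⟩
      · exact Or.inr hr
    rw [nuP_dig, nonpos_iff_eq_zero, ENNReal.inv_eq_zero] at h1
    exact ENNReal.pow_ne_top (ENNReal.natCast_ne_top _) h1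
  let B : Set (Fin m → Seq ρ × ℤ) := {x | (∀ i, (x i).2 = 0) ∧ (fun i => (x i).1) ∈ A₀}
  have hBm : MeasurableSet B := by
    have e : B = (⋂ i, (fun x => (x i).2) ⁻¹' {0}) ∩ (fun x i => (x i).1) ⁻¹' A₀ := by
      ext; simp [B]
    rw [e]
    refine MeasurableSet.inter (MeasurableSet.iInter fun i => ?_) ?_
    · exact (measurable_snd.comp (measurable_pi_apply i)) (measurableSet_singleton 0)
    · exact (measurable_pi_lambda _ fun i => measurable_fst.comp (measurable_pi_apply i)) hA₀m
  let A : Set (Fin m → Seq ρ × ℤ) := ⋃ t : ℤ, (fun x i => (tow ^ t) (x i)) ⁻¹' B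
  have hAm : MeasurableSet A := MeasurableSet.iUnion fun t =>
    (measurable_pi_lambda _ fun i => (measurable_tow_zpow t).comp (measurable_pi_apply i)) hBm
  refine ⟨A, hAm, ?_, ?_, ?_⟩
  · ext x
    simp only [A, Set.mem_preimage, Set.mem_iUnion]
    have e : ∀ t : ℤ, (fun i => (tow ^ t) (towM ρ (x i))) = fun i => (tow ^ (t + 1)) (x i) := by
      intro t
      funext i
      rw [zpow_add_one, Equiv.Perm.mul_apply]
      rfl
    simp only [e]
    constructor
    · rintro ⟨t, ht⟩
      exact ⟨t + 1, ht⟩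
    · rintro ⟨t, ht⟩
      exact ⟨t - 1, by simpa using ht⟩
  · intro hz
    refine hA₀ (measure_mono_null ?_ (le_antisymm ((le_pi_mu hAm).trans hz.le) bot_le))
    intro y hy
    refine Set.mem_iUnion.2 ⟨0, ?_⟩
    exact ⟨fun i => by simp, by simpa using hy⟩
  · intro hz
    refine hA₁ (measure_mono_null ?_ (le_antisymm ((le_pi_mu hAm.compl).trans hz.le) bot_le))
    intro z hz hzA
    obtain ⟨t, ht1, ht2⟩ := Set.mem_iUnion.1 hzA
    let y : Fin m → Seq ρ := fun i => ((tow ^ t) (z i, (0 : ℤ))).1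
    have hyz : ∀ i, (tow ^ t) (z i, (0 : ℤ)) = (y i, 0) := fun i => Prod.ext rfl (ht1 i)
    have hy : y ∈ A₀ := ht2
    have hev : ∀ i, ∀ᶠ N in Filter.atTop, alpha N (z i) - alpha N (y i) = -t := by
      intro i
      rcases Int.eq_nat_or_neg t with ⟨s, rfl | rfl⟩
      · obtain ⟨N₀, hN⟩ := return_alpha s (z i) (y i) (hz.2 i) (by
          rw [← hyz i, zpow_natCast])
        filter_upwards [Filter.eventually_ge_atTop N₀] with N h
        have := hN N h
        linarith
      · obtain ⟨N₀, hN⟩ := return_alpha s (y i) (z i) (hy.2 i) (by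
          rw [← hyz i, zpow_neg, zpow_natCast, ← Equiv.Perm.mul_apply, mul_inv_cancel]
          rfl)
        filter_upwards [Filter.eventually_ge_atTop N₀] with N h
        have := hN N h
        linarith
    obtain ⟨N, hN, hN1⟩ := ((Filter.eventually_all.2 hev).and
      (Filter.eventually_ge_atTop 1)).exists
    have hlow : ∀ j, ρ j ≠ 0 → ∃ i, 3 ≤ (y i j : ℕ) := by
      intro j hj
      by_contra! hcon
      exact hy.1.2 (Set.mem_iUnion.2 ⟨⟨j, hj⟩, hcon⟩)
    have hd := stage_disp hlow N (fun i i' => by rw [hN i, hN i']) 0 (by omega) i₀ i₁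
    rw [hy.1.1 i₀, hy.1.1 i₁, hz.1 i₀, hz.1 i₁] at hd
    have hW := ten_le_wid (ρ := ρ) 0
    simp [pos, bas, hne] at hd
    omega


/-! ### The choice of the digit alphabets -/

/-- The alphabet sizes, diminished by two: two digits at even stages, and about
`(q + q₀) ^ (1 / k)` digits at stage `2 q + 1`. -/
noncomputable def rho (k q₀ : ℕ) (j : ℕ) : ℕ :=
  if j % 2 = 0 then 0 else ⌈((j / 2 + q₀ : ℕ) : ℝ) ^ (1 / (k : ℝ))⌉₊

lemma rho_even (k q₀ q : ℕ) : rho k q₀ (2 * q) = 0 := by simp [rho]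

lemma rho_odd (k q₀ q : ℕ) :
    rho k q₀ (2 * q + 1) = ⌈((q + q₀ : ℕ) : ℝ) ^ (1 / (k : ℝ))⌉₊ := by
  have h1 : (2 * q + 1) % 2 = 1 := by omega
  have h2 : (2 * q + 1) / 2 = q := by omega
  simp [rho, h1, h2]

lemma rho_odd_ne_zero (k q q₀ : ℕ) (hq : 0 < q₀) : rho k q₀ (2 * q + 1) ≠ 0 := by
  rw [rho_odd, Nat.ne_zero_iff_zero_lt, Nat.ceil_pos]
  exact Real.rpow_pos_of_pos (by exact_mod_cast Nat.add_pos_right q hq) _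

lemma rpow_pow_self {k : ℕ} (hk : 0 < k) (n : ℕ) : ((n : ℝ) ^ (1 / (k : ℝ))) ^ k = n := by
  rw [one_div, Real.rpow_inv_natCast_pow (by positivity) hk.ne']

lemma rho_odd_pow_le {k q₀ : ℕ} (hk : 0 < k) (hq : 0 < q₀) (q : ℕ) :
    (rho k q₀ (2 * q + 1) + 2) ^ k ≤ 4 ^ k * (q + q₀) := by
  have h1 : (1 : ℝ) ≤ ((q + q₀ : ℕ) : ℝ) ^ (1 / (k : ℝ)) :=
    Real.one_le_rpow (by exact_mod_cast (by omega : 1 ≤ q + q₀)) (by positivity)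
  have h2 := (Nat.ceil_lt_add_one (zero_le_one.trans h1)).le
  rw [← rho_odd] at h2
  have h3 : ((rho k q₀ (2 * q + 1) : ℝ) + 2) ^ k ≤
      (4 * ((q + q₀ : ℕ) : ℝ) ^ (1 / (k : ℝ))) ^ k := by
    gcongr
    linarith
  rw [mul_pow, rpow_pow_self hk] at h3
  exact_mod_cast h3

lemma tsum_inv_add_eq_top (a : ℕ) : ∑' q : ℕ, ((q + a : ℕ) : ℝ≥0∞)⁻¹ = ⊤ := by
  by_contra h
  have h1 := ENNReal.summable_toReal h
  have h2 : (fun q : ℕ => (((q + a : ℕ) : ℝ≥0∞)⁻¹).toReal) = fun q : ℕ => ((q + a : ℕ) : ℝ)⁻¹ := by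
    funext q
    rw [ENNReal.toReal_inv, ENNReal.toReal_natCast]
  rw [h2] at h1
  exact Real.not_summable_natCast_inv ((summable_nat_add_iff (f := fun n : ℕ => (n : ℝ)⁻¹) a).1 h1)

lemma div_rho {k q₀ : ℕ} (hk : 0 < k) (hq : 0 < q₀) : Div (rho k q₀) k := by
  intro J
  let e : ℕ → {j | J ≤ j ∧ j ∈ {j | rho k q₀ j ≠ 0}} := fun q =>
    ⟨2 * (q + J) + 1, by omega, rho_odd_ne_zero k (q + J) q₀ hq⟩
  have he : Function.Injective e := by
    intro a b h
    have := congrArg Subtype.val h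
    simp only [e] at this
    omega
  have h1 := ENNReal.tsum_comp_le_tsum_of_injective he
    (fun j => (((rho k q₀ j + 2 : ℕ) : ℝ≥0∞) ^ k)⁻¹)
  rw [← top_le_iff]
  refine le_trans (le_trans (?_ : ⊤ ≤
    ∑' q : ℕ, ((4 ^ k : ℕ) : ℝ≥0∞)⁻¹ * ((q + (J + q₀) : ℕ) : ℝ≥0∞)⁻¹)
    (ENNReal.tsum_le_tsum fun q => ?_)) h1
  · rw [ENNReal.tsum_mul_left, tsum_inv_add_eq_top, ENNReal.mul_top]
    exact ENNReal.inv_ne_zero.2 (ENNReal.natCast_ne_top _)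
  · rw [← ENNReal.mul_inv (Or.inr (ENNReal.natCast_ne_top _)) (Or.inl (ENNReal.natCast_ne_top _)),
      ENNReal.inv_le_inv]
    have := rho_odd_pow_le hk hq (q + J)
    rw [add_assoc] at this
    exact_mod_cast this

lemma sml_term_le {k q₀ : ℕ} (hk : 0 < k) (hq : 0 < q₀) (q : ℕ) :
    (3 * ((rho k q₀ (2 * q + 1) + 2 : ℕ) : ℝ≥0∞)⁻¹) ^ (k + 1) ≤
      ENNReal.ofReal (3 ^ (k + 1) * (1 / ((q + q₀ : ℕ) : ℝ) ^ (1 + 1 / (k : ℝ)))) := by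
  have hpos : (0 : ℝ) < ((q + q₀ : ℕ) : ℝ) := by exact_mod_cast Nat.add_pos_right q hq
  set x : ℝ := ((q + q₀ : ℕ) : ℝ) ^ (1 / (k : ℝ)) with hx
  have hx0 : 0 < x := Real.rpow_pos_of_pos hpos _
  have h1 : x ≤ ((rho k q₀ (2 * q + 1) + 2 : ℕ) : ℝ) := by
    have := Nat.le_ceil x
    rw [hx, ← rho_odd] at this
    push_cast
    linarith
  have h2 : ((q + q₀ : ℕ) : ℝ) ^ (1 + 1 / (k : ℝ)) = x ^ (k + 1) := by
    rw [Real.rpow_add hpos, Real.rpow_one, pow_succ, rpow_pow_self hk]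
  have h3 : (3 * ((rho k q₀ (2 * q + 1) + 2 : ℕ) : ℝ≥0∞)⁻¹) ^ (k + 1) =
      ENNReal.ofReal ((3 * ((rho k q₀ (2 * q + 1) + 2 : ℕ) : ℝ)⁻¹) ^ (k + 1)) := by
    rw [ENNReal.ofReal_pow (by positivity), ENNReal.ofReal_mul (by norm_num),
      ENNReal.ofReal_inv_of_pos (by positivity), ENNReal.ofReal_natCast]
    norm_num
  rw [h3, h2]
  refine ENNReal.ofReal_le_ofReal ?_
  rw [mul_pow, one_div, inv_pow]
  gcongr

/-- The terms at the odd stages are the terms of a convergent series, shifted by `q₀`, so their sum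
is small for large `q₀`. -/
lemma exists_sml {k : ℕ} (hk : 0 < k) : ∃ q₀, 0 < q₀ ∧ Sml (rho k q₀) (k + 1) := by
  let f : ℕ → ℝ≥0∞ := fun n => ENNReal.ofReal (3 ^ (k + 1) * (1 / (n : ℝ) ^ (1 + 1 / (k : ℝ))))
  have hs : Summable fun n : ℕ => (3 : ℝ) ^ (k + 1) * (1 / (n : ℝ) ^ (1 + 1 / (k : ℝ))) := by
    refine Summable.mul_left _ (Real.summable_one_div_nat_rpow.2 ?_)
    have : (0 : ℝ) < 1 / (k : ℝ) := by positivity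
    linarith
  have hf : ∑' n, f n ≠ ⊤ := by
    rw [← ENNReal.ofReal_tsum_of_nonneg (fun n => by positivity) hs]
    exact ENNReal.ofReal_ne_top
  have hε : (0 : ℝ≥0∞) < ((2 : ℝ≥0∞) ^ (k + 1))⁻¹ :=
    ENNReal.inv_pos.2 (ENNReal.pow_ne_top ENNReal.ofNat_ne_top)
  obtain ⟨q₀, h1, h2⟩ := (((ENNReal.tendsto_sum_nat_add f hf).eventually_lt_const hε).and
    (Filter.eventually_ge_atTop 1)).exists
  refine ⟨q₀, h2, lt_of_le_of_lt ?_ h1⟩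
  have hodd : ∀ j : {j | rho k q₀ j ≠ 0}, (j : ℕ) = 2 * ((j : ℕ) / 2) + 1 := by
    rintro ⟨j, hj⟩
    rcases Nat.even_or_odd' j with ⟨q, rfl | rfl⟩
    · exact absurd (rho_even k q₀ q) hj
    · simp only
      omega
  have he : Function.Injective fun j : {j | rho k q₀ j ≠ 0} => (j : ℕ) / 2 := by
    intro a b h
    have ha := hodd a
    have hb := hodd b
    simp only at h
    exact Subtype.ext (by omega)
  refine le_trans (ENNReal.tsum_le_tsum fun j => ?_)
    (ENNReal.tsum_comp_le_tsum_of_injective he fun q => f (q + q₀))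
  have h := sml_term_le hk h2 ((j : ℕ) / 2)
  rw [← hodd j] at h
  exact h

end ErgIdx

theorem stmt8 (k : ℕ) (hk : 0 < k) :
    ∃ (X : Type) (_ : MeasurableSpace X) (_ : StandardBorelSpace X)
      (μ : Measure X) (_ : NoAtoms μ) (_ : SigmaFinite μ) (T : X ≃ᵐ X),
      μ Set.univ = ⊤ ∧ MeasurePreserving T μ μ ∧
      IsErgodicMap (Measure.pi fun _ : Fin k => μ)
        (fun x : Fin k → X => fun i => T (x i)) ∧
      ¬ IsErgodicMap (Measure.pi fun _ : Fin (k + 1) => μ)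
        (fun x : Fin (k + 1) → X => fun i => T (x i)) ∧
      ∀ n : ℕ, 0 < n →
        IsConservativeMap (Measure.pi fun _ : Fin n => μ)
          (fun x : Fin n → X => fun i => T (x i)) := by
  obtain ⟨q₀, hq, hsml⟩ := ErgIdx.exists_sml hk
  refine ⟨ErgIdx.Seq (ErgIdx.rho k q₀) × ℤ, inferInstance, inferInstance,
    ErgIdx.mu (ErgIdx.rho k q₀),
    (inferInstance : NullSingletonClass (ErgIdx.mu (ErgIdx.rho k q₀))), inferInstance,
    ErgIdx.towM (ErgIdx.rho k q₀),
    ErgIdx.mu_univ, ErgIdx.tow_preserving, ?_, ?_, ?_⟩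
  · exact ErgIdx.ergodic_of_div (ErgIdx.div_rho hk hq)
  · intro h
    obtain ⟨A, hA, hinv, h1, h2⟩ := ErgIdx.not_ergodic_of_sml (m := k + 1)
      (ErgIdx.rho_even k q₀ 0) (by omega) hsml
    rcases h A hA (by rw [hinv, symmDiff_self]; exact measure_empty) with h | h
    · exact h1 h
    · exact h2 h
  · intro n _
    exact ErgIdx.conservative_of_freq fun J =>
      ⟨2 * J, by omega, ErgIdx.rho_even k q₀ J⟩
end

section
/- There exists a standard Borel space X with a nonatomic σ-finite Borel measure μ satisfying μ(X) = ∞, and an invertible measure-preserving transformation T : X → X, such that T has infinite ergodic index (for every positive integer n, the n-fold Cartesian product of T is ergodic), but the transformation T × T² : (x, y) ↦ (T x, T² y) of (X × X, μ × μ) is not conservative; in particular T is not power weakly mixing. -/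
/-!
The example is a rank-one transformation. Its base is the group `ℕ → ZMod 4` of digit sequences with
Haar measure, and the `k`-th stacking step places four copies of the `k`-th column at the heights
`0, a, 10 a, 11 a - 1` with `a = 100 ^ (k + 1)`. Two digit sequences that differ at finitely many
places lie on the same orbit, at a distance `travel` which is the sum of the differences of heights.
A point is encoded by its set of visiting times to the base, so that the phase space is `ℤ → Prop`
and the transformation is the shift. The measures on the translates of the base agree on overlaps
(`visitMeasure_compat`), because translations of the base by finitely supported elements preserve
Haar measure and the travel time determines the translation; so they glue to an invariant measure.

*The product with the square is not conservative.* A nonzero return time to the base is, up to lower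
order terms, `± q a` with `q ∈ {1, 9, 10, 11}`, and no element of this set is twice another. Hence
`m` and `2 m` are never both nonzero return times (`travel_double`), and the square over the base
is a wandering set. Its orbit is an invariant set missing another translate of that square, so the
product is not ergodic either. By Poincaré recurrence, the measure is infinite.

*The Cartesian powers are ergodic.* Let `A` be invariant under the diagonal map. If the `k`-th digit
of the `i`-th coordinate is `2` and that of all others is `0`, the `a`-th power of the diagonal map
raises all these digits by one and moves the `i`-th coordinate one step further. This happens with
probability `4 ^ (-n)`, asymptotically independently of everything else, and changing the `k`-th
digits is negligible as `k → ∞`; so `A` is invariant under moving the `i`-th coordinate alone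
(`box_single`). Therefore the trace of `A` on the power of the base is invariant under all finitely
supported translations, a dense subgroup of a compact group, and it is null or conull.
-/

open MeasureTheory

namespace RankOne

open Filter Topology
open scoped symmDiff ENNReal

/-! ### The return-time cocycle -/

/-- The space of digit sequences, the base of the tower. As a compact group it carries a Haar
probability measure, and finitely supported sequences act on it by translation. -/
abbrev Base : Type := ℕ → ZMod 4

/-- The leading coefficient of the position of the `d`-th copy in a stacking step. The positive
differences of these numbers are `1, 9, 10, 11`, and none of them is twice another. -/
def lead : ZMod 4 → ℤ := (![0, 1, 10, 11] : Fin 4 → ℤ)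

/-- The perturbation of the position of the last copy. -/
def pert : ZMod 4 → ℤ := (![0, 0, 0, -1] : Fin 4 → ℤ)

/-- The position of the `d`-th copy of the `k`-th column inside the `(k+1)`-st one: with
`a = 100 ^ (k + 1)`, these are `0, a, 10 a, 11 a - 1`. -/
def pos (k : ℕ) (d : ZMod 4) : ℤ := 100 ^ (k + 1) * lead d + pert d

/-- The time needed to travel from `ω` to `γ + ω`, for a finitely supported `γ`. -/
noncomputable def travel (γ : ℕ →₀ ZMod 4) (ω : Base) : ℤ :=
  ∑ k ∈ γ.support, (pos k (γ k + ω k) - pos k (ω k))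

lemma travel_eq_range {γ : ℕ →₀ ZMod 4} {N : ℕ} (h : γ.support ⊆ Finset.range N) (ω : Base) :
    travel γ ω = ∑ k ∈ Finset.range N, (pos k (γ k + ω k) - pos k (ω k)) := by
  refine Finset.sum_subset h fun k _ hk => ?_
  simp [Finsupp.notMem_support_iff.1 hk]

lemma exists_range (γ γ' : ℕ →₀ ZMod 4) :
    ∃ N, γ.support ⊆ Finset.range N ∧ γ'.support ⊆ Finset.range N := by
  obtain ⟨N, hN⟩ := (γ.support ∪ γ'.support).exists_nat_subset_range
  exact ⟨N, Finset.subset_union_left.trans hN, Finset.subset_union_right.trans hN⟩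

lemma travel_zero (ω : Base) : travel 0 ω = 0 := by simp [travel]

lemma travel_add (γ γ' : ℕ →₀ ZMod 4) (ω : Base) :
    travel (γ + γ') ω = travel γ (⇑γ' + ω) + travel γ' ω := by
  obtain ⟨N, h, h'⟩ := exists_range γ γ'
  rw [travel_eq_range h, travel_eq_range h',
    travel_eq_range (Finsupp.support_add.trans (Finset.union_subset h h')),
    ← Finset.sum_add_distrib]
  refine Finset.sum_congr rfl fun k _ => ?_
  simp [add_assoc]

lemma travel_neg (γ : ℕ →₀ ZMod 4) (ω : Base) :
    travel (-γ) (⇑γ + ω) = - travel γ ω := by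
  have := travel_add (-γ) γ ω
  rw [neg_add_cancel, travel_zero] at this
  linarith

lemma travel_single (k : ℕ) (d : ZMod 4) (ω : Base) :
    travel (Finsupp.single k d) ω = pos k (d + ω k) - pos k (ω k) := by
  have h : (Finsupp.single k d).support ⊆ {k} := Finsupp.support_single_subset
  rw [travel, Finset.sum_subset h]
  · simp
  · intro x _ hx
    simp [Finsupp.notMem_support_iff.1 hx]

/-- Sums of multiples of `100 ^ (k + 1)` with small coefficients and small errors are dominated by
their leading term, so that they cannot cancel. -/
lemma lacunary (Q E : ℕ → ℤ) (hE : ∀ k, |E k| ≤ 4) (hQ : ∀ k, |Q k| ≤ 33)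
    (h0 : ∀ k, Q k = 0 → E k = 0) (j : ℤ) (hj : |j| ≤ 1) (n : ℕ)
    (h : ∑ k ∈ Finset.range n, (100 ^ (k + 1) * Q k + E k) + j = 0) :
    j = 0 ∧ ∀ k < n, Q k = 0 := by
  have bound : ∀ n : ℕ, |∑ k ∈ Finset.range n, (100 ^ (k + 1) * Q k + E k)| ≤ 37 * 100 ^ n := by
    intro n
    induction n with
    | zero => simp
    | succ n ih =>
      rw [Finset.sum_range_succ]
      have h1 : (1 : ℤ) ≤ 100 ^ n := one_le_pow₀ (by norm_num)
      have e := abs_le.1 (hE n)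
      have q := abs_le.1 (hQ n)
      have i := abs_le.1 ih
      rw [pow_succ]
      refine abs_le.2 ⟨?_, ?_⟩ <;> nlinarith
  induction n with
  | zero => simpa using h
  | succ n ih =>
    rw [Finset.sum_range_succ] at h
    have h1 : (1 : ℤ) ≤ 100 ^ n := one_le_pow₀ (by norm_num)
    have e := abs_le.1 (hE n)
    have b := abs_le.1 (bound n)
    have j' := abs_le.1 hj
    have hq : Q n = 0 := by
      rcases lt_trichotomy (Q n) 0 with hq | hq | hq
      · exfalso
        have : Q n ≤ -1 := by omega
        rw [pow_succ] at h
        nlinarith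
      · exact hq
      · exfalso
        have : 1 ≤ Q n := by omega
        rw [pow_succ] at h
        nlinarith
    obtain ⟨hj0, hall⟩ := ih (by rw [hq, h0 n hq] at h; linarith)
    refine ⟨hj0, fun k hk => ?_⟩
    rcases Nat.lt_succ_iff_lt_or_eq.1 hk with hk | rfl
    · exact hall k hk
    · exact hq

lemma lead_diff : ∀ u v : ZMod 4, |lead u - lead v| ≤ 11 ∧ |pert u - pert v| ≤ 1 ∧
    (lead u = lead v → u = v) := by
  decide

lemma lead_double : ∀ u v u' v' : ZMod 4,
    2 * (lead u - lead v) = lead u' - lead v' → u = v ∧ u' = v' := by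
  decide

lemma travel_inj {γ γ' : ℕ →₀ ZMod 4} {ω : Base} (h : travel γ ω = travel γ' ω) : γ = γ' := by
  obtain ⟨N, hN, hN'⟩ := exists_range γ γ'
  rw [travel_eq_range hN, travel_eq_range hN', ← sub_eq_zero, ← Finset.sum_sub_distrib] at h
  obtain ⟨-, H⟩ := lacunary (fun k => lead (γ k + ω k) - lead (γ' k + ω k))
    (fun k => pert (γ k + ω k) - pert (γ' k + ω k))
    (fun k => (lead_diff _ _).2.1.trans (by norm_num))
    (fun k => (lead_diff _ _).1.trans (by norm_num))
    (fun k hk => by rw [(lead_diff _ _).2.2 (sub_eq_zero.1 hk), sub_self]) 0 (by simp) N (by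
      rw [add_zero, ← h]
      refine Finset.sum_congr rfl fun k _ => ?_
      simp only [pos]
      ring)
  ext k
  by_cases hk : k < N
  · have := (lead_diff _ _).2.2 (sub_eq_zero.1 (H k hk))
    exact add_right_cancel this
  · have h1 : γ k = 0 := Finsupp.notMem_support_iff.1 fun h => hk (Finset.mem_range.1 (hN h))
    have h2 : γ' k = 0 := Finsupp.notMem_support_iff.1 fun h => hk (Finset.mem_range.1 (hN' h))
    rw [h1, h2]

/-- A return time `m ≠ 0` is never half of another one, even up to an error of `1`. This is where
the choice of the coefficients `lead` enters. -/
lemma travel_double {γ γ' : ℕ →₀ ZMod 4} {ω ω' : Base} {j : ℤ} (hj : |j| ≤ 1)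
    (h : travel γ' ω' = 2 * travel γ ω + j) : travel γ ω = 0 ∧ j = 0 := by
  obtain ⟨N, hN, hN'⟩ := exists_range γ γ'
  rw [travel_eq_range hN, travel_eq_range hN', Finset.mul_sum] at h
  obtain ⟨h0, H⟩ := lacunary
    (fun k => 2 * (lead (γ k + ω k) - lead (ω k)) - (lead (γ' k + ω' k) - lead (ω' k)))
    (fun k => 2 * (pert (γ k + ω k) - pert (ω k)) - (pert (γ' k + ω' k) - pert (ω' k)))
    (fun k => by
      have h1 := abs_le.1 (lead_diff (γ k + ω k) (ω k)).2.1
      have h2 := abs_le.1 (lead_diff (γ' k + ω' k) (ω' k)).2.1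
      exact abs_le.2 ⟨by linarith, by linarith⟩)
    (fun k => by
      have h1 := abs_le.1 (lead_diff (γ k + ω k) (ω k)).1
      have h2 := abs_le.1 (lead_diff (γ' k + ω' k) (ω' k)).1
      exact abs_le.2 ⟨by linarith, by linarith⟩)
    (fun k hk => by
      obtain ⟨h1, h2⟩ := lead_double _ _ _ _ (sub_eq_zero.1 hk)
      rw [h1, h2]; ring) j hj N (by
      rw [← sub_eq_zero.2 h.symm, add_sub_right_comm, ← Finset.sum_sub_distrib]
      congr 1
      refine Finset.sum_congr rfl fun k _ => ?_
      simp only [pos]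
      ring)
  refine ⟨?_, h0⟩
  rw [travel_eq_range hN]
  refine Finset.sum_eq_zero fun k hk => ?_
  rw [(lead_double _ _ _ _ (sub_eq_zero.1 (H k (Finset.mem_range.1 hk)))).1, sub_self]

lemma measurable_travel (γ : ℕ →₀ ZMod 4) : Measurable (travel γ) := by
  unfold travel
  refine Finset.measurable_sum _ fun k _ => ?_
  exact (measurable_of_countable fun d : ZMod 4 => pos k (γ k + d) - pos k d).comp
    (measurable_pi_apply k)

/-! ### The invariant measure on the space of return-time sets -/

/-- The Haar probability measure on the base. -/
noncomputable def haar : Measure Base := Measure.addHaarMeasure ⊤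

instance : IsProbabilityMeasure haar := ⟨by
  have := Measure.addHaarMeasure_self (K₀ := (⊤ : TopologicalSpace.PositiveCompacts Base))
  simpa [haar] using this⟩

instance : haar.IsAddLeftInvariant := by unfold haar; infer_instance

/-- The phase space: subsets of `ℤ`. A point is recorded as its set of visiting times to the
base. -/
abbrev Phase : Type := ℤ → Prop

/-- Translation by `m`, the `m`-th power of the transformation. -/
def shift (m : ℤ) : Phase ≃ᵐ Phase where
  toFun x j := x (j + m)
  invFun x j := x (j - m)
  left_inv x := by ext j; simp
  right_inv x := by ext j; simp
  measurable_toFun := measurable_pi_iff.2 fun j => measurable_pi_apply (j + m)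
  measurable_invFun := measurable_pi_iff.2 fun j => measurable_pi_apply (j - m)

lemma shift_apply (m : ℤ) (x : Phase) (j : ℤ) : shift m x j = x (j + m) := rfl

lemma shift_shift (m m' : ℤ) (x : Phase) : shift m (shift m' x) = shift (m + m') x := by
  ext j; simp [shift_apply, add_assoc]

lemma shift_iterate (n : ℕ) (x : Phase) : (shift 1)^[n] x = shift n x := by
  induction n with
  | zero => ext j; simp [shift_apply]
  | succ n ih => rw [Function.iterate_succ_apply', ih, shift_shift]; congr 2; push_cast; ring

/-- The embedding of the base in the phase space: the set of all travel times from `ω` to points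
of its tail equivalence class. -/
def code (ω : Base) : Phase := fun j => ∃ γ, travel γ ω = j

lemma code_add (γ : ℕ →₀ ZMod 4) (ω : Base) : code (⇑γ + ω) = shift (travel γ ω) (code ω) := by
  ext j
  simp only [code, shift_apply]
  constructor
  · rintro ⟨γ', rfl⟩
    exact ⟨γ' + γ, travel_add _ _ _⟩
  · rintro ⟨γ', h⟩
    refine ⟨γ' + -γ, ?_⟩
    have := travel_add (γ' + -γ) γ ω
    rw [neg_add_cancel_right, h] at this
    linarith

lemma code_zero (ω : Base) : code ω 0 := ⟨0, travel_zero ω⟩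

lemma measurable_code : Measurable code := by
  refine measurable_pi_iff.2 fun j => ?_
  rw [← measurableSet_setOfPred]
  simp only [code, Set.ofPred_exists]
  exact MeasurableSet.iUnion fun γ => measurable_travel γ (measurableSet_singleton j)

/-- The points which visit the base at time `j`. -/
def visit (j : ℤ) : Set Phase := {x | x j}

lemma measurableSet_visit (j : ℤ) : MeasurableSet (visit j) :=
  measurableSet_setOfPred.2 (measurable_pi_apply j)

/-- The measure on the base, carried to the phase space. -/
noncomputable def baseMeasure : Measure Phase := haar.map code

instance : IsProbabilityMeasure baseMeasure :=
  Measure.isProbabilityMeasure_map measurable_code.aemeasurable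

/-- The measure of a set of base points which visit the base at time `m`, as a sum over the
element `γ` responsible for that visit. -/
lemma haar_visit (m : ℤ) {E : Set Base} (hE : MeasurableSet E) :
    haar {ω | code ω m ∧ ω ∈ E} = ∑' γ, haar {ω | travel γ ω = m ∧ ω ∈ E} := by
  rw [← measure_iUnion]
  · congr 1
    ext ω
    simp [code]
  · intro γ γ' hne
    refine Set.disjoint_left.2 fun ω h h' => hne (travel_inj (h.1.trans h'.1.symm))
  · exact fun γ => (measurable_travel γ (measurableSet_singleton m)).inter hE

/-- The base measure is invariant under the partial maps induced by the powers of the shift. -/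
lemma baseMeasure_partial (m : ℤ) {E : Set Phase} (hE : MeasurableSet E) :
    baseMeasure {x | x m ∧ shift m x ∈ E} = baseMeasure {y | y (-m) ∧ y ∈ E} := by
  rw [baseMeasure, Measure.map_apply measurable_code, Measure.map_apply measurable_code]
  rotate_left
  · exact (measurableSet_visit _).inter hE
  · exact (measurableSet_visit _).inter ((shift m).measurable hE)
  have hE' : MeasurableSet (code ⁻¹' (shift m ⁻¹' E)) :=
    measurable_code ((shift m).measurable hE)
  refine (haar_visit m hE').trans (Eq.trans ?_ (haar_visit (-m) (measurable_code hE)).symm)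
  rw [← (Equiv.neg (ℕ →₀ ZMod 4)).tsum_eq]
  refine tsum_congr fun γ => ?_
  rw [← measure_preimage_add haar (⇑γ) {ω | travel (Equiv.neg _ γ) ω = m ∧ _}]
  congr 1
  ext ω
  simp only [Set.preimage, Set.mem_ofPred_eq, Equiv.neg_apply, travel_neg, code_add, neg_eq_iff_eq_neg]
  refine and_congr_right fun h => ?_
  rw [h, shift_shift]
  have : shift (m + -m) (code ω) = code ω := by ext j; simp [shift_apply]
  rw [this]

/-- The base measure carried to the set of points visiting the base at time `j`. -/
noncomputable def visitMeasure (j : ℤ) : Measure Phase := baseMeasure.map (shift (-j))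

instance (j : ℤ) : IsProbabilityMeasure (visitMeasure j) :=
  Measure.isProbabilityMeasure_map (shift (-j)).measurable.aemeasurable

lemma visitMeasure_apply (j : ℤ) (E : Set Phase) :
    visitMeasure j E = baseMeasure {x | shift (-j) x ∈ E} :=
  (shift (-j)).map_apply E

lemma visitMeasure_restrict (j : ℤ) : (visitMeasure j).restrict (visit j) = visitMeasure j := by
  refine Measure.restrict_eq_self_of_ae_mem ?_
  rw [visitMeasure, baseMeasure, Measure.map_map (shift _).measurable measurable_code]
  refine (ae_map_iff (p := (· ∈ visit j)) ((shift _).measurable.comp measurable_code).aemeasurable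
    (measurableSet_visit j)).2 (ae_of_all _ fun ω => ?_)
  simpa [visit, shift_apply] using code_zero ω

/-- The measures on different translates of the base agree where they overlap. -/
lemma visitMeasure_compat (i j : ℤ) {F : Set Phase} (hF : MeasurableSet F)
    (hi : F ⊆ visit i) (hj : F ⊆ visit j) : visitMeasure i F = visitMeasure j F := by
  have := baseMeasure_partial (j - i) ((shift (-j)).measurable hF)
  rw [visitMeasure_apply, visitMeasure_apply]
  convert this using 2
  · ext x
    simp only [Set.mem_ofPred_eq, Set.mem_preimage, shift_shift]
    have e : -j + (j - i) = -i := by ring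
    rw [e]
    refine ⟨fun h => ⟨?_, h⟩, fun h => h.2⟩
    have := hj h
    rw [visit, Set.mem_ofPred_eq, shift_apply] at this
    rwa [sub_eq_add_neg]
  · ext x
    simp only [Set.mem_ofPred_eq, Set.mem_preimage]
    refine ⟨fun h => ⟨?_, h⟩, fun h => h.2⟩
    have := hi h
    rw [visit, Set.mem_ofPred_eq, shift_apply] at this
    rwa [neg_sub, sub_eq_add_neg]

/-- A partition of the union of all translates of the base, the `n`-th piece of which is contained
in the `n`-th translate. -/
def piece : ℕ → Set Phase := disjointed fun n => visit (Equiv.intEquivNat.symm n)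

lemma measurableSet_piece (n : ℕ) : MeasurableSet (piece n) :=
  MeasurableSet.disjointed (fun _ => measurableSet_visit _) n

lemma piece_subset (n : ℕ) : piece n ⊆ visit (Equiv.intEquivNat.symm n) := disjointed_subset _ _

lemma iUnion_piece : ⋃ n, piece n = ⋃ j, visit j := by
  rw [piece, iUnion_disjointed]
  exact Equiv.intEquivNat.symm.surjective.iUnion_comp visit

/-- The invariant measure, glued from the measures on the translates of the base. -/
noncomputable def phaseMeasure : Measure Phase :=
  Measure.sum fun n => (visitMeasure (Equiv.intEquivNat.symm n)).restrict (piece n)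

lemma phaseMeasure_restrict (j : ℤ) : phaseMeasure.restrict (visit j) = visitMeasure j := by
  rw [← visitMeasure_restrict j]
  ext E hE
  have hEj := hE.inter (measurableSet_visit j)
  rw [Measure.restrict_apply hE, Measure.restrict_apply hE, phaseMeasure, Measure.sum_apply _ hEj]
  have : E ∩ visit j = ⋃ n, (E ∩ visit j) ∩ piece n := by
    rw [← Set.inter_iUnion, iUnion_piece]
    exact (Set.inter_eq_left.2 fun x hx => Set.mem_iUnion.2 ⟨j, hx.2⟩).symm
  conv_rhs => rw [this]
  rw [measure_iUnion]
  · refine tsum_congr fun n => ?_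
    rw [Measure.restrict_apply hEj]
    exact visitMeasure_compat _ _ (hEj.inter (measurableSet_piece n))
      (fun x hx => piece_subset n hx.2) (fun x hx => hx.1.2)
  · intro n n' h
    exact (disjoint_disjointed _ h).mono Set.inter_subset_right Set.inter_subset_right
  · exact fun n => hEj.inter (measurableSet_piece n)

lemma phaseMeasure_visit (j : ℤ) : phaseMeasure (visit j) = 1 := by
  have := congrArg (fun m : Measure Phase => m Set.univ) (phaseMeasure_restrict j)
  simpa using this

lemma phaseMeasure_ae : ∀ᵐ x ∂phaseMeasure, x ∈ ⋃ j, visit j := by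
  rw [phaseMeasure, ← iUnion_piece, Measure.ae_sum_iff]
  intro n
  filter_upwards [ae_restrict_mem (measurableSet_piece n)] with x hx
  exact Set.mem_iUnion.2 ⟨n, hx⟩

instance : SigmaFinite phaseMeasure := by
  refine Measure.sigmaFinite_of_countable (S := insert (⋃ j, visit j)ᶜ (Set.range visit))
    ((Set.countable_range _).insert _) ?_ ?_
  · rintro s (rfl | ⟨j, rfl⟩)
    · exact (mem_ae_iff.1 phaseMeasure_ae : phaseMeasure (⋃ j, visit j)ᶜ = 0) ▸ ENNReal.zero_lt_top
    · rw [phaseMeasure_visit]; simp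
  · rw [Set.sUnion_insert, Set.sUnion_range, Set.compl_union_self]

lemma phaseMeasure_shift (m : ℤ) : MeasurePreserving (shift m) phaseMeasure phaseMeasure := by
  refine ⟨(shift m).measurable, ?_⟩
  have h1 : ∀ᵐ x ∂phaseMeasure.map (shift m), x ∈ ⋃ j, visit j := by
    refine (ae_map_iff (p := (· ∈ ⋃ j, visit j)) (shift m).measurable.aemeasurable
      (MeasurableSet.iUnion measurableSet_visit)).2 ?_
    filter_upwards [phaseMeasure_ae] with x hx
    obtain ⟨j, hj⟩ := Set.mem_iUnion.1 hx
    refine Set.mem_iUnion.2 ⟨j - m, ?_⟩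
    simpa [visit, shift_apply] using hj
  refine (Measure.restrict_eq_self_of_ae_mem h1).symm.trans (Eq.trans ?_
    (Measure.restrict_eq_self_of_ae_mem phaseMeasure_ae))
  refine Measure.restrict_iUnion_congr.2 fun j => ?_
  rw [phaseMeasure_restrict, Measure.restrict_map (shift m).measurable (measurableSet_visit j)]
  have : shift m ⁻¹' visit j = visit (j + m) := rfl
  rw [this, phaseMeasure_restrict, visitMeasure, visitMeasure,
    Measure.map_map (shift m).measurable (shift _).measurable]
  congr 1
  ext x i
  simp [shift_apply, add_assoc]

lemma code_double {ω ω' : Base} {m j : ℤ} (hj : |j| ≤ 1) (h : code ω m) (h' : code ω' (2 * m + j)) :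
    m = 0 ∧ j = 0 := by
  obtain ⟨γ, rfl⟩ := h
  obtain ⟨γ', h'⟩ := h'
  exact travel_double hj h'

/-- A point mass on the base would be carried by two distinct translations to the same point, which
would then be periodic; but a period `m` is a return time for which `2 * m` is one as well. -/
lemma baseMeasure_singleton (y : Phase) : baseMeasure {y} = 0 := by
  rw [baseMeasure, Measure.map_apply measurable_code (measurableSet_singleton y)]
  by_contra hne
  have hm : MeasurableSet (code ⁻¹' {y}) := measurable_code (measurableSet_singleton y)
  obtain ⟨γ, γ', hγ, ω, h1, h2⟩ := exists_nonempty_inter_of_measure_univ_lt_tsum_measure haar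
    (s := fun γ : ℕ →₀ ZMod 4 => (fun ω => ⇑γ + ω) ⁻¹' (code ⁻¹' {y}))
    (fun γ => ((measurable_const_add _) hm).nullMeasurableSet) (by
      simp only [measure_preimage_add]
      have : Infinite (ℕ →₀ ZMod 4) :=
        Infinite.of_injective _ (Finsupp.single_left_injective (by decide : (1 : ZMod 4) ≠ 0))
      rw [ENNReal.tsum_const_eq_top_of_ne_zero hne]
      simp)
  simp only [Set.mem_preimage, Set.mem_singleton_iff, code_add] at h1 h2
  have hy : code (⇑γ + ω) = y := by rw [code_add, h1]
  have hper : shift (travel γ ω - travel γ' ω) y = y := by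
    conv_lhs => rw [← h2]
    rw [shift_shift, sub_add_cancel, h1]
  have e0 : y 0 := hy ▸ code_zero _
  have e1 : y (travel γ ω - travel γ' ω) := by
    rw [← hper, shift_apply] at e0
    simpa using e0
  have e2 : y (2 * (travel γ ω - travel γ' ω) + 0) := by
    have := e1
    rw [← hper, shift_apply] at this
    rw [two_mul, add_zero]
    exact this
  rw [← hy] at e1 e2
  exact hγ (travel_inj (sub_eq_zero.1 (code_double (by simp) e1 e2).1))

instance nullSingletonClass_phaseMeasure : NullSingletonClass phaseMeasure := ⟨fun x => by
  by_cases hx : x ∈ ⋃ j, visit j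
  · obtain ⟨j, hj⟩ := Set.mem_iUnion.1 hx
    have h : phaseMeasure.restrict (visit j) {x} = phaseMeasure {x} := by
      rw [Measure.restrict_apply (measurableSet_singleton x),
        Set.inter_eq_left.2 (Set.singleton_subset_iff.2 hj)]
    rw [← h, phaseMeasure_restrict, visitMeasure_apply]
    convert! baseMeasure_singleton (shift j x) using 2
    ext y
    simp only [Set.mem_ofPred_eq, Set.mem_singleton_iff]
    constructor
    · rintro rfl
      ext i; simp [shift_apply]
    · rintro rfl
      ext i; simp [shift_apply]
  · refine measure_mono_null (Set.singleton_subset_iff.2 ?_) (mem_ae_iff.1 phaseMeasure_ae)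
    exact hx⟩

/-! ### Failure of conservativity for the product of the first two powers -/

/-- Translates of the base overlap only if their distance is a return time. -/
lemma exists_code {i j : ℤ} (h : phaseMeasure (visit i ∩ visit j) ≠ 0) : ∃ ω, code ω (j - i) := by
  by_contra! hno
  refine h ?_
  have e : phaseMeasure.restrict (visit i) (visit j) = phaseMeasure (visit i ∩ visit j) := by
    rw [Measure.restrict_apply (measurableSet_visit j), Set.inter_comm]
  rw [← e, phaseMeasure_restrict, visitMeasure_apply, baseMeasure,
    Measure.map_apply (s := {x | shift (-i) x ∈ visit j}) measurable_code
      ((shift (-i)).measurable (measurableSet_visit j))]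
  convert measure_empty (μ := haar) using 2
  exact Set.eq_empty_iff_forall_notMem.2 fun ω hω => hno ω hω

/-- The product of the transformation with its square. -/
def prodSq : Phase × Phase → Phase × Phase := fun z => (shift 1 z.1, shift 1 (shift 1 z.2))

lemma prodSq_iterate (n : ℕ) (z : Phase × Phase) :
    prodSq^[n] z = (shift n z.1, shift (2 * n) z.2) := by
  induction n with
  | zero => ext j <;> simp [shift_apply]
  | succ n ih =>
    rw [Function.iterate_succ_apply', ih, prodSq]
    simp only [shift_shift]
    congr 3 <;> push_cast <;> ring

lemma wandering {n : ℕ} (hn : 0 < n) :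
    (phaseMeasure.prod phaseMeasure)
      (prodSq^[n] ⁻¹' (visit 0 ×ˢ visit 0) ∩ visit 0 ×ˢ visit 0) = 0 := by
  have e : prodSq^[n] ⁻¹' (visit 0 ×ˢ visit 0) ∩ visit 0 ×ˢ visit 0
      = (visit 0 ∩ visit n) ×ˢ (visit 0 ∩ visit (2 * n)) := by
    ext z
    simp only [visit, Set.mem_inter_iff, Set.mem_preimage, Set.mem_prod, prodSq_iterate,
      Set.mem_ofPred_eq, shift_apply, zero_add]
    tauto
  rw [e, Measure.prod_prod, mul_eq_zero]
  by_contra! h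
  obtain ⟨ω, h1⟩ := exists_code h.1
  obtain ⟨ω', h2⟩ := exists_code h.2
  rw [sub_zero] at h1 h2
  have := (code_double (j := 0) (by simp) h1 (by simpa using h2)).1
  omega

lemma measurePreserving_prodSq :
    MeasurePreserving prodSq (phaseMeasure.prod phaseMeasure) (phaseMeasure.prod phaseMeasure) :=
  (phaseMeasure_shift 1).prod ((phaseMeasure_shift 1).comp (phaseMeasure_shift 1))

lemma prod_visit :
    (phaseMeasure.prod phaseMeasure) (visit 0 ×ˢ visit 0) = 1 := by
  rw [Measure.prod_prod, phaseMeasure_visit, one_mul]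

/-- The measure is infinite, since otherwise Poincaré recurrence would apply to the product of the
transformation with its square. -/
lemma phaseMeasure_univ : phaseMeasure Set.univ = ⊤ := by
  by_contra h
  have : IsFiniteMeasure phaseMeasure := ⟨lt_top_iff_ne_top.2 h⟩
  obtain ⟨n, hn, hne⟩ := (measurePreserving_prodSq.conservative).exists_gt_measure_inter_ne_zero
    ((measurableSet_visit 0).prod (measurableSet_visit 0)).nullMeasurableSet
    (by rw [prod_visit]; exact one_ne_zero) 0
  rw [Set.inter_comm] at hne
  exact hne (wandering hn)

/-- The orbit of the square over the base is an invariant set which misses almost all of another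
translate of that square. -/
lemma not_ergodic_square (e : Fin 2 → ℤ) (he : e = ![1, 2]) :
    ∃ A : Set (Fin 2 → Phase), MeasurableSet A ∧
      (fun x : Fin 2 → Phase => fun i => ((shift 1).toEquiv ^ e i : Equiv.Perm Phase) (x i)) ⁻¹' A
        = A ∧
      (Measure.pi fun _ : Fin 2 => phaseMeasure) A ≠ 0 ∧
      (Measure.pi fun _ : Fin 2 => phaseMeasure) Aᶜ ≠ 0 := by
  have hB : ∀ i j : ℤ, MeasurableSet {x : Fin 2 → Phase | x 0 ∈ visit i ∧ x 1 ∈ visit j} :=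
    fun i j => ((measurable_pi_apply (X := fun _ : Fin 2 => Phase) 0) (measurableSet_visit i)).inter
      ((measurable_pi_apply (X := fun _ : Fin 2 => Phase) 1) (measurableSet_visit j))
  have hμ : ∀ U V : Set Phase, (Measure.pi fun _ : Fin 2 => phaseMeasure)
      {x : Fin 2 → Phase | x 0 ∈ U ∧ x 1 ∈ V} = phaseMeasure U * phaseMeasure V := by
    intro U V
    have : {x : Fin 2 → Phase | x 0 ∈ U ∧ x 1 ∈ V} = Set.univ.pi ![U, V] := by
      ext x; simp [Fin.forall_fin_two]
    rw [this, Measure.pi_pi]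
    simp
  refine ⟨⋃ p : ℤ, {x | x 0 ∈ visit p ∧ x 1 ∈ visit (2 * p)}, MeasurableSet.iUnion fun p => hB _ _,
    ?_, ?_, ?_⟩
  · subst he
    ext x
    simp only [Set.mem_preimage, Set.mem_iUnion, Set.mem_ofPred_eq, visit]
    refine (Equiv.addRight (1 : ℤ)).exists_congr fun p => ?_
    have : 2 * (p + 1) = 2 * p + 1 + 1 := by ring
    simp only [Equiv.coe_addRight, this]
    rfl
  · intro h
    have := measure_mono_null (Set.subset_iUnion _ 0) h
    rw [hμ] at this
    simp [phaseMeasure_visit] at this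
  · intro h
    have h1 : (Measure.pi fun _ : Fin 2 => phaseMeasure)
        {x : Fin 2 → Phase | x 0 ∈ visit 0 ∧ x 1 ∈ visit 1} = 1 := by
      rw [hμ, phaseMeasure_visit, phaseMeasure_visit, one_mul]
    rw [← measure_inter_add_sdiff {x : Fin 2 → Phase | x 0 ∈ visit 0 ∧ x 1 ∈ visit 1} (MeasurableSet.iUnion fun p : ℤ => hB p (2 * p)),
      measure_mono_null (s := _ \ _) (fun x hx => hx.2) h, add_zero, Set.inter_iUnion] at h1
    rw [(measure_iUnion_null_iff).2] at h1
    · exact zero_ne_one h1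
    intro p
    have : {x : Fin 2 → Phase | x 0 ∈ visit 0 ∧ x 1 ∈ visit 1} ∩
        {x | x 0 ∈ visit p ∧ x 1 ∈ visit (2 * p)} =
        {x | x 0 ∈ visit 0 ∩ visit p ∧ x 1 ∈ visit 1 ∩ visit (2 * p)} := by
      ext x
      simp only [Set.mem_inter_iff, Set.mem_ofPred_eq]
      tauto
    rw [this, hμ, mul_eq_zero]
    by_contra! h
    obtain ⟨ω, h1⟩ := exists_code h.1
    obtain ⟨ω', h2⟩ := exists_code h.2
    rw [sub_zero] at h1
    have := (code_double (j := -1) (by simp) h1 (by simpa [sub_eq_add_neg] using h2)).2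
    omega

/-! ### Ergodicity of the Cartesian powers -/

/-- The product of the Haar measures on `n` copies of the base. -/
noncomputable abbrev haarPow (n : ℕ) : Measure (Fin n → Base) := Measure.pi fun _ => haar

instance (n : ℕ) : (haarPow n).IsAddLeftInvariant :=
  Measure.pi.isAddLeftInvariant (μ := fun _ : Fin n => haar)

instance (n : ℕ) : ErgodicVAdd (Fin n → Base) (Fin n → Base) (haarPow n) :=
  instErgodicVAddOfIsAddLeftInvariant (G := Fin n → Base) (μ := haarPow n)

/-- The element with digit `h i` at place `k` in the `i`-th coordinate, and zeros elsewhere. -/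
def atPlace {n : ℕ} (h : Fin n → ZMod 4) (k : ℕ) : Fin n → Base := fun i => Pi.single k (h i)

lemma tendsto_atPlace {n : ℕ} (h : Fin n → ZMod 4) : Tendsto (atPlace h) atTop (𝓝 0) := by
  refine tendsto_pi_nhds.2 fun i => tendsto_pi_nhds.2 fun l => ?_
  refine tendsto_const_nhds.congr' ?_
  filter_upwards [eventually_gt_atTop l] with k hk
  simp [atPlace, hk.ne]

/-- Changing far away digits moves a measurable set very little. -/
lemma tendsto_symmDiff {n : ℕ} (h : Fin n → ZMod 4) {E : Set (Fin n → Base)}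
    (hE : MeasurableSet E) :
    Tendsto (fun k => haarPow n (((atPlace h k + ·) ⁻¹' E) ∆ E)) atTop (𝓝 0) := by
  let f : C((Fin n → Base) × (Fin n → Base), Fin n → Base) := ⟨fun p => p.1 + p.2, continuous_add⟩
  have h1 : Tendsto (fun k => f.curry (atPlace h k)) atTop (𝓝 (f.curry 0)) :=
    (f.curry.continuous.tendsto 0).comp (tendsto_atPlace h)
  have h2 := tendsto_measure_symmDiff_preimage_nhds_zero (μ := haarPow n) (ν := haarPow n) h1
    (Eventually.of_forall fun k => measurePreserving_add_left _ (atPlace h k))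
    (measurePreserving_add_left _ 0) hE.nullMeasurableSet (measure_ne_top _ _)
  have h3 : f.curry 0 ⁻¹' E = E := by
    ext x
    simp [f]
  rw [h3] at h2
  exact h2

/-- Suppose that for every place `k`, on the event that the `k`-th digits are `g`,
membership in `A` is equivalent to membership in `B` after adding `h` to the `k`-th digits. Then
`A` and `B` agree, because the change of the digits is negligible and the event has, even
conditionally on any given set, asymptotic probability bounded below. -/
lemma ae_eq_of_places {n : ℕ} (g h : Fin n → ZMod 4) {A B : Set (Fin n → Base)}
    (hA : MeasurableSet A) (hB : MeasurableSet B)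
    (H : ∀ k, ∀ᵐ ω ∂haarPow n, (∀ i, ω i k = g i) → (ω ∈ A ↔ atPlace h k + ω ∈ B)) :
    A =ᵐ[haarPow n] B := by
  rw [← measure_symmDiff_eq_zero_iff]
  set E := A ∆ B with hEdef
  have hE : MeasurableSet E := hA.symmDiff hB
  let G : ℕ → Set (Fin n → Base) := fun k => {ω | ∀ i, ω i k = g i}
  have hG : ∀ k, MeasurableSet (G k) := by
    intro k
    have : G k = ⋂ i, {ω | ω i k = g i} := by ext; simp [G]
    rw [this]
    refine MeasurableSet.iInter fun i => ?_
    have hm : Measurable fun ω : Fin n → Base => ω i k :=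
      (measurable_pi_apply k).comp (measurable_pi_apply i)
    exact hm (measurableSet_singleton (g i))
  have key : ∀ k, haarPow n E ≤ ∑ u : Fin n → ZMod 4,
      (haarPow n (((atPlace h k + ·) ⁻¹' B) ∆ B) + haarPow n (((atPlace u k + ·) ⁻¹' E) ∆ E)) := by
    intro k
    have hEG : haarPow n (E ∩ G k) ≤ haarPow n (((atPlace h k + ·) ⁻¹' B) ∆ B) := by
      refine measure_mono_ae ?_
      filter_upwards [H k] with ω hω hωE
      have := hω hωE.2
      have h' : ω ∈ A ∆ B := hωE.1
      change ω ∈ ((atPlace h k + ·) ⁻¹' B) ∆ B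
      rw [Set.mem_symmDiff] at h' ⊢
      rw [Set.mem_preimage]
      tauto
    have hcover : E ⊆ ⋃ u : Fin n → ZMod 4, E ∩ (atPlace u k + ·) ⁻¹' G k := by
      intro ω hω
      refine Set.mem_iUnion.2 ⟨fun i => g i - ω i k, hω, fun i => ?_⟩
      simp [atPlace]
    calc haarPow n E ≤ ∑ u : Fin n → ZMod 4, haarPow n (E ∩ (atPlace u k + ·) ⁻¹' G k) :=
          (measure_mono hcover).trans (measure_iUnion_fintype_le _ _)
      _ ≤ _ := Finset.sum_le_sum fun u _ => ?_
    calc haarPow n (E ∩ (atPlace u k + ·) ⁻¹' G k)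
        ≤ haarPow n ((atPlace u k + ·) ⁻¹' (E ∩ G k) ∪ ((atPlace u k + ·) ⁻¹' E) ∆ E) := by
          refine measure_mono fun ω hω => ?_
          by_cases h' : atPlace u k + ω ∈ E
          · exact Or.inl ⟨h', hω.2⟩
          · exact Or.inr (Or.inr ⟨hω.1, h'⟩)
      _ ≤ haarPow n ((atPlace u k + ·) ⁻¹' (E ∩ G k)) + _ := measure_union_le _ _
      _ ≤ _ := by
          rw [measure_preimage_add]
          gcongr
  have lim : Tendsto (fun k => ∑ u : Fin n → ZMod 4,
      (haarPow n (((atPlace h k + ·) ⁻¹' B) ∆ B) + haarPow n (((atPlace u k + ·) ⁻¹' E) ∆ E)))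
      atTop (𝓝 (∑ u : Fin n → ZMod 4, (0 + 0))) :=
    tendsto_finsetSum _ fun u _ => (tendsto_symmDiff h hB).add (tendsto_symmDiff u hE)
  have := ge_of_tendsto' lim key
  simpa using this

lemma denseRange_coe : DenseRange (fun γ : ℕ →₀ ZMod 4 => (γ : Base)) := by
  intro ω
  refine mem_closure_of_tendsto (b := atTop)
    (f := fun N : ℕ => ((∑ k ∈ Finset.range N, Finsupp.single k (ω k) : ℕ →₀ ZMod 4) : Base)) ?_
    (Eventually.of_forall fun N => ⟨_, rfl⟩)
  refine tendsto_pi_nhds.2 fun l => tendsto_const_nhds.congr' ?_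
  filter_upwards [eventually_gt_atTop l] with N hN
  simp [Finsupp.finsetSum_apply, Finsupp.single_apply, hN]

/-- The parametrization of the box with corners `m i` in the Cartesian power of the phase space
by the Cartesian power of the base. -/
def box {n : ℕ} (m : Fin n → ℤ) (ω : Fin n → Base) : Fin n → Phase :=
  fun i => shift (m i) (code (ω i))

lemma measurable_box {n : ℕ} (m : Fin n → ℤ) : Measurable (box m) :=
  measurable_pi_iff.2 fun i =>
    (shift (m i)).measurable.comp (measurable_code.comp (measurable_pi_apply i))

lemma map_box {n : ℕ} (m : Fin n → ℤ) : (haarPow n).map (box m) =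
    (Measure.pi fun _ : Fin n => phaseMeasure).restrict (Set.univ.pi fun i => visit (-m i)) := by
  have e : ∀ i, haar.map (shift (m i) ∘ code) = visitMeasure (-m i) := fun i => by
    rw [visitMeasure, baseMeasure, Measure.map_map (shift _).measurable measurable_code, neg_neg]
  have : ∀ i, SigmaFinite (haar.map (shift (m i) ∘ code)) := fun i => by rw [e]; infer_instance
  rw [Measure.restrict_pi_pi]
  simp only [phaseMeasure_restrict, ← e]
  exact Measure.pi_map_pi fun i => ((shift (m i)).measurable.comp measurable_code).aemeasurable

lemma quasi_box {n : ℕ} (m : Fin n → ℤ) :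
    Measure.QuasiMeasurePreserving (box m) (haarPow n) (Measure.pi fun _ : Fin n => phaseMeasure) :=
  ⟨measurable_box m, by rw [map_box]; exact Measure.restrict_le_self.absolutelyContinuous⟩

/-- A set which is null on all boxes is null. -/
lemma null_of_box {n : ℕ} {A : Set (Fin n → Phase)} (hA : MeasurableSet A)
    (h : ∀ m, haarPow n (box m ⁻¹' A) = 0) : (Measure.pi fun _ : Fin n => phaseMeasure) A = 0 := by
  have hcov : ∀ᵐ x ∂(Measure.pi fun _ : Fin n => phaseMeasure), ∀ i, ∃ j, x i ∈ visit (-j) := by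
    refine ae_all_iff.2 fun i => ?_
    have := (Measure.quasiMeasurePreserving_eval (fun _ : Fin n => phaseMeasure) i).ae
      phaseMeasure_ae
    filter_upwards [this] with x hx
    obtain ⟨j, hj⟩ := Set.mem_iUnion.1 hx
    exact ⟨-j, by rwa [neg_neg]⟩
  have h2 : ∀ m : Fin n → ℤ, ∀ᵐ x ∂(Measure.pi fun _ : Fin n => phaseMeasure),
      ¬ (x ∈ A ∩ Set.univ.pi fun i => visit (-m i)) := by
    intro m
    refine measure_eq_zero_iff_ae_notMem.1 ?_
    rw [← Measure.restrict_apply hA, ← map_box, Measure.map_apply (measurable_box m) hA, h m]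
  refine measure_eq_zero_iff_ae_notMem.2 ?_
  filter_upwards [hcov, ae_all_iff.2 h2] with x hx hx2 hxA
  choose m hm using hx
  exact hx2 m ⟨hxA, fun i _ => hm i⟩

lemma pos_one (k : ℕ) : pos k (1 + 0) - pos k 0 = 100 ^ (k + 1) := by
  have h : lead (1 + 0) = 1 ∧ lead 0 = 0 ∧ pert (1 + 0) = 0 ∧ pert 0 = 0 := by decide
  rw [pos, pos, h.1, h.2.1, h.2.2.1, h.2.2.2]; ring

lemma pos_three (k : ℕ) : pos k (1 + 2) - pos k 2 = 100 ^ (k + 1) - 1 := by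
  have h : lead (1 + 2) = 11 ∧ lead 2 = 10 ∧ pert (1 + 2) = -1 ∧ pert 2 = 0 := by decide
  rw [pos, pos, h.1, h.2.1, h.2.2.1, h.2.2.2]; ring

/-- The diagonal transformation on the Cartesian power. -/
def diag (n : ℕ) : (Fin n → Phase) → (Fin n → Phase) := fun x i => shift 1 (x i)

lemma diag_iterate {n : ℕ} (p : ℕ) (x : Fin n → Phase) : (diag n)^[p] x = fun i => shift p (x i) := by
  induction p with
  | zero => ext i j; simp [shift_apply]
  | succ p ih =>
    rw [Function.iterate_succ_apply', ih]
    ext i j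
    simp [diag, shift_apply, add_comm, add_left_comm]

lemma measurePreserving_diag (n : ℕ) : MeasurePreserving (diag n)
    (Measure.pi fun _ : Fin n => phaseMeasure) (Measure.pi fun _ : Fin n => phaseMeasure) :=
  measurePreserving_pi _ _ fun _ => phaseMeasure_shift 1

/-- A set invariant under the diagonal action is invariant under moving a single coordinate: if the
`k`-th digit of the coordinate `i` is `2` and that of all others is `0`, the `100 ^ (k + 1)`-th
power raises all these digits by one, and moves the coordinate `i` one step further. -/
lemma box_single {n : ℕ} {A : Set (Fin n → Phase)} (hA : MeasurableSet A)
    (hinv : diag n ⁻¹' A =ᵐ[Measure.pi fun _ : Fin n => phaseMeasure] A) (i : Fin n)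
    (m : Fin n → ℤ) : box (m + Pi.single i 1) ⁻¹' A =ᵐ[haarPow n] box m ⁻¹' A := by
  refine (ae_eq_of_places (fun l => if l = i then 2 else 0) (fun _ => 1)
    (measurable_box m hA) (measurable_box _ hA) fun k => ?_).symm
  have h1 := (measurePreserving_diag n).quasiMeasurePreserving.preimage_iterate_ae_eq
    (100 ^ (k + 1)) hinv
  filter_upwards [(quasi_box m).ae h1.mem_iff] with ω hω hd
  rw [Set.mem_preimage, ← hω, Set.mem_preimage, Set.mem_preimage]
  have : (diag n)^[100 ^ (k + 1)] (box m ω) =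
      box (m + Pi.single i 1) (atPlace (fun _ => 1) k + ω) := by
    rw [diag_iterate]
    funext l
    have e : (atPlace (fun _ : Fin n => (1 : ZMod 4)) k + ω) l = ⇑(Finsupp.single k (1 : ZMod 4)) + ω l := by
      rw [Finsupp.single_eq_pi_single]; rfl
    rw [box, box, e, code_add, shift_shift, shift_shift, travel_single, hd l]
    congr 2
    by_cases hl : l = i
    · subst hl
      simp only [if_true, pos_three, Pi.add_apply, Pi.single_eq_same]
      push_cast
      ring
    · simp only [if_neg hl, pos_one, Pi.add_apply, Pi.single_eq_of_ne hl]
      push_cast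
      ring
  rw [this]

lemma box_all {n : ℕ} {A : Set (Fin n → Phase)} (hA : MeasurableSet A)
    (hinv : diag n ⁻¹' A =ᵐ[Measure.pi fun _ : Fin n => phaseMeasure] A)
    (m : Fin n → ℤ) : box m ⁻¹' A =ᵐ[haarPow n] box 0 ⁻¹' A := by
  let S : AddSubgroup (Fin n → ℤ) :=
    { carrier := {v | ∀ m, box (m + v) ⁻¹' A =ᵐ[haarPow n] box m ⁻¹' A}
      zero_mem' := fun m => by rw [add_zero]; exact EventuallyEq.rfl
      add_mem' := fun {a b} ha hb m => by
        rw [← add_assoc]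
        exact (hb (m + a)).trans (ha m)
      neg_mem' := fun {a} ha m => by
        have := ha (m + -a)
        rw [neg_add_cancel_right] at this
        exact this.symm }
  have hS : m ∈ S := by
    rw [← Finset.univ_sum_single m]
    refine S.sum_mem fun i _ => ?_
    have : Pi.single i (m i) = m i • (Pi.single i 1 : Fin n → ℤ) := by
      rw [← Pi.single_smul]; simp
    rw [this]
    exact S.zsmul_mem (fun m => box_single hA hinv i m) _
  have := hS 0
  rwa [zero_add] at this

lemma ergodic_diag {n : ℕ} {A : Set (Fin n → Phase)} (hA : MeasurableSet A)
    (hinv : diag n ⁻¹' A =ᵐ[Measure.pi fun _ : Fin n => phaseMeasure] A) :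
    (Measure.pi fun _ : Fin n => phaseMeasure) A = 0 ∨
      (Measure.pi fun _ : Fin n => phaseMeasure) Aᶜ = 0 := by
  have hall := box_all hA hinv
  have hconst : EventuallyConst (box 0 ⁻¹' A) (ae (haarPow n)) := by
    refine aeconst_of_dense_setOfPred_preimage_vadd_ae (M := Fin n → Base)
      (measurable_box 0 hA).nullMeasurableSet ?_
    have hd : DenseRange (fun (γ : Fin n → ℕ →₀ ZMod 4) (i : Fin n) => (γ i : Base)) :=
      DenseRange.piMap fun _ => denseRange_coe
    refine hd.mono ?_
    rintro _ ⟨γ, rfl⟩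
    have hall' : ∀ᵐ ω ∂haarPow n, ∀ m, (ω ∈ box m ⁻¹' A ↔ ω ∈ box 0 ⁻¹' A) :=
      ae_all_iff.2 fun m => (hall m).mem_iff
    change _ =ᵐ[haarPow n] _
    refine eventuallyEq_set.2 ?_
    filter_upwards [hall'] with ω hω
    rw [← hω fun i => travel (γ i) (ω i)]
    have : box 0 ((fun i => (γ i : Base)) + ω) = box (fun i => travel (γ i) (ω i)) ω := by
      funext i
      simp only [box, Pi.add_apply, code_add, Pi.zero_apply, shift_shift, zero_add]
    simp only [Set.mem_preimage, vadd_eq_add, this]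
  rcases eventuallyConst_set.1 hconst with h | h
  · right
    refine null_of_box hA.compl fun m => ?_
    have : box m ⁻¹' A =ᵐ[haarPow n] Set.univ := (hall m).trans (eventuallyEq_univ.2 h)
    rw [Set.preimage_compl]
    exact ae_eq_univ.1 this
  · left
    refine null_of_box hA fun m => ?_
    rw [measure_congr (hall m)]
    exact measure_eq_zero_iff_ae_notMem.2 h

end RankOne

theorem stmt9 :
    ∃ (X : Type) (_ : MeasurableSpace X) (_ : StandardBorelSpace X)
      (μ : Measure X) (_ : NoAtoms μ) (_ : SigmaFinite μ) (T : X ≃ᵐ X),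
      μ Set.univ = ⊤ ∧ MeasurePreserving T μ μ ∧
      (∀ n : ℕ, 0 < n →
        IsErgodicMap (Measure.pi fun _ : Fin n => μ)
          (fun x : Fin n → X => fun i => T (x i))) ∧
      ¬ IsConservativeMap (μ.prod μ) (fun z : X × X => (T z.1, T (T z.2))) ∧
      ¬ (∀ (n : ℕ) (e : Fin n → ℤ), 0 < n → (∀ i, e i ≠ 0) →
          IsErgodicMap (Measure.pi fun _ : Fin n => μ)
            (fun x : Fin n → X => fun i => ((T.toEquiv : Equiv.Perm X) ^ e i) (x i))) := by
  refine ⟨RankOne.Phase, inferInstance, inferInstance, RankOne.phaseMeasure,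
    RankOne.nullSingletonClass_phaseMeasure, inferInstance, RankOne.shift 1,
    RankOne.phaseMeasure_univ, RankOne.phaseMeasure_shift 1,
    ?_, ?_, ?_⟩
  · intro n _ A hA hinv
    exact RankOne.ergodic_diag hA (measure_symmDiff_eq_zero_iff.1 hinv)
  · intro h
    obtain ⟨n, hn, hpos⟩ := h (RankOne.visit 0 ×ˢ RankOne.visit 0)
      ((RankOne.measurableSet_visit 0).prod (RankOne.measurableSet_visit 0))
      (by rw [RankOne.prod_visit]; exact one_pos)
    exact hpos.ne' (RankOne.wandering hn)
  · intro h
    obtain ⟨A, hA, hinv, h0, h1⟩ := RankOne.not_ergodic_square ![1, 2] rfl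
    rcases h 2 ![1, 2] two_pos (by simp [Fin.forall_fin_two]) A hA
      (by rw [hinv, symmDiff_self]; exact measure_empty) with h | h
    · exact h0 h
    · exact h1 h
end

section
/- There exists a standard Borel space X with a nonatomic σ-finite Borel measure μ satisfying μ(X) = ∞, an invertible measure-preserving transformation T : X → X that is conservative and ergodic, natural numbers p, q with 0 < p < q, and a measurable set A with μ(A) > 0, such that for every nonzero integer i, μ(T^{p i} A ∩ T^{q i} A ∩ A) = 0. In particular, T is not multiply recurrent: there is no positive integer n with μ(A ∩ T^{−p n} A ∩ T^{−q n} A) > 0. -/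
/-!
The transformation is the binary odometer `T x = x + 1` on sequences of bits, i.e. addition of `1`
with carry on the 2-adic integers, and the set is `A = {x | every odd-indexed bit is 0}`, with
`p = 1` and `q = 2`.

* No double recurrence (`evenBits_no_recurrence`). If `u = T^m v = T^(2m) w` with `u, v, w ∈ A`,
  then `u + w = 2v` in the 2-adic integers. The elements of `A` have base-4 digits in `{0, 1}`, so
  comparing digits (no carry can occur) gives `u = v`, whence `m = 0`. Only truncations modulo
  `2 ^ n` are needed for this.

* The measure (`bitsMeasure`). The sequences whose odd-indexed bits are finitely supported form a
  copy of `D × K`, where `K` is the compact group of all bit sequences (the even-indexed bits) and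
  `D` is the countable group of finitely supported ones. The measure is the image of counting
  measure times Haar measure. It is infinite, and invariant under bitwise (carry-free) translation
  by every finitely supported sequence (`measurePreserving_add`).

* Invariance (`measurePreserving_odometer`). Off the single point `111…`, `T` is piecewise such a
  translation: it flips all bits up to the first `0`.

* Conversely `T^(2^k)` starts the addition at bit `k` (`iterate_odometer`), so it is the flip of bit
  `k` wherever that bit is `0`. Conservativity then follows from the Steinhaus theorem in `K`:
  differences of points of a section of positive measure contain the flip of some bit. For
  ergodicity, a `T`-invariant set is almost invariant under all finitely supported translations,
  which are dense in `K`, so its sections over `D` are null or conull, all in the same way.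
-/

open MeasureTheory

open Filter Topology

/-! ### The odometer -/

/-- Sequences of bits. The group structure is bitwise addition (without carry) and the topology is
the product topology, so this is a compact group. -/
abbrev Bits : Type := ℕ → ZMod 2

lemma bit_cases (c : ZMod 2) : c = 0 ∨ c = 1 := by revert c; decide

open Classical in
/-- Addition of `2 ^ k` with carry, reading `x` as the 2-adic integer `∑ x i * 2 ^ i`: bit `j ≥ k`
is flipped when all the bits from `k` to `j - 1` are `1`. -/
noncomputable def addAt (k : ℕ) (x : Bits) : Bits := fun j =>
  if k ≤ j ∧ ∀ i, k ≤ i → i < j → x i = 1 then x j + 1 else x j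

open Classical in
/-- Subtraction of `1` with borrow: bit `j` is flipped when all lower bits are `0`. -/
noncomputable def subOne (x : Bits) : Bits := fun j =>
  if ∀ i < j, x i = 0 then x j + 1 else x j

lemma add_one_add_one (c : ZMod 2) : c + 1 + 1 = c := by revert c; decide

lemma addAt_zero_apply (x : Bits) (j : ℕ) :
    addAt 0 x j = open Classical in if ∀ i < j, x i = 1 then x j + 1 else x j := by
  simp [addAt]

lemma forall_addAt_zero (x : Bits) (j : ℕ) :
    (∀ i < j, addAt 0 x i = 0) ↔ ∀ i < j, x i = 1 := by
  induction j with
  | zero => simp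
  | succ j ih =>
    rw [Nat.forall_lt_succ_right, Nat.forall_lt_succ_right, ih]
    refine and_congr_right fun h => ?_
    rw [addAt_zero_apply, if_pos h]
    generalize x j = c
    revert c; decide

lemma forall_subOne (x : Bits) (j : ℕ) :
    (∀ i < j, subOne x i = 1) ↔ ∀ i < j, x i = 0 := by
  induction j with
  | zero => simp
  | succ j ih =>
    rw [Nat.forall_lt_succ_right, Nat.forall_lt_succ_right, ih]
    refine and_congr_right fun h => ?_
    rw [subOne, if_pos h]
    generalize x j = c
    revert c; decide

lemma subOne_addAt (x : Bits) : subOne (addAt 0 x) = x := by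
  funext j
  rw [subOne]
  simp only [forall_addAt_zero]
  rw [addAt_zero_apply]
  split_ifs
  · exact add_one_add_one _
  · rfl

lemma addAt_subOne (x : Bits) : addAt 0 (subOne x) = x := by
  funext j
  rw [addAt_zero_apply]
  simp only [forall_subOne]
  rw [subOne]
  split_ifs
  · exact add_one_add_one _
  · rfl

lemma measurable_addAt (k : ℕ) : Measurable (addAt k) := by
  refine measurable_pi_lambda _ fun j => Measurable.ite ?_ (by fun_prop) (by fun_prop)
  have : {x : Bits | k ≤ j ∧ ∀ i, k ≤ i → i < j → x i = 1} =
      {x | k ≤ j} ∩ ⋂ i, ⋂ (_ : k ≤ i), ⋂ (_ : i < j), (fun x => x i) ⁻¹' {1} := by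
    ext x; simp
  rw [this]
  refine (MeasurableSet.const _).inter (.iInter fun i => .iInter fun _ => .iInter fun _ => ?_)
  exact measurable_pi_apply i (measurableSet_singleton _)

lemma measurable_subOne : Measurable subOne := by
  refine measurable_pi_lambda _ fun j => Measurable.ite ?_ (by fun_prop) (by fun_prop)
  have : {x : Bits | ∀ i < j, x i = 0} =
      ⋂ i, ⋂ (_ : i < j), (fun x => x i) ⁻¹' {0} := by
    ext x; simp
  rw [this]
  exact .iInter fun i => .iInter fun _ => measurable_pi_apply i (measurableSet_singleton _)

/-- The binary odometer `x ↦ x + 1` on the 2-adic integers. -/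
noncomputable def odometer : Bits ≃ᵐ Bits where
  toFun := addAt 0
  invFun := subOne
  left_inv := subOne_addAt
  right_inv := addAt_subOne
  measurable_toFun := measurable_addAt 0
  measurable_invFun := measurable_subOne

lemma addAt_of_zero {k : ℕ} {x : Bits} (h : x k = 0) : addAt k x = x + Pi.single k 1 := by
  funext j
  rcases lt_trichotomy j k with hj | rfl | hj
  · simp [addAt, hj.not_ge, hj.ne]
  · have : ∀ i, j ≤ i → i < j → x i = 1 := by intros; omega
    simpa [addAt, h] using this
  · have : ¬ (k ≤ j ∧ ∀ i, k ≤ i → i < j → x i = 1) := fun hh => by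
      have := hh.2 k le_rfl hj
      rw [h] at this
      exact absurd this (by decide)
    simp [addAt, this, hj.ne']

lemma addAt_of_one {k : ℕ} {x : Bits} (h : x k = 1) :
    addAt k x = addAt (k + 1) x + Pi.single k 1 := by
  funext j
  rcases lt_trichotomy j k with hj | rfl | hj
  · simp [addAt, hj.not_ge, hj.ne, show ¬ (k + 1 ≤ j) by omega]
  · simp [addAt]; grind
  · have : (k ≤ j ∧ ∀ i, k ≤ i → i < j → x i = 1) ↔
        (k + 1 ≤ j ∧ ∀ i, k + 1 ≤ i → i < j → x i = 1) := by
      refine and_congr (by omega) ⟨fun hh i hi => hh i (by omega), fun hh i hi hij => ?_⟩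
      rcases hi.eq_or_lt with rfl | hi
      · exact h
      · exact hh i hi hij
    simp only [addAt, Pi.add_apply, this]
    simp [ne_of_gt hj]

/-- Flipping bit `k` twice does nothing. -/
lemma single_add_single (k : ℕ) (x : Bits) : x + Pi.single k 1 + Pi.single k 1 = x := by
  funext j
  by_cases h : j = k
  · subst h; simp [add_one_add_one]
  · simp [h]

lemma addAt_succ_add_single (k : ℕ) (x : Bits) :
    addAt (k + 1) (x + Pi.single k 1) = addAt (k + 1) x + Pi.single k 1 := by
  funext j
  have : ∀ i, k + 1 ≤ i → (x + Pi.single k 1 : Bits) i = x i := fun i hi => by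
    simp [show i ≠ k by omega]
  have h2 : (∀ i, k + 1 ≤ i → i < j → (x + Pi.single k 1 : Bits) i = 1) ↔
      ∀ i, k + 1 ≤ i → i < j → x i = 1 :=
    forall₂_congr fun i hi => by rw [this i hi]
  rw [Pi.add_apply]
  simp only [addAt, h2]
  rw [Pi.add_apply]
  split_ifs <;> ring

lemma addAt_addAt (k : ℕ) (x : Bits) : addAt k (addAt k x) = addAt (k + 1) x := by
  rcases bit_cases (x k) with h | h
  · have h1 : (x + Pi.single k 1 : Bits) k = 1 := by simp [h]
    rw [addAt_of_zero h, addAt_of_one h1, addAt_succ_add_single, single_add_single]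
  · have h1 : (addAt (k + 1) x + Pi.single k 1 : Bits) k = 0 := by
      simp [addAt, h]; decide
    rw [addAt_of_one h, addAt_of_zero h1, single_add_single]

lemma iterate_odometer (k : ℕ) : odometer^[2 ^ k] = addAt k := by
  induction k with
  | zero => rfl
  | succ k ih =>
    rw [pow_succ, mul_two, Function.iterate_add, ih]
    funext x
    exact addAt_addAt k x

/-! ### Absence of double recurrence -/

/-- The integer formed by the lowest `n` bits of `x`. -/
noncomputable def low (n : ℕ) (x : Bits) : ℕ := ∑ i ∈ Finset.range n, (x i).val * 2 ^ i

/-- Truncation to `n` bits turns the odometer into addition of `1`, up to the carry `2 ^ n` out of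
the top bit. -/
lemma low_odometer_aux (n : ℕ) (x : Bits) :
    low n (addAt 0 x) + (open Classical in if ∀ i < n, x i = 1 then 2 ^ n else 0)
      = low n x + 1 := by
  induction n with
  | zero => simp [low]
  | succ n ih =>
    simp only [low, Finset.sum_range_succ] at ih ⊢
    rw [addAt_zero_apply]
    simp only [Nat.forall_lt_succ_right]
    by_cases h : ∀ i < n, x i = 1
    · rw [if_pos h] at ih
      rw [if_pos h]
      rcases bit_cases (x n) with h' | h'
      · rw [if_neg (by rw [h']; simp)]
        simp only [h', zero_add, ZMod.val_zero, ZMod.val_one, zero_mul, one_mul]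
        omega
      · rw [if_pos ⟨h, h'⟩, h', show (1 + 1 : ZMod 2) = 0 by decide, pow_succ]
        simp only [ZMod.val_zero, ZMod.val_one, zero_mul, one_mul]
        omega
    · rw [if_neg h] at ih ⊢
      rw [if_neg (fun hh => h hh.1)]
      omega

lemma low_odometer (n : ℕ) (x : Bits) :
    (low n (odometer x) : ZMod (2 ^ n)) = low n x + 1 := by
  have h := congrArg (Nat.cast : ℕ → ZMod (2 ^ n)) (low_odometer_aux n x)
  have h2 : ((2 ^ n : ℕ) : ZMod (2 ^ n)) = 0 := ZMod.natCast_self _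
  change ((low n (addAt 0 x) : ℕ) : ZMod (2 ^ n)) = _
  split_ifs at h
  · rw [Nat.cast_add, h2] at h
    simpa using h
  · simpa using h

lemma low_zpow (n : ℕ) (m : ℤ) (x : Bits) :
    (low n (((odometer.toEquiv : Equiv.Perm Bits) ^ m) x) : ZMod (2 ^ n)) = low n x + m := by
  induction m with
  | zero => simp
  | succ m ih =>
    rw [add_comm, zpow_add, zpow_one, Equiv.Perm.mul_apply]
    refine (low_odometer n _).trans ?_
    rw [ih]; push_cast; ring
  | pred m ih =>
    have h := low_odometer n (((odometer.toEquiv : Equiv.Perm Bits) ^ (-(m : ℤ) - 1)) x)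
    have h2 : odometer (((odometer.toEquiv : Equiv.Perm Bits) ^ (-(m : ℤ) - 1)) x) =
        ((odometer.toEquiv : Equiv.Perm Bits) ^ (-(m : ℤ))) x := by
      have : (odometer.toEquiv : Equiv.Perm Bits) ^ (-(m : ℤ)) =
          (odometer.toEquiv : Equiv.Perm Bits) * odometer.toEquiv ^ (-(m : ℤ) - 1) := by
        rw [← zpow_one_add]; congr 1; ring
      rw [this]; rfl
    rw [h2, ih] at h
    rw [← sub_eq_iff_eq_add] at h
    rw [← h]; push_cast; ring

/-- The sequences supported on even indices, i.e. the 2-adic integers whose base-4 digits all lie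
in `{0, 1}`. -/
def evenBits : Set Bits := {x | ∀ j, x (2 * j + 1) = 0}

/-- There is no nontrivial three-term progression `w, v, u` in `evenBits`: a base-4 digit of
`u + w - 2 * v` lies in `[-2, 2]`, so it vanishes once it vanishes modulo `4`. -/
lemma evenBits_progression {u v w : Bits} (hu : u ∈ evenBits) (hv : v ∈ evenBits)
    (hw : w ∈ evenBits)
    (h : ∀ n, (low n u + low n w : ZMod (2 ^ n)) = 2 * low n v) : u = v := by
  have key : ∀ m, low (2 * m) u + low (2 * m) w = 2 * low (2 * m) v ∧
      ∀ j < m, u (2 * j) = v (2 * j) := by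
    intro m
    induction m with
    | zero => simp [low]
    | succ m ih =>
      have h1 := h (2 * m + 1 + 1)
      have e : ∀ x ∈ evenBits, low (2 * m + 1 + 1) x =
          low (2 * m) x + (x (2 * m)).val * 2 ^ (2 * m) := by
        intro x hx
        simp [low, Finset.sum_range_succ, hx m]
      have h3 : low (2 * m + 1 + 1) u + low (2 * m + 1 + 1) w ≡ 2 * low (2 * m + 1 + 1) v
          [MOD 2 ^ (2 * m + 1 + 1)] := by
        rw [← ZMod.natCast_eq_natCast_iff]
        exact_mod_cast h1
      have hpos : 0 < 2 ^ (2 * m) := by positivity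
      have h4 : (u (2 * m)).val + (w (2 * m)).val ≡ 2 * (v (2 * m)).val [MOD 4] := by
        rw [e u hu, e v hv, e w hw, pow_succ, pow_succ] at h3
        have h5 : (2 * low (2 * m) v) + 2 ^ (2 * m) * ((u (2 * m)).val + (w (2 * m)).val) ≡
          (2 * low (2 * m) v) + 2 ^ (2 * m) * (2 * (v (2 * m)).val) [MOD 2 ^ (2 * m) * 4] := by
          convert h3 using 1
          · ring
          · rw [← ih.1]; ring
          · ring
        exact Nat.ModEq.mul_left_cancel' hpos.ne' (Nat.ModEq.add_left_cancel' _ h5)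
      have h5 : (u (2 * m)).val + (w (2 * m)).val = 2 * (v (2 * m)).val ∧ u (2 * m) = v (2 * m) := by
        revert h4
        generalize u (2 * m) = a
        generalize v (2 * m) = b
        generalize w (2 * m) = c
        revert a b c
        decide
      refine ⟨?_, ?_⟩
      · rw [show 2 * (m + 1) = 2 * m + 1 + 1 by ring, e u hu, e v hv, e w hw, mul_add, ← ih.1,
          ← mul_assoc 2, ← h5.1]
        ring
      · rw [Nat.forall_lt_succ_right]
        exact ⟨ih.2, h5.2⟩
  funext j
  rcases Nat.even_or_odd' j with ⟨i, rfl | rfl⟩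
  · exact (key (i + 1)).2 i (by omega)
  · rw [hu, hv]

lemma evenBits_no_recurrence {m : ℤ} (hm : m ≠ 0) {u v w : Bits} (hu : u ∈ evenBits)
    (hv : v ∈ evenBits) (hw : w ∈ evenBits)
    (huv : ((odometer.toEquiv : Equiv.Perm Bits) ^ m) v = u)
    (huw : ((odometer.toEquiv : Equiv.Perm Bits) ^ (2 * m)) w = u) : False := by
  have h1 : ∀ n, (low n u : ZMod (2 ^ n)) = low n v + m := fun n => by rw [← huv, low_zpow]
  have h2 : ∀ n, (low n u : ZMod (2 ^ n)) = low n w + 2 * m := fun n => by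
    rw [← huw, low_zpow]; push_cast; rfl
  have h3 : u = v := evenBits_progression hu hv hw fun n => by
    linear_combination 2 * h1 n - h2 n
  subst h3
  -- Now `2 ^ n ∣ m` for all `n`; the choice `n = |m|` is large enough for a contradiction.
  have h4 := h1 m.natAbs
  rw [left_eq_add, ZMod.intCast_zmod_eq_zero_iff_dvd] at h4
  have h5 := Int.le_of_dvd (abs_pos.2 hm) ((dvd_abs _ _).2 h4)
  have h6 : m.natAbs < 2 ^ m.natAbs := Nat.lt_two_pow_self
  push_cast at h5
  have h7 : ((m.natAbs : ℕ) : ℤ) < 2 ^ m.natAbs := by exact_mod_cast h6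
  rw [Int.natCast_natAbs] at h7
  omega

/-! ### The invariant measure -/

/-- The countable group of finitely supported bit sequences carries the discrete σ-algebra. -/
instance : MeasurableSpace (ℕ →₀ ZMod 2) := ⊤

/-- Haar measure on the compact group of bit sequences. -/
noncomputable abbrev haarBits : Measure Bits := Measure.addHaar

/-- The sequence with even-indexed bits `p.2` (arbitrary) and odd-indexed bits `p.1` (finitely
supported). -/
def interleave (p : (ℕ →₀ ZMod 2) × Bits) : Bits := fun n =>
  if n % 2 = 0 then p.2 (n / 2) else p.1 (n / 2)

lemma interleave_even (p : (ℕ →₀ ZMod 2) × Bits) (j : ℕ) : interleave p (2 * j) = p.2 j := by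
  simp [interleave]

lemma interleave_odd (p : (ℕ →₀ ZMod 2) × Bits) (j : ℕ) : interleave p (2 * j + 1) = p.1 j := by
  simp [interleave, Nat.add_mod, show (2 * j + 1) / 2 = j by omega]

lemma interleave_add (p q : (ℕ →₀ ZMod 2) × Bits) :
    interleave (p + q) = interleave p + interleave q := by
  funext n
  simp only [interleave, Pi.add_apply]
  split_ifs <;> rfl

lemma interleave_injective : Function.Injective interleave := by
  intro p q h
  refine Prod.ext (Finsupp.ext fun j => ?_) (funext fun j => ?_)
  · rw [← interleave_odd, h, interleave_odd]
  · rw [← interleave_even, h, interleave_even]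

lemma measurable_interleave : Measurable interleave := by
  refine measurable_pi_lambda _ fun n => ?_
  unfold interleave
  split_ifs
  · fun_prop
  · exact (measurable_from_top (f := fun d : ℕ →₀ ZMod 2 => d (n / 2))).comp measurable_fst

lemma measurableEmbedding_interleave : MeasurableEmbedding interleave :=
  measurable_interleave.measurableEmbedding interleave_injective

/-- The infinite measure for the odometer: it is carried by the sequences whose odd-indexed bits are
finitely supported, with counting measure on these bits and Haar measure on the even-indexed
ones. -/
noncomputable def bitsMeasure : Measure Bits :=
  ((Measure.count : Measure (ℕ →₀ ZMod 2)).prod haarBits).map interleave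

instance : SigmaFinite bitsMeasure := measurableEmbedding_interleave.sigmaFinite_map

lemma bitsMeasure_apply (B : Set Bits) (hB : MeasurableSet B) :
    bitsMeasure B = ∑' d : ℕ →₀ ZMod 2, haarBits {a | interleave (d, a) ∈ B} := by
  rw [bitsMeasure, Measure.map_apply measurable_interleave hB,
    Measure.prod_apply (measurable_interleave hB), lintegral_count]
  rfl

lemma ae_bitsMeasure_iff {p : Bits → Prop} (hp : MeasurableSet {x | p x}) :
    (∀ᵐ x ∂bitsMeasure, p x) ↔ ∀ d, ∀ᵐ a ∂haarBits, p (interleave (d, a)) := by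
  rw [ae_iff, ← Set.compl_ofPred, bitsMeasure_apply _ hp.compl, ENNReal.tsum_eq_zero]
  rfl

instance : NeBot (𝓝[≠] (0 : Bits)) := by
  have h : Tendsto (fun k : ℕ => (Pi.single k 1 : Bits)) atTop (𝓝[≠] 0) := by
    refine tendsto_nhdsWithin_iff.2 ⟨tendsto_pi_nhds.2 fun j => ?_, .of_forall fun k hk => ?_⟩
    · refine tendsto_const_nhds.congr' ?_
      filter_upwards [eventually_gt_atTop j] with k hk
      simp [hk.ne]
    · have := congrFun (Set.mem_singleton_iff.1 hk) k
      simp at this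
  exact h.neBot

instance : NullSingletonClass bitsMeasure where
  measure_singleton x := by
    rw [bitsMeasure_apply _ (measurableSet_singleton x), ENNReal.tsum_eq_zero]
    intro d
    refine Set.Subsingleton.measure_zero (fun a ha b hb => ?_) _
    have : interleave (d, a) = interleave (d, b) := ha.trans hb.symm
    exact (Prod.ext_iff.1 (interleave_injective this)).2

lemma haarBits_univ_pos : 0 < haarBits Set.univ :=
  IsOpen.measure_pos _ isOpen_univ Set.univ_nonempty

lemma bitsMeasure_univ : bitsMeasure Set.univ = ⊤ := by
  rw [bitsMeasure_apply _ .univ]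
  simp only [Set.mem_univ, Set.ofPred_true]
  exact ENNReal.tsum_const_eq_top_of_ne_zero haarBits_univ_pos.ne'

lemma measurableSet_evenBits : MeasurableSet evenBits := by
  have : evenBits = ⋂ j, (fun x : Bits => x (2 * j + 1)) ⁻¹' {0} := by ext; simp [evenBits]
  rw [this]
  exact .iInter fun j => measurable_pi_apply _ (measurableSet_singleton _)

lemma bitsMeasure_evenBits_pos : 0 < bitsMeasure evenBits := by
  rw [bitsMeasure_apply _ measurableSet_evenBits]
  refine lt_of_lt_of_le ?_ (ENNReal.le_tsum 0)
  convert haarBits_univ_pos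
  ext a
  simp [evenBits, interleave_odd]

/-- Every finitely supported sequence lies in the range of `interleave`. -/
lemma exists_interleave_eq (γ : ℕ →₀ ZMod 2) : ∃ p, interleave p = γ := by
  refine ⟨(γ.comapDomain (fun j => 2 * j + 1) (fun a _ b _ h => by simpa using h),
    fun j => γ (2 * j)), ?_⟩
  funext n
  rcases Nat.even_or_odd' n with ⟨i, rfl | rfl⟩
  · rw [interleave_even]
  · rw [interleave_odd]; rfl

lemma measurePreserving_add (γ : ℕ →₀ ZMod 2) :
    MeasurePreserving (fun x : Bits => x + γ) bitsMeasure bitsMeasure := by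
  obtain ⟨p, hp⟩ := exists_interleave_eq γ
  refine ⟨by fun_prop, ?_⟩
  have h1 : MeasurePreserving (fun d : ℕ →₀ ZMod 2 => d + p.1) Measure.count Measure.count :=
    measurePreserving_add_right _ _
  have h2 : MeasurePreserving (fun a : Bits => a + p.2) haarBits haarBits :=
    measurePreserving_add_right _ _
  have h3 := (h1.prod h2).map_eq
  rw [bitsMeasure, Measure.map_map (by fun_prop) measurable_interleave]
  conv_rhs => rw [← h3]
  rw [Measure.map_map measurable_interleave (h1.prod h2).measurable]
  congr 1
  funext q
  change interleave q + _ = _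
  rw [← hp, ← interleave_add]
  rfl

/-! ### Invariance, conservativity and ergodicity -/

lemma measurePreserving_odometer : MeasurePreserving odometer bitsMeasure bitsMeasure := by
  refine ⟨odometer.measurable, ?_⟩
  -- On `P k` the first `0` is bit `k`, and `odometer` flips the bits `0, …, k`, mapping `P k` onto
  -- `Q k`. Both families cover all but one point of the space.
  let P : ℕ → Set Bits := fun k => {x | x k = 0 ∧ ∀ i < k, x i = 1}
  let Q : ℕ → Set Bits := fun k => {x | x k = 1 ∧ ∀ i < k, x i = 0}
  have hmeas : ∀ (k : ℕ) (c c' : ZMod 2),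
      MeasurableSet {x : Bits | x k = c ∧ ∀ i < k, x i = c'} := by
    intro k c c'
    have : {x : Bits | x k = c ∧ ∀ i < k, x i = c'} =
        (fun x => x k) ⁻¹' {c} ∩ ⋂ i, ⋂ (_ : i < k), (fun x : Bits => x i) ⁻¹' {c'} := by
      ext; simp
    rw [this]
    exact (measurable_pi_apply k (measurableSet_singleton _)).inter
      (.iInter fun i => .iInter fun _ => measurable_pi_apply i (measurableSet_singleton _))
  have hdisj : ∀ c c' : ZMod 2, c ≠ c' → Pairwise (Function.onFun Disjoint
      fun k => {x : Bits | x k = c ∧ ∀ i < k, x i = c'}) := by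
    intro c c' hcc k l hkl
    refine Set.disjoint_left.2 fun x hx hy => ?_
    rcases lt_or_gt_of_ne hkl with h | h
    · exact hcc (hx.1.symm.trans (hy.2 k h))
    · exact hcc (hy.1.symm.trans (hx.2 l h))
  have hcover : ∀ c c' : ZMod 2, c ≠ c' →
      ∀ᵐ x ∂bitsMeasure, x ∈ ⋃ k, {x : Bits | x k = c ∧ ∀ i < k, x i = c'} := by
    intro c c' hcc
    have h0 : bitsMeasure {fun _ => c'} = 0 := measure_singleton _
    have hcase : ∀ c c' b : ZMod 2, c ≠ c' → b ≠ c' → b = c := by decide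
    filter_upwards [measure_eq_zero_iff_ae_notMem.1 h0] with x hx
    have hex : ∃ k, x k ≠ c' := by
      by_contra! h
      exact hx (funext h)
    classical
    refine Set.mem_iUnion.2 ⟨Nat.find hex, hcase c c' _ hcc (Nat.find_spec hex), fun i hi => ?_⟩
    simpa using Nat.find_min hex hi
  have hsum : ∀ c c' : ZMod 2, c ≠ c' → bitsMeasure = Measure.sum fun k =>
      bitsMeasure.restrict {x : Bits | x k = c ∧ ∀ i < k, x i = c'} := by
    intro c c' hcc
    rw [← Measure.restrict_iUnion (hdisj c c' hcc) (fun k => hmeas k c c'),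
      Measure.restrict_eq_self_of_ae_mem (hcover c c' hcc)]
  have hpiece : ∀ k, (bitsMeasure.restrict (P k)).map odometer = bitsMeasure.restrict (Q k) := by
    intro k
    let γ : ℕ →₀ ZMod 2 := Finsupp.indicator (Finset.range (k + 1)) fun _ _ => 1
    have hγ : ∀ i, γ i = if i ≤ k then 1 else 0 := fun i => by
      simp [γ, Finsupp.indicator_apply]
    have hPQ : (fun x : Bits => x + γ) ⁻¹' Q k = P k := by
      ext x
      have h01 : ∀ b : ZMod 2, (b + 1 = 1 ↔ b = 0) ∧ (b + 1 = 0 ↔ b = 1) := by decide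
      simp only [P, Q, Set.mem_preimage, Set.mem_ofPred_eq, Pi.add_apply, hγ, le_refl, if_true,
        (h01 _).1]
      refine and_congr_right fun _ => forall₂_congr fun i hi => ?_
      rw [if_pos hi.le, (h01 _).2]
    have hmap := ((measurePreserving_add γ).restrict_preimage (hmeas k 1 0)).map_eq
    change Measure.map _ (bitsMeasure.restrict ((fun x : Bits => x + γ) ⁻¹' Q k)) = _ at hmap
    rw [hPQ] at hmap
    rw [← hmap]
    refine Measure.map_congr ?_
    refine (ae_restrict_iff' (hmeas k 0 1)).2 (.of_forall fun x hx => ?_)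
    funext j
    change addAt 0 x j = x j + γ j
    rw [addAt_zero_apply, hγ]
    by_cases hj : j ≤ k
    · rw [if_pos hj, if_pos fun i hi => hx.2 i (hi.trans_le hj)]
    · rw [if_neg hj, if_neg, add_zero]
      intro h
      have := h k (by omega)
      rw [hx.1] at this
      exact absurd this (by decide)
  conv_lhs => rw [hsum 0 1 (by decide)]
  conv_rhs => rw [hsum 1 0 (by decide)]
  rw [Measure.map_sum odometer.measurable.aemeasurable]
  exact congrArg Measure.sum (funext hpiece)

lemma conservative_odometer : IsConservativeMap bitsMeasure odometer := by
  intro A hA hpos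
  by_contra! hcon
  have hnull : ∀ n, bitsMeasure (odometer^[n + 1] ⁻¹' A ∩ A) = 0 := fun n =>
    le_antisymm (hcon (n + 1) n.succ_pos) zero_le
  -- `W` is `A` with the null set of returning points removed, so that no point of `W` returns.
  let W : Set Bits := A \ ⋃ n, (odometer^[n + 1] ⁻¹' A ∩ A)
  have hWm : MeasurableSet W :=
    hA.diff (.iUnion fun n => (odometer.measurable.iterate (n + 1) hA).inter hA)
  have hWpos : 0 < bitsMeasure W := by
    rwa [measure_sdiff_null (measure_iUnion_null hnull)]
  have hW : ∀ n, 0 < n → ∀ x ∈ W, odometer^[n] x ∉ W := by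
    intro n hn x hx hx'
    refine hx.2 (Set.mem_iUnion.2 ⟨n - 1, ?_, hx.1⟩)
    rw [Nat.sub_add_cancel hn]
    exact hx'.1
  obtain ⟨d, hd⟩ : ∃ d, 0 < haarBits {a | interleave (d, a) ∈ W} := by
    by_contra! h
    refine hWpos.ne' ?_
    rw [bitsMeasure_apply _ hWm, ENNReal.tsum_eq_zero]
    exact fun d => le_antisymm (h d) zero_le
  have hmeas : MeasurableSet {a | interleave (d, a) ∈ W} :=
    (measurable_interleave.comp measurable_prodMk_left) hWm
  -- Steinhaus: the differences of points of this section fill a neighbourhood of `0`, hence contain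
  -- the flip of some bit.
  have hnhds := Measure.sub_mem_nhds_zero_of_addHaar_pos haarBits _ hmeas hd
  have hlim : Tendsto (fun k : ℕ => (Pi.single k 1 : Bits)) atTop (𝓝 0) := by
    refine tendsto_pi_nhds.2 fun j => tendsto_const_nhds.congr' ?_
    filter_upwards [eventually_gt_atTop j] with k hk
    simp [hk.ne]
  obtain ⟨k, hk⟩ := (hlim.eventually_mem hnhds).exists
  obtain ⟨a, ha, b, hb, hab⟩ := Set.mem_sub.1 hk
  have hsingle : interleave (0, Pi.single k 1) = Pi.single (2 * k) 1 := by
    funext n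
    rcases Nat.even_or_odd' n with ⟨i, rfl | rfl⟩
    · rw [interleave_even]
      by_cases h : i = k
      · subst h; simp
      · simp [h]
    · rw [interleave_odd, Pi.single_eq_of_ne (by omega)]; rfl
  have hadd : interleave (d, a) = interleave (d, b) + Pi.single (2 * k) 1 := by
    rw [← hsingle, ← interleave_add, ← hab]
    congr 1
    simp
  have hstep : ∀ x y, x ∈ W → y ∈ W → x = y + Pi.single (2 * k) 1 → y (2 * k) = 0 → False := by
    intro x y hx hy hxy h0
    refine hW (2 ^ (2 * k)) (by positivity) y hy ?_
    rw [iterate_odometer, addAt_of_zero h0, ← hxy]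
    exact hx
  rcases bit_cases (interleave (d, b) (2 * k)) with h | h
  · exact hstep _ _ ha hb hadd h
  · refine hstep _ _ hb ha (by rw [hadd, single_add_single]) ?_
    rw [hadd, Pi.add_apply, h, Pi.single_eq_same]
    decide

lemma dense_finsupp : Dense (Set.range fun γ : ℕ →₀ ZMod 2 => (γ : Bits)) := by
  intro x
  refine mem_closure_of_tendsto (f := fun n : ℕ =>
    ((Finsupp.indicator (Finset.range n) fun i _ => x i : ℕ →₀ ZMod 2) : Bits)) (b := atTop)
    (tendsto_pi_nhds.2 fun j => tendsto_const_nhds.congr' ?_)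
    (.of_forall fun n => Set.mem_range_self _)
  filter_upwards [eventually_gt_atTop j] with n hn
  simp [Finsupp.indicator_apply, hn]

/-- A set almost invariant under the odometer is almost invariant under every finitely supported
translation. -/
lemma ae_mem_add_iff {B : Set Bits}
    (hB' : odometer ⁻¹' B =ᵐ[bitsMeasure] B) (γ : ℕ →₀ ZMod 2) :
    (fun x : Bits => x + γ) ⁻¹' B =ᵐ[bitsMeasure] B := by
  induction γ using Finsupp.induction_linear with
  | zero => exact eventuallyEq_set.2 (.of_forall fun x => by simp)
  | add f g hf hg =>
    have h := (measurePreserving_add f).quasiMeasurePreserving.preimage_ae_eq hg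
    refine EventuallyEq.trans (.of_eq ?_) (h.trans hf)
    simp only [Finsupp.coe_add, ← add_assoc]
    rfl
  | single k c =>
    rcases bit_cases c with rfl | rfl
    · exact eventuallyEq_set.2 (.of_forall fun x => by simp)
    have hcoe : (Finsupp.single k (1 : ZMod 2) : Bits) = Pi.single k 1 :=
      Finsupp.single_eq_pi_single k 1
    have hk : addAt k ⁻¹' B =ᵐ[bitsMeasure] B := by
      rw [← iterate_odometer]
      exact measurePreserving_odometer.quasiMeasurePreserving.preimage_iterate_ae_eq _ hB'
    have h0 : ∀ᵐ x ∂bitsMeasure, x k = 0 → 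
        (x + ⇑(Finsupp.single k (1 : ZMod 2)) ∈ B ↔ x ∈ B) := by
      filter_upwards [hk.mem_iff] with x hx hx0
      rw [← hx, Set.mem_preimage, addAt_of_zero hx0, hcoe]
    -- Where `x k = 1`, apply `h0` to `x` with bit `k` flipped.
    have h1 := (measurePreserving_add (Finsupp.single k 1)).quasiMeasurePreserving.ae h0
    refine eventuallyEq_set.2 ?_
    filter_upwards [h0, h1] with x hx0 hx1
    rcases bit_cases (x k) with h | h
    · exact hx0 h
    · rw [hcoe] at hx1 ⊢
      rw [single_add_single] at hx1
      refine (hx1 ?_).symm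
      rw [Pi.add_apply, h, Pi.single_eq_same]
      decide

lemma ergodic_odometer : IsErgodicMap bitsMeasure odometer := by
  intro B hB hinv
  have hγ := ae_mem_add_iff (measure_symmDiff_eq_zero_iff.1 hinv)
  have hsec : ∀ d : ℕ →₀ ZMod 2, MeasurableSet {a | interleave (d, a) ∈ B} := fun d =>
    (measurable_interleave.comp measurable_prodMk_left) hB
  -- Translating by `interleave p` relates the sections of `B` over `d` and over `d + p.1`.
  have hmove : ∀ (p : (ℕ →₀ ZMod 2) × Bits), (∃ γ : ℕ →₀ ZMod 2, interleave p = γ) →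
      ∀ d, ∀ᵐ a ∂haarBits, interleave (d + p.1, a + p.2) ∈ B ↔ interleave (d, a) ∈ B := by
    rintro p ⟨γ, hp⟩
    have h := (hγ γ).mem_iff
    rw [← hp] at h
    have hm : MeasurableSet {x | x ∈ (fun x : Bits => x + interleave p) ⁻¹' B ↔ x ∈ B} :=
      .iff ((measurable_id.add_const _) hB) hB
    intro d
    filter_upwards [(ae_bitsMeasure_iff hm).1 h d] with a ha
    rw [← ha, Set.mem_preimage, ← interleave_add]
    rfl
  have hconst : ∀ d : ℕ →₀ ZMod 2, EventuallyConst {a | interleave (d, a) ∈ B} (ae haarBits) := by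
    intro d
    refine aeconst_of_dense_setOfPred_preimage_vadd_ae (M := Bits) (hsec d).nullMeasurableSet
      (dense_finsupp.mono ?_)
    rintro _ ⟨γ, rfl⟩
    have hfin : ∃ δ : ℕ →₀ ZMod 2, interleave (0, (γ : Bits)) = δ := by
      refine ⟨γ.mapDomain (fun j => 2 * j), ?_⟩
      funext n
      rcases Nat.even_or_odd' n with ⟨i, rfl | rfl⟩
      · rw [interleave_even, Finsupp.mapDomain_apply (mul_right_injective₀ two_ne_zero)]
      · rw [interleave_odd, Finsupp.mapDomain_of_notMem_range]
        · rfl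
        · rintro ⟨j, hj⟩
          simp only at hj
          omega
    refine Set.mem_ofPred.2 (eventuallyEq_set.2 ?_)
    filter_upwards [hmove _ hfin d] with a ha
    rw [add_zero] at ha
    change interleave (d, (γ : Bits) + a) ∈ B ↔ _
    rw [add_comm]
    exact ha
  have hzero : ∀ d : ℕ →₀ ZMod 2,
      ∀ᵐ a ∂haarBits, interleave (d, a) ∈ B ↔ interleave (0, a) ∈ B := by
    intro d
    have hfin : ∃ δ : ℕ →₀ ZMod 2, interleave (d, 0) = δ := by
      refine ⟨d.mapDomain (fun j => 2 * j + 1), ?_⟩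
      have hinj : Function.Injective fun j : ℕ => 2 * j + 1 := fun a b h => by simpa using h
      funext n
      rcases Nat.even_or_odd' n with ⟨i, rfl | rfl⟩
      · rw [interleave_even, Finsupp.mapDomain_of_notMem_range]
        · rfl
        · rintro ⟨j, hj⟩
          simp only at hj
          omega
      · rw [interleave_odd]
        exact (Finsupp.mapDomain_apply hinj d i).symm
    filter_upwards [hmove _ hfin 0] with a ha
    simpa using ha
  rcases eventuallyConst_set'.1 (hconst 0) with h | h
  · left
    rw [measure_eq_zero_iff_ae_notMem]
    refine (ae_bitsMeasure_iff hB.compl).2 fun d => ?_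
    filter_upwards [hzero d, h.mem_iff] with a ha ha'
    rw [ha]
    exact fun hh => ha'.1 hh
  · right
    change ∀ᵐ x ∂bitsMeasure, x ∈ B
    refine (ae_bitsMeasure_iff (p := (· ∈ B)) hB).2 fun d => ?_
    filter_upwards [hzero d, h.mem_iff] with a ha ha'
    exact ha.2 (ha'.2 trivial)

theorem stmt10 :
    ∃ (X : Type) (_ : MeasurableSpace X) (_ : StandardBorelSpace X)
      (μ : Measure X) (_ : NoAtoms μ) (_ : SigmaFinite μ) (T : X ≃ᵐ X),
      μ Set.univ = ⊤ ∧ MeasurePreserving T μ μ ∧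
      IsConservativeMap μ ⇑T ∧ IsErgodicMap μ ⇑T ∧
      ∃ (p q : ℕ) (A : Set X), 0 < p ∧ p < q ∧ MeasurableSet A ∧ 0 < μ A ∧
        (∀ i : ℤ, i ≠ 0 →
          μ (((T.toEquiv : Equiv.Perm X) ^ ((p : ℤ) * i)) '' A ∩
             ((T.toEquiv : Equiv.Perm X) ^ ((q : ℤ) * i)) '' A ∩ A) = 0) ∧
        ¬ ∃ n : ℕ, 0 < n ∧
            0 < μ (A ∩ (⇑T)^[p * n] ⁻¹' A ∩ (⇑T)^[q * n] ⁻¹' A) := by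
  refine ⟨Bits, inferInstance, inferInstance, bitsMeasure,
    (inferInstance : NullSingletonClass bitsMeasure), inferInstance, odometer,
    bitsMeasure_univ, measurePreserving_odometer, conservative_odometer, ergodic_odometer,
    1, 2, evenBits, one_pos, one_lt_two, measurableSet_evenBits, bitsMeasure_evenBits_pos, ?_, ?_⟩
  · intro m hm
    refine measure_mono_null (fun x hx => ?_) measure_empty
    revert x
    rintro u ⟨⟨⟨v, hv, huv⟩, w, hw, huw⟩, hu⟩
    rw [Nat.cast_one, one_mul] at huv
    exact evenBits_no_recurrence hm hu hv hw huv huw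
  · rintro ⟨n, hn, hpos⟩
    refine hpos.ne' ?_
    refine measure_mono_null (fun x hx => ?_) measure_empty
    revert x
    rintro w ⟨⟨hw, hv⟩, hu⟩
    have hpow : ∀ (k : ℕ) (x : Bits),
        ((odometer.toEquiv : Equiv.Perm Bits) ^ (k : ℤ)) x = odometer^[k] x := fun k x => by
      rw [zpow_natCast, Equiv.Perm.coe_pow]; rfl
    refine evenBits_no_recurrence (m := (n : ℤ)) (by exact_mod_cast hn.ne') hu hv hw ?_ ?_
    · rw [hpow, one_mul, two_mul, Function.iterate_add_apply]
    · exact_mod_cast hpow (2 * n) w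
end
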